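/- Let 0 < p ≤ ∞, 1 < q < ∞, s = 2, t = 2/3, and N > 0. There exists a constant C such that for every jump collection (N_k)_{k≥0}, every sequence (f_i)_{i∈ℤ} of measurable functions on ℝ, every continuous Littlewood–Paley family (g_j)_{j∈ℤ} with band width N, and every λ > 0, one has ‖ λ · (#{k ≥ 1 : |Σ_{N_{k−1}(x) < i < j ≤ N_k(x)} f_i(x) g_j(x)| > λ})^{3/2} ‖_{pq/(p+q)} ≤ C ‖(f_i)‖_{p,1} ‖(g_j)‖_{q,2}. -/

import Mathlib

open MeasureTheory ENNReal
open scoped FourierTransform NNReal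

noncomputable section

/-- A jump collection: a sequence of measurable integer-valued functions on `ℝ`,
nondecreasing in the index. -/
def IsJumpCollection (Nk : ℕ → ℝ → ℤ) : Prop :=
  (∀ k, Measurable (Nk k)) ∧ ∀ (k : ℕ) (x : ℝ), Nk k x ≤ Nk (k + 1) x

/-- A continuous Littlewood–Paley family with band width `Nb`. -/
def IsContLPFamily (Nb : ℝ) (g : ℤ → SchwartzMap ℝ ℂ) : Prop :=
  ∀ j : ℤ, ∀ ξ : ℝ, 𝓕 (⇑(g j)) ξ ≠ 0 →
    (2 : ℝ) ^ ((j : ℝ) - Nb) < |ξ| ∧ |ξ| < (2 : ℝ) ^ ((j : ℝ) + Nb)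

/-- The `L^u` quasi-norm on `ℝ≥0∞`-valued functions, for `u ∈ (0, ∞]`. -/
def eNorm (u : ℝ≥0∞) (h : ℝ → ℝ≥0∞) : ℝ≥0∞ :=
  if u = ⊤ then essSup h volume
  else (∫⁻ x : ℝ, (h x) ^ u.toReal) ^ (1 / u.toReal)

/-! Fix `x` and let `M n` denote the dyadic average of `∑ j, g j` at scale `2 ^ (-n)`. By
Chebyshev's inequality, a large value of the paraproduct on a block forces, for at least half of
the large blocks, a large increment of the partial sums of `g`, at a height inversely proportional
to `∑ i, ‖f i x‖`. Replacing partial sums by the averages `M n`, disjoint large increments are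
counted by the jumps of `M` found greedily. The increments of `M` are odd under the swaps of
dyadic siblings, and a good-`λ` inequality bounds the dyadic jump functional in `L ^ q` by the
square function. The comparison error decays geometrically away from the diagonal and is summed
using a Stein inequality for Poisson-type averages. Hölder's inequality reinserts `∑ i, ‖f i x‖`.
-/

section GreedyJumps

variable {E : Type*} [NormedAddCommGroup E]

/-- The greedy excursion of the partial sums of `d` at threshold `ν`: it accumulates the
increments and is reset to `0` each time its norm reaches `ν`. -/
def greedyExcursion (ν : ℝ) (d : ℕ → E) : ℕ → E
  | 0 => 0
  | n + 1 => if ‖greedyExcursion ν d n + d n‖ < ν then greedyExcursion ν d n + d n else 0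

/-- The number of resets of the greedy excursion before time `n`; up to constants in `ν`, the
largest number of disjoint increments of norm `ν` of the partial sums of `d`. -/
def greedyCount (ν : ℝ) (d : ℕ → E) (n : ℕ) : ℕ :=
  ((Finset.range n).filter fun k => ν ≤ ‖greedyExcursion ν d k + d k‖).card

/-- The square of the weak-type jump functional `sup_ν ν (number of ν-jumps)^{1/2}`, with
thresholds restricted to powers of two so that the supremum is countable. -/
def jumpFunctionalSq (d : ℕ → E) (n : ℕ) : ℝ≥0∞ :=
  ⨆ m : ℤ, ENNReal.ofReal (((2 : ℝ) ^ m) ^ 2 * greedyCount ((2 : ℝ) ^ m) d n)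

variable {ν ν' : ℝ} {d d' : ℕ → E} {a b n r T : ℕ} {A B τ : ℝ}

lemma greedyExcursion_succ (ν : ℝ) (d : ℕ → E) (n : ℕ) :
    greedyExcursion ν d (n + 1) =
      if ‖greedyExcursion ν d n + d n‖ < ν then greedyExcursion ν d n + d n else 0 := rfl

lemma greedyCount_succ (ν : ℝ) (d : ℕ → E) (n : ℕ) :
    greedyCount ν d (n + 1) =
      greedyCount ν d n + if ‖greedyExcursion ν d n + d n‖ < ν then 0 else 1 := by
  simp only [greedyCount, Finset.card_filter, Finset.sum_range_succ, ← not_lt, ite_not]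

lemma norm_greedyExcursion_lt (hν : 0 < ν) (d : ℕ → E) : ∀ n, ‖greedyExcursion ν d n‖ < ν
  | 0 => by simpa only [greedyExcursion, norm_zero] using hν
  | n + 1 => by
    rw [greedyExcursion_succ]
    split_ifs with h
    · exact h
    · simpa only [norm_zero] using hν

lemma greedy_energy_succ_le_add_two_mul_sq (hν : 0 < ν) (d : ℕ → E) (r : ℕ) :
    ν ^ 2 * greedyCount ν d (r + 1) + ‖greedyExcursion ν d (r + 1)‖ ^ 2 ≤
      ν ^ 2 * greedyCount ν d r + 2 * ν ^ 2 := by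
  have hexc : ‖greedyExcursion ν d (r + 1)‖ ^ 2 ≤ ν ^ 2 :=
    pow_le_pow_left₀ (norm_nonneg _) (norm_greedyExcursion_lt hν d _).le 2
  have hcount : (greedyCount ν d (r + 1) : ℝ) ≤ greedyCount ν d r + 1 := by
    rw [greedyCount_succ]
    split_ifs <;> simp
  linarith [mul_le_mul_of_nonneg_left hcount (sq_nonneg ν)]

lemma greedyCount_mono (ν : ℝ) (d : ℕ → E) : Monotone (greedyCount ν d) := fun _ _ h =>
  Finset.card_le_card (Finset.filter_subset_filter _ (Finset.range_mono h))

lemma greedyCount_le (ν : ℝ) (d : ℕ → E) (n : ℕ) : greedyCount ν d n ≤ n :=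
  (Finset.card_filter_le _ _).trans_eq (Finset.card_range n)

lemma greedyExcursion_congr (ν : ℝ) : ∀ n, (∀ i < n, d i = d' i) →
    greedyExcursion ν d n = greedyExcursion ν d' n
  | 0, _ => rfl
  | n + 1, h => by
    rw [greedyExcursion_succ, greedyExcursion_succ, h n n.lt_succ_self,
      greedyExcursion_congr ν n fun i hi => h i (hi.trans n.lt_succ_self)]

lemma greedyCount_congr (ν : ℝ) (h : ∀ i < n, d i = d' i) :
    greedyCount ν d n = greedyCount ν d' n := by
  refine congrArg _ (Finset.filter_congr fun k hk => ?_)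
  have hk := Finset.mem_range.1 hk
  rw [h k hk, greedyExcursion_congr ν k fun i hi => h i (hi.trans hk)]

lemma greedyExcursion_eq_add_sum (hab : a ≤ b) (h : greedyCount ν d b = greedyCount ν d a) :
    greedyExcursion ν d b = greedyExcursion ν d a + ∑ k ∈ Finset.Ico a b, d k := by
  induction b, hab using Nat.le_induction with
  | base => simp only [Finset.Ico_self, Finset.sum_empty, add_zero]
  | succ n hn ih =>
    have hle := greedyCount_mono ν d hn
    rw [greedyCount_succ] at h
    split_ifs at h with hlt
    · rw [greedyExcursion_succ, if_pos hlt, ih h, Finset.sum_Ico_succ_top hn, add_assoc]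
    · omega

lemma greedyExcursion_eq_sum_of_count_eq_zero (h : greedyCount ν d n = 0) :
    greedyExcursion ν d n = ∑ i ∈ Finset.range n, d i := by
  rw [greedyExcursion_eq_add_sum (Nat.zero_le n) h, greedyExcursion, zero_add,
    Finset.range_eq_Ico]

lemma greedyCount_lt_of_jump (hν : 0 < ν) (hab : a ≤ b)
    (h : 2 * ν ≤ ‖∑ k ∈ Finset.Ico a b, d k‖) : greedyCount ν d a < greedyCount ν d b := by
  refine (greedyCount_mono ν d hab).lt_of_ne fun hcount => ?_
  have hexc := greedyExcursion_eq_add_sum hab hcount.symm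
  have hdist := norm_sub_le (greedyExcursion ν d b) (greedyExcursion ν d a)
  rw [hexc, add_sub_cancel_left, ← hexc] at hdist
  linarith [norm_greedyExcursion_lt hν d a, norm_greedyExcursion_lt hν d b]

lemma greedyCount_eq_zero_iff (hν : 0 < ν) :
    greedyCount ν d n = 0 ↔ ∀ k ≤ n, ‖∑ i ∈ Finset.range k, d i‖ < ν := by
  refine ⟨fun h k hk => ?_, fun h => ?_⟩
  · have hk0 : greedyCount ν d k = 0 := Nat.le_zero.1 (h ▸ greedyCount_mono ν d hk)
    rw [← greedyExcursion_eq_sum_of_count_eq_zero hk0]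
    exact norm_greedyExcursion_lt hν d k
  · induction n with
    | zero => rfl
    | succ n ih =>
      have h0 := ih fun k hk => h k (hk.trans n.le_succ)
      have hlt := h (n + 1) le_rfl
      rw [Finset.sum_range_succ, ← greedyExcursion_eq_sum_of_count_eq_zero h0] at hlt
      rw [greedyCount_succ, if_pos hlt, h0]

lemma greedyCount_eq_zero_of_threshold_le (hν : 0 < ν) (hle : ν ≤ ν')
    (h : greedyCount ν d n = 0) : greedyCount ν' d n = 0 :=
  (greedyCount_eq_zero_iff (hν.trans_le hle)).2 fun k hk =>
    ((greedyCount_eq_zero_iff hν).1 h k hk).trans_le hle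

lemma jumpFunctionalSq_mono (d : ℕ → E) : Monotone (jumpFunctionalSq d) := fun _ _ h =>
  iSup_mono fun m => ENNReal.ofReal_le_ofReal <|
    mul_le_mul_of_nonneg_left (mod_cast greedyCount_mono _ d h) (by positivity)

lemma jumpFunctionalSq_zero (d : ℕ → E) : jumpFunctionalSq d 0 = 0 := by
  simp only [jumpFunctionalSq, greedyCount, Finset.range_zero, Finset.filter_empty,
    Finset.card_empty, Nat.cast_zero, mul_zero, ENNReal.ofReal_zero, iSup_const]

lemma jumpFunctionalSq_congr (h : ∀ i < n, d i = d' i) :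
    jumpFunctionalSq d n = jumpFunctionalSq d' n :=
  iSup_congr fun _ => by rw [greedyCount_congr _ h]

lemma jumpFunctionalSq_le_ofReal_iff {t : ℝ} (ht : 0 ≤ t) :
    jumpFunctionalSq d n ≤ ENNReal.ofReal t ↔
      ∀ m : ℤ, ((2 : ℝ) ^ m) ^ 2 * greedyCount ((2 : ℝ) ^ m) d n ≤ t := by
  simp only [jumpFunctionalSq, iSup_le_iff, ENNReal.ofReal_le_ofReal_iff ht]

lemma jumpFunctionalSq_le_sq_mul_sum_sq (d : ℕ → E) (n : ℕ) :
    jumpFunctionalSq d n ≤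
      ENNReal.ofReal (n ^ 2 * ∑ k ∈ Finset.range n, ‖d k‖ ^ 2) := by
  refine (jumpFunctionalSq_le_ofReal_iff (by positivity)).2 fun m => ?_
  have hpos : (0 : ℝ) < 2 ^ m := by positivity
  rcases lt_or_ge (∑ k ∈ Finset.range n, ‖d k‖) ((2 : ℝ) ^ m) with hm | hm
  · have hcount : greedyCount ((2 : ℝ) ^ m) d n = 0 :=
      (greedyCount_eq_zero_iff hpos).2 fun k hk => ((norm_sum_le _ _).trans
        (Finset.sum_le_sum_of_subset_of_nonneg (Finset.range_mono hk)
          fun _ _ _ => norm_nonneg _)).trans_lt hm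
    rw [hcount, Nat.cast_zero, mul_zero]
    positivity
  · have hcs := sq_sum_le_card_mul_sum_sq (s := Finset.range n) (f := fun k => ‖d k‖)
    rw [Finset.card_range] at hcs
    have hcount : (greedyCount ((2 : ℝ) ^ m) d n : ℝ) ≤ n := mod_cast greedyCount_le _ d n
    calc ((2 : ℝ) ^ m) ^ 2 * greedyCount ((2 : ℝ) ^ m) d n
        ≤ (n * ∑ k ∈ Finset.range n, ‖d k‖ ^ 2) * n := by
          gcongr
          exact (pow_le_pow_left₀ hpos.le hm 2).trans hcs
      _ = n ^ 2 * ∑ k ∈ Finset.range n, ‖d k‖ ^ 2 := by ring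

lemma sum_sq_of_stopped_le (hB : 0 ≤ B) (d : ℕ → E) (n : ℕ) :
    ∑ k ∈ Finset.range n,
      (if ∑ i ∈ Finset.range (k + 1), ‖d i‖ ^ 2 ≤ B then ‖d k‖ ^ 2 else 0) ≤ B := by
  induction n with
  | zero => simpa only [Finset.range_zero, Finset.sum_empty] using hB
  | succ n ih =>
    by_cases hn : ∑ i ∈ Finset.range (n + 1), ‖d i‖ ^ 2 ≤ B
    · refine (Finset.sum_le_sum fun k _ => ?_).trans hn
      split_ifs
      exacts [le_rfl, by positivity]
    · rwa [Finset.sum_range_succ, if_neg hn, add_zero]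

lemma exists_two_zpow_sq_mem_Ioc {t : ℝ} (ht : 0 < t) :
    ∃ m : ℤ, t < ((2 : ℝ) ^ m) ^ 2 ∧ ((2 : ℝ) ^ m) ^ 2 ≤ 4 * t := by
  obtain ⟨m, hle, hlt⟩ := exists_mem_Ico_zpow (y := (4 : ℝ)) ht (by norm_num)
  have hsq : ((2 : ℝ) ^ (m + 1)) ^ 2 = 4 ^ (m + 1) := by
    rw [← zpow_natCast, zpow_comm, zpow_natCast]
    norm_num
  refine ⟨m + 1, hsq ▸ hlt, ?_⟩
  rw [hsq, zpow_add_one₀ four_ne_zero]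
  linarith

lemma exists_crossing (d : ℕ → E) (hT : ENNReal.ofReal A < jumpFunctionalSq d T) :
    ∃ r < T, (∀ k ≤ r, jumpFunctionalSq d k ≤ ENNReal.ofReal A) ∧
      ENNReal.ofReal A < jumpFunctionalSq d (r + 1) := by
  classical
  have hex : ∃ n, ENNReal.ofReal A < jumpFunctionalSq d n := ⟨T, hT⟩
  obtain ⟨r, hr⟩ : ∃ r, Nat.find hex = r + 1 := by
    refine Nat.exists_eq_succ_of_ne_zero fun h0 => ?_
    have := Nat.find_spec hex
    rw [h0, jumpFunctionalSq_zero] at this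
    exact ENNReal.not_lt_zero this
  refine ⟨r, ?_, fun k hk => not_lt.1 (Nat.find_min hex (by omega)), hr ▸ Nat.find_spec hex⟩
  have := Nat.find_min' hex hT
  omega

lemma greedyCount_eq_zero_of_jumpFunctionalSq_le {m : ℤ}
    (h : jumpFunctionalSq d r ≤ ENNReal.ofReal (τ ^ 2)) (hm : τ ^ 2 < ((2 : ℝ) ^ m) ^ 2) :
    greedyCount ((2 : ℝ) ^ m) d r = 0 := by
  by_contra hne
  have hone : (1 : ℝ) ≤ greedyCount ((2 : ℝ) ^ m) d r := mod_cast Nat.one_le_iff_ne_zero.2 hne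
  have hle := (jumpFunctionalSq_le_ofReal_iff (sq_nonneg τ)).1 h m
  nlinarith [sq_nonneg τ]

lemma norm_sum_range_le_of_jumpFunctionalSq_le (hτ : 0 < τ)
    (h : jumpFunctionalSq d r ≤ ENNReal.ofReal (τ ^ 2)) :
    ‖∑ i ∈ Finset.range r, d i‖ ≤ 2 * τ := by
  obtain ⟨m, hlt, hle⟩ := exists_two_zpow_sq_mem_Ioc (pow_pos hτ 2)
  have hzero := greedyCount_eq_zero_of_jumpFunctionalSq_le h hlt
  refine ((greedyCount_eq_zero_iff (by positivity)).1 hzero r le_rfl).le.trans ?_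
  exact le_of_sq_le_sq (by linarith) (by positivity)

lemma greedyCount_eq_zero_of_energy_le (hτ : 0 < τ) {m : ℤ} (hm : 64 * τ ^ 2 < ((2 : ℝ) ^ m) ^ 2)
    (hr : jumpFunctionalSq d r ≤ ENNReal.ofReal (τ ^ 2)) (hdr : ‖d r‖ ≤ τ)
    (henergy : ((2 : ℝ) ^ m) ^ 2 * greedyCount ((2 : ℝ) ^ m) d T ≤
      ((2 : ℝ) ^ m) ^ 2 * greedyCount ((2 : ℝ) ^ m) d (r + 1) +
        ‖greedyExcursion ((2 : ℝ) ^ m) d (r + 1)‖ ^ 2 + 3 * τ ^ 2) :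
    greedyCount ((2 : ℝ) ^ m) d T = 0 := by
  have hτsq : 0 < τ ^ 2 := by positivity
  have hlarge : 8 * τ < (2 : ℝ) ^ m := lt_of_pow_lt_pow_left₀ 2 (by positivity) (by linarith)
  have hzero := greedyCount_eq_zero_of_jumpFunctionalSq_le (m := m) hr (by linarith)
  have hexc : ‖greedyExcursion ((2 : ℝ) ^ m) d r + d r‖ ≤ 3 * τ := by
    rw [greedyExcursion_eq_sum_of_count_eq_zero hzero]
    linarith [norm_add_le (∑ i ∈ Finset.range r, d i) (d r),
      norm_sum_range_le_of_jumpFunctionalSq_le hτ hr]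
  have hsmall : ‖greedyExcursion ((2 : ℝ) ^ m) d r + d r‖ < (2 : ℝ) ^ m := by linarith
  rw [greedyCount_succ, greedyExcursion_succ, if_pos hsmall, if_pos hsmall, hzero] at henergy
  by_contra hne
  have hone : (1 : ℝ) ≤ greedyCount ((2 : ℝ) ^ m) d T := mod_cast Nat.one_le_iff_ne_zero.2 hne
  have hexc_sq := pow_le_pow_left₀ (norm_nonneg _) hexc 2
  push_cast at henergy
  nlinarith

end GreedyJumps

section LocalizedTransform

open scoped RealInnerProductSpace

variable {E : Type*} [NormedAddCommGroup E] [InnerProductSpace ℝ E]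

/-- The increment of the martingale transform `∑ ⟪e_k, d_k⟫` of `d` by its greedy excursions
`e`, kept only while the jump functional exceeds `A` and the square function is at most `B`. -/
def localizedIncrement (ν A B : ℝ) (d : ℕ → E) (k : ℕ) : ℝ :=
  if ENNReal.ofReal A < jumpFunctionalSq d k ∧ ∑ i ∈ Finset.range (k + 1), ‖d i‖ ^ 2 ≤ B
    then ⟪greedyExcursion ν d k, d k⟫ else 0

/-- The martingale transform of `d` by its greedy excursions, started when the jump functional
exceeds `A` and stopped before the square function exceeds `B`. -/
def localizedTransform (ν A B : ℝ) (d : ℕ → E) (n : ℕ) : ℝ :=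
  ∑ k ∈ Finset.range n, localizedIncrement ν A B d k

variable {ν A B τ γ : ℝ} {d d' : ℕ → E} {k r T : ℕ}

lemma greedy_energy_succ_le (hν : 0 < ν) (d : ℕ → E) (n : ℕ) :
    ν ^ 2 * greedyCount ν d (n + 1) + ‖greedyExcursion ν d (n + 1)‖ ^ 2 ≤
      ν ^ 2 * greedyCount ν d n + ‖greedyExcursion ν d n‖ ^ 2 +
        (‖d n‖ ^ 2 + 2 * ⟪greedyExcursion ν d n, d n⟫) := by
  have hsq := norm_add_sq_real (greedyExcursion ν d n) (d n)
  rw [greedyCount_succ, greedyExcursion_succ]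
  split_ifs with h
  · rw [add_zero]
    linarith
  · have : ν ^ 2 ≤ ‖greedyExcursion ν d n + d n‖ ^ 2 := by
      gcongr
      exact not_lt.1 h
    push_cast
    rw [norm_zero]
    linarith

lemma greedy_energy_le (hν : 0 < ν) (d : ℕ → E) {a n : ℕ} (han : a ≤ n) :
    ν ^ 2 * greedyCount ν d n + ‖greedyExcursion ν d n‖ ^ 2 ≤
      ν ^ 2 * greedyCount ν d a + ‖greedyExcursion ν d a‖ ^ 2 +
        ∑ k ∈ Finset.Ico a n, ‖d k‖ ^ 2 +
        2 * ∑ k ∈ Finset.Ico a n, ⟪greedyExcursion ν d k, d k⟫ := by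
  induction n, han using Nat.le_induction with
  | base => simp only [Finset.Ico_self, Finset.sum_empty, mul_zero, add_zero, le_refl]
  | succ n hn ih =>
    rw [Finset.sum_Ico_succ_top hn, Finset.sum_Ico_succ_top hn]
    linarith [greedy_energy_succ_le hν d n]

lemma localizedIncrement_congr (ν A B : ℝ) (h : ∀ i ≤ k, d i = d' i) :
    localizedIncrement ν A B d k = localizedIncrement ν A B d' k := by
  have hlt : ∀ i < k, d i = d' i := fun i hi => h i hi.le
  rw [localizedIncrement, localizedIncrement, jumpFunctionalSq_congr hlt,
    greedyExcursion_congr ν k hlt, h k le_rfl,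
    Finset.sum_congr rfl fun i hi => by rw [h i (Finset.mem_range_succ_iff.1 hi)]]

lemma localizedIncrement_neg_last (ν A B : ℝ) (h : ∀ i < k, d' i = d i) (hk : d' k = -d k) :
    localizedIncrement ν A B d' k = -localizedIncrement ν A B d k := by
  have hsum : ∑ i ∈ Finset.range (k + 1), ‖d' i‖ ^ 2 = ∑ i ∈ Finset.range (k + 1), ‖d i‖ ^ 2 := by
    rw [Finset.sum_range_succ, Finset.sum_range_succ, hk, norm_neg,
      Finset.sum_congr rfl fun i hi => by rw [h i (Finset.mem_range.1 hi)]]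
  rw [localizedIncrement, localizedIncrement, jumpFunctionalSq_congr h,
    greedyExcursion_congr ν k h, hk, hsum, inner_neg_right]
  split_ifs
  · rfl
  · exact neg_zero.symm

lemma localizedTransform_eq_sum_Ico (hrT : r ≤ T)
    (hB : ∑ i ∈ Finset.range T, ‖d i‖ ^ 2 ≤ B)
    (hbefore : ∀ k < r, jumpFunctionalSq d k ≤ ENNReal.ofReal A)
    (hafter : ENNReal.ofReal A < jumpFunctionalSq d r) :
    localizedTransform ν A B d T = ∑ k ∈ Finset.Ico r T, ⟪greedyExcursion ν d k, d k⟫ := by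
  rw [localizedTransform, ← Finset.sum_range_add_sum_Ico _ hrT, Finset.sum_eq_zero, zero_add]
  · refine Finset.sum_congr rfl fun k hk => if_pos ⟨?_, ?_⟩
    · exact hafter.trans_le (jumpFunctionalSq_mono d (Finset.mem_Ico.1 hk).1)
    · exact (Finset.sum_le_sum_of_subset_of_nonneg
        (Finset.range_mono (Finset.mem_Ico.1 hk).2) fun _ _ _ => by positivity).trans hB
  · exact fun k hk => if_neg fun h => (hbefore k (Finset.mem_range.1 hk)).not_gt h.1

lemma sum_localizedIncrement_sq_le (hν : 0 < ν) (hB : 0 ≤ B) (A : ℝ) (d : ℕ → E) (n : ℕ) :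
    ∑ k ∈ Finset.range n, localizedIncrement ν A B d k ^ 2 ≤
      if ENNReal.ofReal A < jumpFunctionalSq d n then ν ^ 2 * B else 0 := by
  split_ifs with hA
  · calc ∑ k ∈ Finset.range n, localizedIncrement ν A B d k ^ 2
        ≤ ∑ k ∈ Finset.range n, ν ^ 2 *
            (if ∑ i ∈ Finset.range (k + 1), ‖d i‖ ^ 2 ≤ B then ‖d k‖ ^ 2 else 0) := by
          refine Finset.sum_le_sum fun k _ => ?_
          by_cases hk : ENNReal.ofReal A < jumpFunctionalSq d k ∧
              ∑ i ∈ Finset.range (k + 1), ‖d i‖ ^ 2 ≤ B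
          · rw [localizedIncrement, if_pos hk, if_pos hk.2, ← mul_pow, ← sq_abs]
            gcongr
            exact (abs_real_inner_le_norm _ _).trans
              (mul_le_mul_of_nonneg_right (norm_greedyExcursion_lt hν d k).le (norm_nonneg _))
          · rw [localizedIncrement, if_neg hk, zero_pow two_ne_zero]
            split_ifs <;> positivity
      _ ≤ ν ^ 2 * B := by
          rw [← Finset.mul_sum]
          exact mul_le_mul_of_nonneg_left (sum_sq_of_stopped_le hB d n) (sq_nonneg ν)
  · refine (Finset.sum_eq_zero fun k hk => ?_).le
    rw [localizedIncrement, if_neg, zero_pow two_ne_zero]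
    exact fun h => hA (h.1.trans_le (jumpFunctionalSq_mono d (Finset.mem_range.1 hk).le))

/-- The deterministic half of the good-`λ` inequality: after the crossing time the energy
`ν² J + |e|²` can grow only through the localized transform. -/
lemma jumpFunctionalSq_le_of_localizedTransform_le (hτ : 0 < τ) (hγ : γ ≤ 1)
    (hS : ∑ i ∈ Finset.range T, ‖d i‖ ^ 2 ≤ γ * τ ^ 2) {m₀ : ℤ}
    (hm₀ : 64 * τ ^ 2 < ((2 : ℝ) ^ m₀) ^ 2) (hm₀' : ((2 : ℝ) ^ m₀) ^ 2 ≤ 256 * τ ^ 2)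
    (htransform : ∀ m ≤ m₀, localizedTransform ((2 : ℝ) ^ m) (τ ^ 2) (γ * τ ^ 2) d T ≤ τ ^ 2) :
    jumpFunctionalSq d T ≤ ENNReal.ofReal (600 * τ ^ 2) := by
  have hτsq : 0 < τ ^ 2 := by positivity
  rcases le_or_gt (jumpFunctionalSq d T) (ENNReal.ofReal (τ ^ 2)) with hle | hgt
  · exact hle.trans (ENNReal.ofReal_le_ofReal (by linarith))
  obtain ⟨r, hrT, hbefore, hafter⟩ := exists_crossing d hgt
  have hS' : ∑ i ∈ Finset.range T, ‖d i‖ ^ 2 ≤ τ ^ 2 :=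
    hS.trans (mul_le_of_le_one_left hτsq.le hγ)
  have hdr : ‖d r‖ ^ 2 ≤ τ ^ 2 := (Finset.single_le_sum (f := fun i => ‖d i‖ ^ 2)
    (fun _ _ => by positivity) (Finset.mem_range.2 hrT)).trans hS'
  have htail : ∑ k ∈ Finset.Ico (r + 1) T, ‖d k‖ ^ 2 ≤ τ ^ 2 := by
    refine (Finset.sum_le_sum_of_subset_of_nonneg ?_ fun _ _ _ => by positivity).trans hS'
    rw [Finset.range_eq_Ico]
    exact Finset.Ico_subset_Ico_left (Nat.zero_le _)
  have henergy : ∀ m ≤ m₀, ((2 : ℝ) ^ m) ^ 2 * greedyCount ((2 : ℝ) ^ m) d T ≤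
      ((2 : ℝ) ^ m) ^ 2 * greedyCount ((2 : ℝ) ^ m) d (r + 1) +
        ‖greedyExcursion ((2 : ℝ) ^ m) d (r + 1)‖ ^ 2 + 3 * τ ^ 2 := fun m hm => by
    have hgrowth := greedy_energy_le (ν := (2 : ℝ) ^ m) (by positivity) d hrT
    rw [← localizedTransform_eq_sum_Ico hrT hS
      (fun k hk => hbefore k (Nat.lt_succ_iff.1 hk)) hafter] at hgrowth
    linarith [htransform m hm, sq_nonneg ‖greedyExcursion ((2 : ℝ) ^ m) d T‖]
  refine (jumpFunctionalSq_le_ofReal_iff (by positivity)).2 fun m => ?_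
  rcases le_total m m₀ with hm | hm
  · have hpow : ((2 : ℝ) ^ m) ^ 2 ≤ 256 * τ ^ 2 := le_trans (by gcongr; norm_num) hm₀'
    have hat := (jumpFunctionalSq_le_ofReal_iff hτsq.le).1 (hbefore r le_rfl) m
    have hstep := greedy_energy_succ_le_add_two_mul_sq (ν := (2 : ℝ) ^ m) (by positivity) d r
    linarith [henergy m hm]
  · have hzero := greedyCount_eq_zero_of_energy_le hτ hm₀ (hbefore r le_rfl)
      (le_of_sq_le_sq hdr hτ.le) (henergy m₀ le_rfl)
    rw [greedyCount_eq_zero_of_threshold_le (by positivity)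
      (zpow_le_zpow_right₀ one_le_two hm) hzero, Nat.cast_zero, mul_zero]
    positivity

lemma setOf_lt_jumpFunctionalSq_subset_iUnion {α : Type*} (d : ℕ → α → E) (hτ : 0 < τ)
    (hγ : γ ≤ 1) (n : ℕ) {m₀ : ℤ} (hm₀ : 64 * τ ^ 2 < ((2 : ℝ) ^ m₀) ^ 2)
    (hm₀' : ((2 : ℝ) ^ m₀) ^ 2 ≤ 256 * τ ^ 2) :
    {x | ENNReal.ofReal (600 * τ ^ 2) < jumpFunctionalSq (fun k => d k x) n ∧
        ∑ i ∈ Finset.range n, ‖d i x‖ ^ 2 ≤ γ * τ ^ 2} ⊆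
      ⋃ i : ℕ, {x | τ ^ 2 <
        localizedTransform ((2 : ℝ) ^ (m₀ - i)) (τ ^ 2) (γ * τ ^ 2) (fun k => d k x) n} := by
  rintro x ⟨hlarge, hsq⟩
  by_contra hcon
  simp only [Set.mem_iUnion, Set.mem_ofPred_eq, not_exists, not_lt] at hcon
  refine hlarge.not_ge (jumpFunctionalSq_le_of_localizedTransform_le hτ hγ hsq hm₀ hm₀'
    fun m hm => ?_)
  obtain ⟨i, hi⟩ := Int.eq_ofNat_of_zero_le (sub_nonneg.2 hm)
  rw [show m = m₀ - i by omega]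
  exact hcon i

end LocalizedTransform

section SignSymmetric

variable {α E : Type*} [MeasurableSpace α] [NormedAddCommGroup E]
  [MeasurableSpace E] [BorelSpace E]

lemma measurable_sum_norm_sq {d : ℕ → α → E} (hd : ∀ k, Measurable (d k)) (n : ℕ) :
    Measurable fun x => ∑ i ∈ Finset.range n, ‖d i x‖ ^ 2 :=
  Finset.measurable_sum _ fun i _ => (hd i).norm.pow_const 2

variable [SecondCountableTopology E]

lemma measurable_greedyExcursion (ν : ℝ) {d : ℕ → α → E} (hd : ∀ k, Measurable (d k)) :
    ∀ n, Measurable fun x => greedyExcursion ν (fun k => d k x) n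
  | 0 => measurable_const
  | n + 1 =>
    have hadd := (measurable_greedyExcursion ν hd n).add (hd n)
    Measurable.ite (measurableSet_lt hadd.norm measurable_const) hadd measurable_const

lemma measurable_greedyCount (ν : ℝ) {d : ℕ → α → E} (hd : ∀ k, Measurable (d k)) (n : ℕ) :
    Measurable fun x => greedyCount ν (fun k => d k x) n := by
  simp only [greedyCount, Finset.card_filter]
  refine Finset.measurable_sum _ fun k _ => ?_
  exact Measurable.ite (measurableSet_le measurable_const
    ((measurable_greedyExcursion ν hd k).add (hd k)).norm) measurable_const measurable_const

lemma measurable_jumpFunctionalSq {d : ℕ → α → E} (hd : ∀ k, Measurable (d k)) (n : ℕ) :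
    Measurable fun x => jumpFunctionalSq (fun k => d k x) n :=
  Measurable.iSup fun _ => ENNReal.measurable_ofReal.comp <|
    (measurable_from_nat.comp (measurable_greedyCount _ hd n)).const_mul _

lemma lintegral_ofReal_sq_add_of_odd {μ : Measure α} {θ : α → α} (hθ : MeasurePreserving θ μ μ)
    {u v : α → ℝ} (hu : Measurable u) (hv : Measurable v)
    (hinv : ∀ x, u (θ x) = u x) (hodd : ∀ x, v (θ x) = -v x) :
    ∫⁻ x, ENNReal.ofReal ((u x + v x) ^ 2) ∂μ =
      ∫⁻ x, ENNReal.ofReal (u x ^ 2) ∂μ + ∫⁻ x, ENNReal.ofReal (v x ^ 2) ∂μ := by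
  have hadd : Measurable fun x => ENNReal.ofReal ((u x + v x) ^ 2) := by fun_prop
  have hsymm : ∫⁻ x, ENNReal.ofReal ((u x + v x) ^ 2) ∂μ =
      ∫⁻ x, ENNReal.ofReal ((u x - v x) ^ 2) ∂μ := by
    rw [← hθ.lintegral_comp hadd]
    simp only [hinv, hodd, sub_eq_add_neg]
  refine (ENNReal.mul_right_inj two_ne_zero ENNReal.ofNat_ne_top).1 ?_
  calc 2 * ∫⁻ x, ENNReal.ofReal ((u x + v x) ^ 2) ∂μ
      = ∫⁻ x, ENNReal.ofReal ((u x + v x) ^ 2) + ENNReal.ofReal ((u x - v x) ^ 2) ∂μ := by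
        rw [lintegral_add_left hadd, ← hsymm, two_mul]
    _ = ∫⁻ x, 2 * (ENNReal.ofReal (u x ^ 2) + ENNReal.ofReal (v x ^ 2)) ∂μ := by
        refine lintegral_congr fun x => ?_
        rw [← ENNReal.ofReal_add (sq_nonneg _) (sq_nonneg _),
          ← ENNReal.ofReal_add (sq_nonneg _) (sq_nonneg _), ← ENNReal.ofReal_ofNat 2,
          ← ENNReal.ofReal_mul zero_le_two]
        congr 1
        ring
    _ = 2 * (∫⁻ x, ENNReal.ofReal (u x ^ 2) ∂μ + ∫⁻ x, ENNReal.ofReal (v x ^ 2) ∂μ) := by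
        rw [lintegral_const_mul _ (by fun_prop), lintegral_add_left (by fun_prop)]

/-- A sequence of functions `d k` with measure-preserving maps `θ k` that change the sign of
`d k` and leave all earlier `d i` invariant. Dyadic martingale differences form such a system;
this symmetry replaces conditional expectations in the orthogonality arguments below. -/
structure SignSymmetricSystem (μ : Measure α) (d : ℕ → α → E) (θ : ℕ → α → α) : Prop where
  measurable : ∀ k, Measurable (d k)
  measurePreserving : ∀ k, MeasurePreserving (θ k) μ μ
  odd : ∀ k x, d k (θ k x) = -d k x
  invariant : ∀ k i, i < k → ∀ x, d i (θ k x) = d i x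

variable {μ : Measure α} {d : ℕ → α → E} {θ : ℕ → α → α} [InnerProductSpace ℝ E] {ν A B γ τ : ℝ}

lemma measurable_localizedIncrement (ν A B : ℝ) (hd : ∀ k, Measurable (d k)) (n : ℕ) :
    Measurable fun x => localizedIncrement ν A B (fun k => d k x) n :=
  Measurable.ite
    ((measurableSet_lt measurable_const (measurable_jumpFunctionalSq hd n)).inter
      (measurableSet_le (measurable_sum_norm_sq hd (n + 1)) measurable_const))
    ((measurable_greedyExcursion ν hd n).inner (hd n)) measurable_const

lemma measurable_localizedTransform (ν A B : ℝ) (hd : ∀ k, Measurable (d k)) (n : ℕ) :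
    Measurable fun x => localizedTransform ν A B (fun k => d k x) n :=
  Finset.measurable_sum _ fun k _ => measurable_localizedIncrement ν A B hd k

namespace SignSymmetricSystem

lemma lintegral_localizedTransform_sq (h : SignSymmetricSystem μ d θ) (ν A B : ℝ) (n : ℕ) :
    ∫⁻ x, ENNReal.ofReal (localizedTransform ν A B (fun k => d k x) n ^ 2) ∂μ =
      ∑ k ∈ Finset.range n,
        ∫⁻ x, ENNReal.ofReal (localizedIncrement ν A B (fun k => d k x) k ^ 2) ∂μ := by
  induction n with
  | zero => simp [localizedTransform]
  | succ n ih =>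
    rw [Finset.sum_range_succ, ← ih, ← lintegral_ofReal_sq_add_of_odd (h.measurePreserving n)
      (measurable_localizedTransform ν A B h.measurable n)
      (measurable_localizedIncrement ν A B h.measurable n)
      (fun x => Finset.sum_congr rfl fun k hk => localizedIncrement_congr ν A B fun i hi =>
        h.invariant n i (hi.trans_lt (Finset.mem_range.1 hk)) x)
      (fun x => localizedIncrement_neg_last ν A B (fun i hi => h.invariant n i hi x) (h.odd n x))]
    simp only [localizedTransform, Finset.sum_range_succ]

lemma lintegral_localizedTransform_sq_le (h : SignSymmetricSystem μ d θ) (hν : 0 < ν)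
    (hB : 0 ≤ B) (A : ℝ) (n : ℕ) :
    ∫⁻ x, ENNReal.ofReal (localizedTransform ν A B (fun k => d k x) n ^ 2) ∂μ ≤
      ENNReal.ofReal (ν ^ 2 * B) *
        μ {x | ENNReal.ofReal A < jumpFunctionalSq (fun k => d k x) n} := by
  rw [h.lintegral_localizedTransform_sq, ← lintegral_finsetSum _ fun k _ =>
      ((measurable_localizedIncrement ν A B h.measurable k).pow_const 2).ennreal_ofReal,
    ← lintegral_indicator_const
      (measurableSet_lt measurable_const (measurable_jumpFunctionalSq h.measurable n))]
  refine lintegral_mono fun x => ?_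
  dsimp only
  rw [← ENNReal.ofReal_sum_of_nonneg fun _ _ => sq_nonneg _]
  refine (ENNReal.ofReal_le_ofReal
    (sum_localizedIncrement_sq_le hν hB A (fun k => d k x) n)).trans_eq ?_
  simp only [Set.indicator_apply, Set.mem_ofPred_eq, apply_ite ENNReal.ofReal, ENNReal.ofReal_zero]

lemma measure_sq_le_localizedTransform_sq_le (h : SignSymmetricSystem μ d θ) (hτ : 0 < τ)
    (hγ : 0 ≤ γ) (hν : 0 < ν) (n : ℕ) :
    μ {x | τ ^ 2 < localizedTransform ν (τ ^ 2) (γ * τ ^ 2) (fun k => d k x) n} ≤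
      ENNReal.ofReal (γ * (ν ^ 2 / τ ^ 2)) *
        μ {x | ENNReal.ofReal (τ ^ 2) < jumpFunctionalSq (fun k => d k x) n} := by
  have hτ4 : 0 < (τ ^ 2) ^ 2 := by positivity
  calc μ {x | τ ^ 2 < localizedTransform ν (τ ^ 2) (γ * τ ^ 2) (fun k => d k x) n}
      ≤ μ {x | ENNReal.ofReal ((τ ^ 2) ^ 2) ≤
          ENNReal.ofReal (localizedTransform ν (τ ^ 2) (γ * τ ^ 2) (fun k => d k x) n ^ 2)} :=
        measure_mono fun x (hx : _ < _) =>
          ENNReal.ofReal_le_ofReal (pow_le_pow_left₀ (sq_nonneg τ) hx.le 2)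
    _ ≤ _ / ENNReal.ofReal ((τ ^ 2) ^ 2) := meas_ge_le_lintegral_div
        ((measurable_localizedTransform _ _ _ h.measurable
          n).pow_const 2).ennreal_ofReal.aemeasurable
        (ENNReal.ofReal_pos.2 hτ4).ne' ENNReal.ofReal_ne_top
    _ ≤ _ / ENNReal.ofReal ((τ ^ 2) ^ 2) := ENNReal.div_le_div_right
        (h.lintegral_localizedTransform_sq_le hν (by positivity) (τ ^ 2) n) _
    _ = _ := by
        rw [ENNReal.mul_div_right_comm, ← ENNReal.ofReal_div_of_pos hτ4]
        congr 2
        field_simp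

/-- Chebyshev is applied at every dyadic threshold `2^m ≤ 2^{m₀} ≈ τ`; the bounds decay
geometrically in `m₀ - m`, so they can be summed. -/
lemma good_lambda (h : SignSymmetricSystem μ d θ) {t : ℝ} (ht : 0 < t) (hγ : 0 ≤ γ)
    (hγ1 : γ ≤ 1) (n : ℕ) :
    μ {x | ENNReal.ofReal (600 * t) < jumpFunctionalSq (fun k => d k x) n ∧
        ∑ i ∈ Finset.range n, ‖d i x‖ ^ 2 ≤ γ * t} ≤
      ENNReal.ofReal (400 * γ) *
        μ {x | ENNReal.ofReal t < jumpFunctionalSq (fun k => d k x) n} := by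
  obtain ⟨τ, hτ, rfl⟩ : ∃ τ : ℝ, 0 < τ ∧ τ ^ 2 = t := ⟨√t, Real.sqrt_pos.2 ht, Real.sq_sqrt ht.le⟩
  obtain ⟨m₀, hlow, hup⟩ := exists_two_zpow_sq_mem_Ioc (t := 64 * τ ^ 2) (by positivity)
  have hcover := setOf_lt_jumpFunctionalSq_subset_iUnion d hτ hγ1 n hlow (by linarith)
  have hthreshold : ∀ i : ℕ, γ * (((2 : ℝ) ^ (m₀ - i)) ^ 2 / τ ^ 2) ≤ γ * 256 * (1 / 4) ^ i := by
    intro i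
    have hpow : ((2 : ℝ) ^ (m₀ - i)) ^ 2 = ((2 : ℝ) ^ m₀) ^ 2 * (1 / 4) ^ i := by
      rw [zpow_sub₀ two_ne_zero, zpow_natCast, div_pow, ← pow_mul, mul_comm i, pow_mul,
        one_div, inv_pow, div_eq_mul_inv]
      norm_num
    rw [mul_assoc, hpow, mul_div_right_comm]
    gcongr
    rw [div_le_iff₀ (by positivity)]
    linarith
  have hgeom : Summable fun i : ℕ => γ * 256 * (1 / 4 : ℝ) ^ i :=
    (summable_geometric_of_lt_one (by norm_num) (by norm_num)).mul_left _
  refine (measure_mono hcover).trans ((measure_iUnion_le _).trans ?_)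
  refine (ENNReal.tsum_le_tsum fun i => (h.measure_sq_le_localizedTransform_sq_le hτ hγ
    (by positivity) n).trans (mul_le_mul_left (ENNReal.ofReal_le_ofReal (hthreshold i)) _)).trans ?_
  rw [ENNReal.tsum_mul_right, ← ENNReal.ofReal_tsum_of_nonneg (fun i => by positivity) hgeom]
  gcongr
  rw [tsum_mul_left, tsum_geometric_of_lt_one (by norm_num) (by norm_num)]
  linarith

end SignSymmetricSystem

end SignSymmetric

section LayerCake

variable {α : Type*} [MeasurableSpace α] {μ : Measure α}

lemma lintegral_Ioi_ofReal_rpow_eq_top (r : ℝ) :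
    ∫⁻ t in Set.Ioi (0 : ℝ), ENNReal.ofReal (t ^ r) = ⊤ := by
  by_contra hfin
  refine not_integrableOn_Ioi_rpow r ⟨by fun_prop, ?_⟩
  rwa [hasFiniteIntegral_iff_ofReal, lt_top_iff_ne_top]
  exact (ae_restrict_mem measurableSet_Ioi).mono fun t (ht : 0 < t) =>
    (Real.rpow_pos_of_pos ht r).le

lemma lintegral_rpow_eq_lintegral_measure_ofReal_lt_mul {s : ℝ} (hs : 0 < s) {Z : α → ℝ≥0∞}
    (hZ : AEMeasurable Z μ) :
    ∫⁻ x, Z x ^ s ∂μ = ENNReal.ofReal s * ∫⁻ t in Set.Ioi (0 : ℝ),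
      μ {x | ENNReal.ofReal t < Z x} * ENNReal.ofReal (t ^ (s - 1)) := by
  by_cases hfin : ∀ᵐ x ∂μ, Z x ≠ ⊤
  · have h := lintegral_rpow_eq_lintegral_meas_lt_mul μ (f := fun x => (Z x).toReal)
      (.of_forall fun _ => ENNReal.toReal_nonneg) hZ.ennreal_toReal hs
    calc ∫⁻ x, Z x ^ s ∂μ = ∫⁻ x, ENNReal.ofReal ((Z x).toReal ^ s) ∂μ :=
          lintegral_congr_ae <| hfin.mono fun x hx => by
            simp only [← ENNReal.ofReal_rpow_of_nonneg ENNReal.toReal_nonneg hs.le,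
              ENNReal.ofReal_toReal hx]
      _ = _ := by
        rw [h]
        congr 1
        refine setLIntegral_congr_fun measurableSet_Ioi fun t (ht : 0 < t) => ?_
        congr 1
        refine measure_congr <| hfin.mono fun x hx => propext ?_
        exact (ENNReal.ofReal_lt_iff_lt_toReal ht.le hx).symm
  · have hpos : μ {x | Z x = ⊤} ≠ 0 := by simpa only [ae_iff, not_not] using hfin
    have hleft : ∫⁻ x, Z x ^ s ∂μ = ⊤ := by
      by_contra hne
      refine hfin ((ae_lt_top' (hZ.pow_const s) hne).mono fun x hx hx' => ?_)
      simp [hx', hs] at hx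
    have hright : ∫⁻ t in Set.Ioi (0 : ℝ), μ {x | Z x = ⊤} * ENNReal.ofReal (t ^ (s - 1)) = ⊤ := by
      rw [lintegral_const_mul _ (by fun_prop), lintegral_Ioi_ofReal_rpow_eq_top,
        ENNReal.mul_top hpos]
    rw [hleft, eq_comm, ENNReal.mul_eq_top]
    refine Or.inl ⟨(ENNReal.ofReal_pos.2 hs).ne', top_unique (hright.symm.le.trans ?_)⟩
    gcongr with t x
    rintro (hx : Z x = ⊤)
    simp [hx]

lemma measurable_measure_ofReal_lt_mul_rpow (μ : Measure α) (Z : α → ℝ≥0∞) (r : ℝ) :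
    Measurable fun t : ℝ => μ {x | ENNReal.ofReal t < Z x} * ENNReal.ofReal (t ^ r) :=
  .mul (Antitone.measurable (f := fun t : ℝ => μ {x | ENNReal.ofReal t < Z x}) fun _ _ htt' =>
    measure_mono fun _ hx => (ENNReal.ofReal_le_ofReal htt').trans_lt hx) (by fun_prop)

lemma lintegral_div_const_rpow {s : ℝ} (hs : 0 ≤ s) {Y : α → ℝ≥0∞} (hY : Measurable Y)
    (b : ℝ≥0∞) : ∫⁻ x, (Y x / b) ^ s ∂μ = (b ^ s)⁻¹ * ∫⁻ x, Y x ^ s ∂μ := by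
  rw [← lintegral_const_mul _ (hY.pow_const s)]
  refine lintegral_congr fun x => ?_
  rw [ENNReal.div_rpow_of_nonneg _ _ hs, ENNReal.div_eq_inv_mul]

lemma lintegral_rpow_eq_rpow_mul_lintegral_div {s : ℝ} (hs : 0 ≤ s) {Y : α → ℝ≥0∞}
    (hY : Measurable Y) {b : ℝ≥0∞} (hb : b ≠ 0) (hb' : b ≠ ⊤) :
    ∫⁻ x, Y x ^ s ∂μ = b ^ s * ∫⁻ x, (Y x / b) ^ s ∂μ := by
  rw [lintegral_div_const_rpow hs hY, ← mul_assoc, ENNReal.mul_inv_cancel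
    (ENNReal.rpow_pos (pos_iff_ne_zero.2 hb) hb').ne' (ENNReal.rpow_ne_top_of_nonneg hs hb'),
    one_mul]

/-- The layer cake formula is applied to `Z` with respect to `μ` and to `w ^ (s - 1)` with respect
to the measure `w μ`. -/
lemma lintegral_rpow_le_of_measure_lt_le {s : ℝ} (hs : 1 < s) {Z w : α → ℝ≥0∞} (hZ : Measurable Z)
    (hw : Measurable w) {a C : ℝ≥0∞} (ha : a ≠ 0) (ha' : a ≠ ⊤)
    (h : ∀ t : ℝ, 0 < t → μ {x | ENNReal.ofReal t * a < Z x} ≤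
      C / ENNReal.ofReal t * ∫⁻ x in {x | ENNReal.ofReal t < w x}, w x ∂μ) :
    ∫⁻ x, Z x ^ s ∂μ ≤ a ^ s * C * ENNReal.ofReal (s / (s - 1)) * ∫⁻ x, w x ^ s ∂μ := by
  have hs0 : 0 < s := one_pos.trans hs
  have hlevel : ∀ t ∈ Set.Ioi (0 : ℝ),
      μ {x | ENNReal.ofReal t < Z x / a} * ENNReal.ofReal (t ^ (s - 1)) ≤
        C * (μ.withDensity w {x | ENNReal.ofReal t < w x} * ENNReal.ofReal (t ^ (s - 1 - 1))) := by
    intro t (ht : 0 < t)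
    simp only [ENNReal.lt_div_iff_mul_lt (.inl ha) (.inl ha')]
    rw [withDensity_apply _ (measurableSet_lt measurable_const hw)]
    refine (mul_le_mul_left (h t ht) _).trans_eq ?_
    rw [Real.rpow_sub_one ht.ne' (s - 1), ENNReal.ofReal_div_of_pos ht, div_eq_mul_inv,
      div_eq_mul_inv]
    ring
  have hscaled : ∫⁻ x, (Z x / a) ^ s ∂μ ≤ C * ENNReal.ofReal (s / (s - 1)) * ∫⁻ x, w x ^ s ∂μ := by
    have hdensity : ∫⁻ x, w x ^ s ∂μ = ∫⁻ x, w x ^ (s - 1) ∂μ.withDensity w := by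
      rw [lintegral_withDensity_eq_lintegral_mul _ hw (hw.pow_const _)]
      refine lintegral_congr fun x => ?_
      rw [Pi.mul_apply]
      conv_rhs => rw [← ENNReal.rpow_one (w x), ← ENNReal.rpow_mul, one_mul]
      rw [← ENNReal.rpow_add_of_nonneg _ _ zero_le_one (sub_pos.2 hs).le, add_sub_cancel]
    rw [hdensity, lintegral_rpow_eq_lintegral_measure_ofReal_lt_mul hs0
      (hZ.div_const a).aemeasurable, lintegral_rpow_eq_lintegral_measure_ofReal_lt_mul
      (sub_pos.2 hs) hw.aemeasurable]
    refine (mul_le_mul_right (setLIntegral_mono' measurableSet_Ioi hlevel) _).trans_eq ?_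
    rw [lintegral_const_mul C (measurable_measure_ofReal_lt_mul_rpow _ w _), mul_assoc C,
      ← mul_assoc (ENNReal.ofReal (s / (s - 1))),
      ← ENNReal.ofReal_mul (by positivity [sub_pos.2 hs]), div_mul_cancel₀ _ (sub_pos.2 hs).ne',
      mul_left_comm]
  rw [lintegral_rpow_eq_rpow_mul_lintegral_div hs0.le hZ ha ha', mul_assoc (a ^ s),
    mul_assoc (a ^ s)]
  gcongr

lemma le_two_mul_of_le_half_mul_add {x y : ℝ≥0∞} (hx : x ≠ ⊤) (h : x ≤ 2⁻¹ * x + y) :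
    x ≤ 2 * y := by
  have hhalf : 2⁻¹ * x ≠ ⊤ := ENNReal.mul_ne_top (by simp) hx
  have hsplit : 2⁻¹ * x + 2⁻¹ * x = x := by rw [← add_mul, ENNReal.inv_two_add_inv_two, one_mul]
  have hle : 2⁻¹ * x ≤ y := (ENNReal.add_le_add_iff_left hhalf).1 (hsplit.trans_le h)
  calc x = 2 * (2⁻¹ * x) := by
        rw [← mul_assoc, ENNReal.mul_inv_cancel two_ne_zero ENNReal.ofNat_ne_top, one_mul]
    _ ≤ 2 * y := by gcongr

lemma lintegral_rpow_le_of_good_lambda {s : ℝ} (hs : 0 < s) {Z Q : α → ℝ≥0∞} (hZ : Measurable Z)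
    (hQ : Measurable Q) {a γ ε : ℝ≥0∞} (ha : a ≠ 0) (ha' : a ≠ ⊤) (hγ : γ ≠ 0) (hγ' : γ ≠ ⊤)
    (hε : a ^ s * ε ≤ 2⁻¹) (hfin : ∫⁻ x, Z x ^ s ∂μ ≠ ⊤)
    (h : ∀ t : ℝ, 0 < t → μ {x | ENNReal.ofReal t * a < Z x ∧ Q x ≤ ENNReal.ofReal t * γ} ≤
      ε * μ {x | ENNReal.ofReal t < Z x}) :
    ∫⁻ x, Z x ^ s ∂μ ≤ 2 * (a / γ) ^ s * ∫⁻ x, Q x ^ s ∂μ := by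
  have hlevel : ∀ t : ℝ, 0 < t → μ {x | ENNReal.ofReal t < Z x / a} ≤
      ε * μ {x | ENNReal.ofReal t < Z x} + μ {x | ENNReal.ofReal t < Q x / γ} := by
    intro t ht
    refine le_trans (measure_mono fun x hx => ?_)
      ((measure_union_le _ _).trans (add_le_add_left (h t ht) _))
    simp only [Set.mem_ofPred_eq, Set.mem_union, ENNReal.lt_div_iff_mul_lt (.inl ha) (.inl ha'),
      ENNReal.lt_div_iff_mul_lt (.inl hγ) (.inl hγ')] at hx ⊢
    exact (le_or_gt (Q x) _).imp (⟨hx, ·⟩) id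
  have hscaled : ∫⁻ x, (Z x / a) ^ s ∂μ ≤ ε * ∫⁻ x, Z x ^ s ∂μ + ∫⁻ x, (Q x / γ) ^ s ∂μ := by
    have hmeas := measurable_measure_ofReal_lt_mul_rpow μ Z (s - 1)
    rw [lintegral_rpow_eq_lintegral_measure_ofReal_lt_mul hs (hZ.div_const a).aemeasurable,
      lintegral_rpow_eq_lintegral_measure_ofReal_lt_mul hs hZ.aemeasurable,
      lintegral_rpow_eq_lintegral_measure_ofReal_lt_mul hs (hQ.div_const γ).aemeasurable,
      mul_left_comm ε, ← mul_add, ← lintegral_const_mul ε hmeas,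
      ← lintegral_add_left (hmeas.const_mul ε)]
    gcongr ENNReal.ofReal s * ?_
    refine setLIntegral_mono' measurableSet_Ioi fun t ht => ?_
    rw [← mul_assoc, ← add_mul]
    exact mul_le_mul_left (hlevel t ht) _
  refine le_two_mul_of_le_half_mul_add hfin ?_ |>.trans_eq (mul_assoc _ _ _).symm
  calc ∫⁻ x, Z x ^ s ∂μ = a ^ s * ∫⁻ x, (Z x / a) ^ s ∂μ :=
        lintegral_rpow_eq_rpow_mul_lintegral_div hs.le hZ ha ha'
    _ ≤ a ^ s * (ε * ∫⁻ x, Z x ^ s ∂μ + ∫⁻ x, (Q x / γ) ^ s ∂μ) := by gcongr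
    _ = a ^ s * ε * ∫⁻ x, Z x ^ s ∂μ + (a / γ) ^ s * ∫⁻ x, Q x ^ s ∂μ := by
        rw [lintegral_div_const_rpow hs.le hQ, mul_add, ← mul_assoc, ← mul_assoc,
          ENNReal.div_rpow_of_nonneg _ _ hs.le, div_eq_mul_inv]
    _ ≤ 2⁻¹ * ∫⁻ x, Z x ^ s ∂μ + (a / γ) ^ s * ∫⁻ x, Q x ^ s ∂μ := by gcongr

end LayerCake

section GoodLambda

variable {α E : Type*} [MeasurableSpace α] {μ : Measure α} [NormedAddCommGroup E] {d : ℕ → α → E}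

lemma lintegral_jumpFunctionalSq_rpow_ne_top {s : ℝ} (hs : 0 < s) (n : ℕ)
    (h : ∫⁻ x, ENNReal.ofReal (∑ i ∈ Finset.range n, ‖d i x‖ ^ 2) ^ s ∂μ ≠ ⊤) :
    ∫⁻ x, jumpFunctionalSq (fun k => d k x) n ^ s ∂μ ≠ ⊤ := by
  refine ne_top_of_le_ne_top (ENNReal.mul_ne_top (a := ENNReal.ofReal (n ^ 2) ^ s)
    (ENNReal.rpow_ne_top_of_nonneg hs.le ENNReal.ofReal_ne_top) h) ?_
  rw [← lintegral_const_mul' _ _ (ENNReal.rpow_ne_top_of_nonneg hs.le ENNReal.ofReal_ne_top)]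
  refine lintegral_mono fun x => ?_
  dsimp only
  rw [← ENNReal.mul_rpow_of_nonneg _ _ hs.le, ← ENNReal.ofReal_mul (sq_nonneg _)]
  exact ENNReal.rpow_le_rpow (jumpFunctionalSq_le_sq_mul_sum_sq _ n) hs.le

variable {θ : ℕ → α → α} [InnerProductSpace ℝ E] [MeasurableSpace E] [BorelSpace E]
  [SecondCountableTopology E]

lemma SignSymmetricSystem.lintegral_jumpFunctionalSq_rpow_le (h : SignSymmetricSystem μ d θ)
    {s : ℝ} (hs : 0 < s) (n : ℕ) :
    ∫⁻ x, jumpFunctionalSq (fun k => d k x) n ^ s ∂μ ≤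
      ENNReal.ofReal (2 * (480000 * 600 ^ s) ^ s) *
        ∫⁻ x, ENNReal.ofReal (∑ i ∈ Finset.range n, ‖d i x‖ ^ 2) ^ s ∂μ := by
  by_cases hfin : ∫⁻ x, ENNReal.ofReal (∑ i ∈ Finset.range n, ‖d i x‖ ^ 2) ^ s ∂μ = ⊤
  · rw [hfin, ENNReal.mul_top (ENNReal.ofReal_pos.2 (by positivity)).ne']
    exact le_top
  have hone : (1 : ℝ) ≤ 600 ^ s := Real.one_le_rpow (by norm_num) hs.le
  set γ : ℝ := 1 / (800 * 600 ^ s) with hγ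
  have hγ0 : 0 < γ := by positivity
  have hγ1 : γ ≤ 1 := by rw [hγ, div_le_one (by positivity)]; linarith
  convert lintegral_rpow_le_of_good_lambda (μ := μ) hs (measurable_jumpFunctionalSq h.measurable n)
    (measurable_sum_norm_sq h.measurable n).ennreal_ofReal (a := ENNReal.ofReal 600)
    (γ := ENNReal.ofReal γ) (ε := ENNReal.ofReal (400 * γ)) (by simp) ENNReal.ofReal_ne_top
    (ENNReal.ofReal_pos.2 hγ0).ne' ENNReal.ofReal_ne_top ?_
    (lintegral_jumpFunctionalSq_rpow_ne_top hs n hfin) fun t ht => ?_ using 2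
  · rw [← ENNReal.ofReal_div_of_pos hγ0, ENNReal.ofReal_rpow_of_pos (by positivity),
      ENNReal.ofReal_mul zero_le_two, ENNReal.ofReal_ofNat]
    congr 3
    rw [hγ]
    field_simp
    norm_num
  · rw [ENNReal.ofReal_rpow_of_pos (by norm_num), ← ENNReal.ofReal_mul (by positivity),
      ← ENNReal.ofReal_ofNat 2, ← ENNReal.ofReal_inv_of_pos two_pos]
    refine ENNReal.ofReal_le_ofReal (le_of_eq ?_)
    rw [hγ]
    field_simp
    norm_num
  · convert h.good_lambda ht hγ0.le hγ1 n using 5 with x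
    · rw [← ENNReal.ofReal_mul ht.le, mul_comm]
    · rw [← ENNReal.ofReal_mul ht.le, mul_comm,
        ENNReal.ofReal_le_ofReal_iff (by positivity)]

end GoodLambda

section DyadicAverages

/-- The index `i` of the dyadic interval `[i / 2^n, (i + 1) / 2^n)` containing `x`. -/
def dyadicIndex (n : ℤ) (x : ℝ) : ℤ := ⌊(2 : ℝ) ^ n * x⌋

/-- The map exchanging the two halves of each dyadic interval of length `2^{1-n}`. -/
def dyadicSwap (n : ℤ) (x : ℝ) : ℝ :=
  if Even (dyadicIndex n x) then x + 1 / 2 ^ n else x - 1 / 2 ^ n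

lemma measurable_dyadicIndex (n : ℤ) : Measurable (dyadicIndex n) :=
  Int.measurable_floor.comp (measurable_const_mul _)

lemma dyadicIndex_div_le (n : ℤ) (x : ℝ) : (dyadicIndex n x : ℝ) / 2 ^ n ≤ x := by
  rw [div_le_iff₀' (by positivity)]
  exact Int.floor_le _

lemma lt_dyadicIndex_add_one_div (n : ℤ) (x : ℝ) : x < ((dyadicIndex n x : ℝ) + 1) / 2 ^ n := by
  rw [lt_div_iff₀' (by positivity)]
  exact Int.lt_floor_add_one _

lemma dyadicIndex_sub_one (n : ℤ) (x : ℝ) : dyadicIndex (n - 1) x = dyadicIndex n x / 2 := by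
  rw [dyadicIndex, dyadicIndex, ← Int.cast_mul_floor_div_cancel_of_pos two_pos,
    zpow_sub_one₀ two_ne_zero, Int.cast_ofNat, mul_right_comm, mul_comm (2 : ℝ),
    inv_mul_cancel_right₀ two_ne_zero]

lemma dyadicIndex_add_one_div (n : ℤ) (x : ℝ) :
    dyadicIndex n (x + 1 / 2 ^ n) = dyadicIndex n x + 1 := by
  rw [dyadicIndex, mul_add, mul_one_div_cancel (by positivity), Int.floor_add_one, dyadicIndex]

lemma dyadicIndex_sub_one_div (n : ℤ) (x : ℝ) :
    dyadicIndex n (x - 1 / 2 ^ n) = dyadicIndex n x - 1 := by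
  rw [dyadicIndex, mul_sub, mul_one_div_cancel (by positivity), Int.floor_sub_one, dyadicIndex]

lemma dyadicIndex_dyadicSwap (n : ℤ) (x : ℝ) : dyadicIndex n (dyadicSwap n x) =
    if Even (dyadicIndex n x) then dyadicIndex n x + 1 else dyadicIndex n x - 1 := by
  rw [dyadicSwap, apply_ite (dyadicIndex n), dyadicIndex_add_one_div, dyadicIndex_sub_one_div]

lemma dyadicIndex_dyadicSwap_of_lt {m n : ℤ} (hmn : m < n) (x : ℝ) :
    dyadicIndex m (dyadicSwap n x) = dyadicIndex m x := by
  induction m, Int.le_sub_one_of_lt hmn using Int.leInductionDown with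
  | base =>
    rw [dyadicIndex_sub_one, dyadicIndex_sub_one, dyadicIndex_dyadicSwap]
    split_ifs with heven
    · obtain ⟨k, hk⟩ := heven; omega
    · obtain ⟨k, hk⟩ := Int.not_even_iff_odd.1 heven; omega
  | pred m hm ih => rw [dyadicIndex_sub_one, dyadicIndex_sub_one, ih (by omega)]

lemma measurePreserving_ite_of_preimage {α : Type*} [MeasurableSpace α] {μ : Measure α}
    {A : Set α} [DecidablePred (· ∈ A)] (hA : MeasurableSet A) {f g : α → α}
    (hf : MeasurePreserving f μ μ) (hg : MeasurePreserving g μ μ) (hfA : f ⁻¹' Aᶜ = A)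
    (hgA : g ⁻¹' A = Aᶜ) : MeasurePreserving (fun x => if x ∈ A then f x else g x) μ μ := by
  have hmeas : Measurable fun x => if x ∈ A then f x else g x :=
    Measurable.ite hA hf.measurable hg.measurable
  refine ⟨hmeas, Measure.ext fun S hS => ?_⟩
  have hfS : (fun x => if x ∈ A then f x else g x) ⁻¹' S ∩ A = f ⁻¹' (S \ A) := by
    rw [Set.sdiff_eq, Set.preimage_inter, hfA]
    ext x
    exact and_congr_left fun hx => by simp only [Set.mem_preimage, if_pos hx]
  have hgS : (fun x => if x ∈ A then f x else g x) ⁻¹' S \ A = g ⁻¹' (S ∩ A) := by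
    rw [Set.sdiff_eq, Set.preimage_inter, hgA]
    ext x
    exact and_congr_left fun hx => by simp only [Set.mem_preimage, if_neg (show x ∉ A from hx)]
  rw [Measure.map_apply hmeas hS, ← measure_inter_add_sdiff _ hA, hfS, hgS,
    hf.measure_preimage (hS.diff hA).nullMeasurableSet,
    hg.measure_preimage (hS.inter hA).nullMeasurableSet, add_comm, measure_inter_add_sdiff S hA]

lemma measurePreserving_dyadicSwap (n : ℤ) : MeasurePreserving (dyadicSwap n) volume volume := by
  refine measurePreserving_ite_of_preimage (A := {x | Even (dyadicIndex n x)})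
    (measurable_dyadicIndex n (.of_discrete (s := {k : ℤ | Even k})))
    (measurePreserving_add_right volume (1 / 2 ^ n))
    (measurePreserving_sub_right volume (1 / 2 ^ n)) ?_ ?_
  · ext x
    simp only [Set.mem_preimage, Set.mem_compl_iff, Set.mem_ofPred_eq, dyadicIndex_add_one_div,
      Int.even_add_one, not_not]
  · ext x
    simp only [Set.mem_preimage, Set.mem_compl_iff, Set.mem_ofPred_eq, dyadicIndex_sub_one_div,
      Int.even_sub_one]

variable {E : Type*} [NormedAddCommGroup E] [NormedSpace ℝ E] {G : ℝ → E}

/-- The average of `G` over the dyadic interval of length `2^{-n}` containing `x`. -/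
def dyadicAverage (G : ℝ → E) (n : ℤ) (x : ℝ) : E :=
  (2 : ℝ) ^ n • ∫ y in ((dyadicIndex n x : ℝ) / 2 ^ n)..(((dyadicIndex n x : ℝ) + 1) / 2 ^ n), G y

/-- The martingale differences of the dyadic averages of `G`, numbered from the level `-L`. -/
def dyadicDiff (G : ℝ → E) (L : ℕ) (k : ℕ) (x : ℝ) : E :=
  dyadicAverage G ((k : ℤ) - L) x - dyadicAverage G ((k : ℤ) - L - 1) x

lemma measurable_dyadicAverage [MeasurableSpace E] (G : ℝ → E) (n : ℤ) :
    Measurable (dyadicAverage G n) :=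
  (measurable_of_countable fun k : ℤ =>
    (2 : ℝ) ^ n • ∫ y in ((k : ℝ) / 2 ^ n)..(((k : ℝ) + 1) / 2 ^ n), G y).comp
    (measurable_dyadicIndex n)

lemma dyadicAverage_dyadicSwap_of_lt (G : ℝ → E) {m n : ℤ} (hmn : m < n) (x : ℝ) :
    dyadicAverage G m (dyadicSwap n x) = dyadicAverage G m x := by
  rw [dyadicAverage, dyadicIndex_dyadicSwap_of_lt hmn, dyadicAverage]

lemma dyadicAverage_add_dyadicSwap (hG : LocallyIntegrable G) (n : ℤ) (x : ℝ) :
    dyadicAverage G n x + dyadicAverage G n (dyadicSwap n x) =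
      (2 : ℝ) • dyadicAverage G (n - 1) x := by
  have hint : ∀ a b, IntervalIntegrable G volume a b := fun a b =>
    (hG.integrableOn_isCompact isCompact_uIcc).intervalIntegrable
  have hparent : ∀ a : ℝ, a / 2 ^ (n - 1) = 2 * a / 2 ^ n := fun a => by
    rw [zpow_sub_one₀ two_ne_zero]; field_simp
  have hhalves : ∀ i : ℤ, (∫ y in ((2 * i : ℝ) / 2 ^ n)..((2 * i + 1) / 2 ^ n), G y) +
      ∫ y in ((2 * i + 1 : ℝ) / 2 ^ n)..((2 * i + 1 + 1) / 2 ^ n), G y =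
      ∫ y in ((i : ℝ) / 2 ^ (n - 1))..((i + 1) / 2 ^ (n - 1)), G y := fun i => by
    rw [intervalIntegral.integral_add_adjacent_intervals (hint _ _) (hint _ _), hparent, hparent]
    ring_nf
  rw [dyadicAverage, dyadicAverage, dyadicAverage, dyadicIndex_dyadicSwap, dyadicIndex_sub_one,
    ← smul_add, smul_smul, zpow_sub_one₀ two_ne_zero, mul_left_comm, mul_inv_cancel₀ two_ne_zero,
    mul_one, ← zpow_sub_one₀ two_ne_zero, ← hhalves]
  congr 1
  split_ifs with heven
  · obtain ⟨i, hi⟩ := heven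
    rw [hi, show (i + i) / 2 = i by omega]
    push_cast
    ring_nf
  · obtain ⟨i, hi⟩ := Int.not_even_iff_odd.1 heven
    rw [hi, show (2 * i + 1) / 2 = i by omega, add_comm]
    push_cast
    ring_nf

lemma signSymmetricSystem_dyadicDiff [MeasurableSpace E] [BorelSpace E]
    [SecondCountableTopology E] (hG : LocallyIntegrable G) (L : ℕ) :
    SignSymmetricSystem volume (dyadicDiff G L) fun k => dyadicSwap ((k : ℤ) - L) where
  measurable k := (measurable_dyadicAverage G _).sub (measurable_dyadicAverage G _)
  measurePreserving k := measurePreserving_dyadicSwap _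
  odd k x := by
    rw [dyadicDiff, dyadicAverage_dyadicSwap_of_lt G (sub_one_lt _), dyadicDiff,
      eq_sub_of_add_eq' (dyadicAverage_add_dyadicSwap hG _ x), two_smul]
    abel
  invariant k i hik x := by
    rw [dyadicDiff, dyadicAverage_dyadicSwap_of_lt G (by omega),
      dyadicAverage_dyadicSwap_of_lt G (by omega), dyadicDiff]

end DyadicAverages

section MaximalFunction

/-- The centred Hardy–Littlewood maximal function on `ℝ`. Only dyadic radii `2^{-l}` are used,
which makes measurability immediate. -/
def maximalFunction (w : ℝ → ℝ≥0∞) (x : ℝ) : ℝ≥0∞ :=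
  ⨆ l : ℤ, ⨍⁻ y in Metric.closedBall x ((2 : ℝ) ^ (-l)), w y ∂volume

variable {w : ℝ → ℝ≥0∞}

lemma measurable_setLAverage_closedBall (hw : Measurable w) (r : ℝ) :
    Measurable fun x => ⨍⁻ y in Metric.closedBall x r, w y ∂volume := by
  simp only [setLAverage_eq, Real.volume_closedBall]
  refine Measurable.div_const ?_ _
  have hindicator : ∀ x, ∫⁻ y in Metric.closedBall x r, w y =
      ∫⁻ y, {z : ℝ × ℝ | dist z.2 z.1 ≤ r}.indicator (fun z => w z.2) (x, y) := fun x => by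
    rw [← lintegral_indicator Metric.isClosed_closedBall.measurableSet]
    rfl
  simp only [hindicator]
  exact ((hw.comp measurable_snd).indicator
    (measurableSet_le (measurable_snd.dist measurable_fst) measurable_const)).lintegral_prod_right'

lemma measurable_maximalFunction (hw : Measurable w) : Measurable (maximalFunction w) :=
  Measurable.iSup fun _ => measurable_setLAverage_closedBall hw _

lemma setLAverage_le_maximalFunction (w : ℝ → ℝ≥0∞) (x : ℝ) (l : ℤ) :
    ⨍⁻ y in Metric.closedBall x ((2 : ℝ) ^ (-l)), w y ∂volume ≤ maximalFunction w x :=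
  le_iSup (fun l : ℤ => ⨍⁻ y in Metric.closedBall x ((2 : ℝ) ^ (-l)), w y ∂volume) l

lemma volume_closedBall_mul (x : ℝ) {a : ℝ} (ha : 0 ≤ a) (r : ℝ) :
    volume (Metric.closedBall x (a * r)) = ENNReal.ofReal a * volume (Metric.closedBall x r) := by
  rw [Real.volume_closedBall, Real.volume_closedBall, ← ENNReal.ofReal_mul ha, mul_left_comm]

/-- The Vitali covering lemma yields disjoint balls whose fivefold enlargements cover `T`. -/
lemma volume_le_of_forall_volume_closedBall_le {T : Set ℝ} {r : ℝ → ℝ} (hr : ∀ x, 0 < r x)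
    {c : ℝ≥0∞} (h : ∀ x ∈ T, volume (Metric.closedBall x (r x)) ≤
      c * ∫⁻ y in Metric.closedBall x (r x), w y) :
    volume T ≤ 5 * c * ∫⁻ y, w y := by
  by_cases hfin : c * ∫⁻ y, w y = ⊤
  · rw [mul_assoc, hfin, ENNReal.mul_top (by simp)]
    exact le_top
  have hbounded : ∀ x ∈ T, r x ≤ (c * ∫⁻ y, w y).toReal := by
    intro x hx
    rw [← ENNReal.ofReal_le_iff_le_toReal hfin]
    calc ENNReal.ofReal (r x) ≤ volume (Metric.closedBall x (r x)) := by
          rw [Real.volume_closedBall]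
          exact ENNReal.ofReal_le_ofReal (le_mul_of_one_le_left (hr x).le one_le_two)
      _ ≤ c * ∫⁻ y, w y := (h x hx).trans (mul_le_mul_right (setLIntegral_le_lintegral _ _) c)
  obtain ⟨u, hu, hdisj, hcover⟩ := Vitali.exists_disjoint_subfamily_covering_enlargement_closedBall
    T (fun x => x) r _ hbounded 5 (by norm_num)
  have hcount : u.Countable := hdisj.countable_of_nonempty_interior fun x _ =>
    ⟨x, Metric.ball_subset_interior_closedBall (Metric.mem_ball_self (hr x))⟩
  have hsub : T ⊆ ⋃ b ∈ u, Metric.closedBall b (5 * r b) := fun x hx => by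
    obtain ⟨b, hb, hsubset⟩ := hcover x hx
    exact Set.mem_biUnion hb (hsubset (Metric.mem_closedBall_self (hr x).le))
  calc volume T
      ≤ ∑' b : u, volume (Metric.closedBall (b : ℝ) (5 * r b)) :=
        (measure_mono hsub).trans (measure_biUnion_le _ hcount _)
    _ ≤ ∑' b : u, 5 * c * ∫⁻ y in Metric.closedBall (b : ℝ) (r b), w y := by
        refine ENNReal.tsum_le_tsum fun b => ?_
        rw [volume_closedBall_mul _ (by norm_num), ENNReal.ofReal_ofNat, mul_assoc]
        exact mul_le_mul_right (h b (hu b.2)) _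
    _ = 5 * c * ∫⁻ y in ⋃ b ∈ u, Metric.closedBall b (r b), w y := by
        rw [ENNReal.tsum_mul_left, lintegral_biUnion hcount
          (fun b _ => Metric.isClosed_closedBall.measurableSet) hdisj]
    _ ≤ 5 * c * ∫⁻ y, w y := mul_le_mul_right (setLIntegral_le_lintegral _ _) _

lemma volume_lt_maximalFunction_le (w : ℝ → ℝ≥0∞) {t : ℝ≥0∞} (ht : t ≠ 0) (ht' : t ≠ ⊤) :
    volume {x | t < maximalFunction w x} ≤ 5 / t * ∫⁻ y, w y := by
  have hradius : ∀ x ∈ {x | t < maximalFunction w x},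
      ∃ l : ℤ, t < ⨍⁻ y in Metric.closedBall x ((2 : ℝ) ^ (-l)), w y ∂volume :=
    fun x hx => lt_iSup_iff.1 hx
  choose! l hl using hradius
  refine volume_le_of_forall_volume_closedBall_le (r := fun x => (2 : ℝ) ^ (-l x))
    (fun x => by positivity) fun x hx => ?_
  have hlt := hl x hx
  rw [setLAverage_eq, ENNReal.lt_div_iff_mul_lt
    (.inl (Metric.measure_closedBall_pos volume x (by positivity)).ne')
    (.inl measure_closedBall_lt_top.ne)] at hlt
  rw [mul_comm, ← div_eq_mul_inv, ENNReal.le_div_iff_mul_le (.inl ht) (.inl ht'), mul_comm]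
  exact hlt.le

lemma maximalFunction_le_add_indicator (w : ℝ → ℝ≥0∞) (t : ℝ≥0∞) (x : ℝ) :
    maximalFunction w x ≤ t + maximalFunction ({y | t < w y}.indicator w) x := by
  refine iSup_le fun l => ?_
  have hpos : volume (Metric.closedBall x ((2 : ℝ) ^ (-l))) ≠ 0 :=
    (Metric.measure_closedBall_pos volume x (by positivity)).ne'
  refine le_trans ?_ (add_le_add_right
    (setLAverage_le_maximalFunction ({y | t < w y}.indicator w) x l) t)
  calc ⨍⁻ y in Metric.closedBall x ((2 : ℝ) ^ (-l)), w y ∂volume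
      ≤ ⨍⁻ y in Metric.closedBall x ((2 : ℝ) ^ (-l)),
          (t + {y | t < w y}.indicator w y) ∂volume := by
        refine lintegral_mono fun y => ?_
        by_cases hy : t < w y
        · rw [Set.indicator_of_mem (s := {y | t < w y}) hy]
          exact le_add_self
        · exact (not_lt.1 hy).trans le_self_add
    _ = t + ⨍⁻ y in Metric.closedBall x ((2 : ℝ) ^ (-l)), {y | t < w y}.indicator w y ∂volume := by
        rw [setLAverage_eq, setLAverage_eq, lintegral_add_left measurable_const, setLIntegral_const,
          ENNReal.add_div, ENNReal.mul_div_cancel_right hpos measure_closedBall_lt_top.ne]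

lemma lintegral_maximalFunction_rpow_le {s : ℝ} (hs : 1 < s) (hw : Measurable w) :
    ∫⁻ x, maximalFunction w x ^ s ≤
      2 ^ s * 5 * ENNReal.ofReal (s / (s - 1)) * ∫⁻ x, w x ^ s := by
  refine lintegral_rpow_le_of_measure_lt_le hs (measurable_maximalFunction hw) hw two_ne_zero
    ENNReal.ofNat_ne_top fun t ht => ?_
  rw [← lintegral_indicator (measurableSet_lt measurable_const hw)]
  refine (measure_mono fun x (hx : ENNReal.ofReal t * 2 < _) => ?_).trans
    (volume_lt_maximalFunction_le _ (ENNReal.ofReal_pos.2 ht).ne' ENNReal.ofReal_ne_top)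
  have hsplit := hx.trans_le (maximalFunction_le_add_indicator w (ENNReal.ofReal t) x)
  rw [mul_two] at hsplit
  exact lt_of_add_lt_add_left hsplit

end MaximalFunction

section PoissonAverage

/-- The (unnormalised) Poisson kernel of the upper half plane at height `2^{-l}`. -/
def dyadicPoissonKernel (l : ℤ) (x y : ℝ) : ℝ≥0∞ :=
  ENNReal.ofReal ((2 : ℝ) ^ l / (1 + ((2 : ℝ) ^ l * (x - y)) ^ 2))

/-- The average of `h` around `x` at scale `2^{-l}`, weighted by the Poisson kernel. -/
def poissonAverage (l : ℤ) (h : ℝ → ℝ≥0∞) (x : ℝ) : ℝ≥0∞ :=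
  ∫⁻ y, dyadicPoissonKernel l x y * h y

lemma dyadicPoissonKernel_comm (l : ℤ) (x y : ℝ) :
    dyadicPoissonKernel l x y = dyadicPoissonKernel l y x := by
  unfold dyadicPoissonKernel
  congr 3
  ring

lemma dyadicPoissonKernel_le_mul_dyadicPoissonKernel_of_dist_le {l : ℤ} {x z : ℝ}
    (h : dist z x ≤ (2 : ℝ) ^ (-l)) (y : ℝ) :
    dyadicPoissonKernel l z y ≤ 3 * dyadicPoissonKernel l x y := by
  have hl : (0 : ℝ) < 2 ^ l := by positivity
  unfold dyadicPoissonKernel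
  rw [← ENNReal.ofReal_ofNat, ← ENNReal.ofReal_mul (by norm_num), ← mul_div_assoc, mul_comm 3]
  refine ENNReal.ofReal_le_ofReal ((div_le_div_iff₀ (by positivity) (by positivity)).2 ?_)
  have hdist : |2 ^ l * (z - y) - 2 ^ l * (x - y)| ≤ 1 := by
    rw [← mul_sub, sub_sub_sub_cancel_right, abs_mul, abs_of_pos hl, ← le_div_iff₀' hl, one_div,
      ← zpow_neg]
    exact h
  rw [mul_assoc]
  gcongr
  nlinarith [(sq_le_one_iff_abs_le_one _).2 hdist,
    sq_nonneg (2 * ((2 : ℝ) ^ l * (z - y)) - 2 ^ l * (x - y))]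

lemma dyadicPoissonKernel_le_mul_dyadicPoissonKernel_of_le {n j : ℤ} (h : n ≤ j) (x y : ℝ) :
    dyadicPoissonKernel j x y ≤ ENNReal.ofReal ((2 : ℝ) ^ (j - n)) * dyadicPoissonKernel n x y := by
  unfold dyadicPoissonKernel
  rw [← ENNReal.ofReal_mul (by positivity), ← mul_div_assoc, ← zpow_add₀ two_ne_zero,
    sub_add_cancel]
  refine ENNReal.ofReal_le_ofReal (div_le_div_of_nonneg_left (by positivity) (by positivity) ?_)
  have hpow : (2 : ℝ) ^ n ≤ 2 ^ j := zpow_le_zpow_right₀ one_le_two h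
  rw [mul_pow, mul_pow]
  gcongr

/-- At a point `y` with `2^{k-1} < 2^l |x - y| ≤ 2^k` the `k`-th ball alone dominates. -/
lemma dyadicPoissonKernel_le_tsum (l : ℤ) (x y : ℝ) :
    dyadicPoissonKernel l x y ≤ ∑' k : ℕ, ENNReal.ofReal (8 * (1 / 2) ^ k) *
      ((volume (Metric.closedBall x ((2 : ℝ) ^ (-(l - (k : ℤ))))))⁻¹ *
        (Metric.closedBall x ((2 : ℝ) ^ (-(l - (k : ℤ))))).indicator 1 y) := by
  classical
  set u : ℝ := 2 ^ l * |x - y| with hu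
  have hlarge : ∃ k : ℕ, u ≤ 2 ^ k := (pow_unbounded_of_one_lt u one_lt_two).imp fun k hk => hk.le
  set k := Nat.find hlarge
  have hle : u ≤ 2 ^ k := Nat.find_spec hlarge
  have hsq : (2 ^ k : ℝ) ^ 2 ≤ 4 * (1 + u ^ 2) := by
    rcases Nat.eq_zero_or_pos k with hzero | hpos
    · rw [hzero]
      nlinarith [sq_nonneg u]
    · have hlt : (2 : ℝ) ^ (k - 1) < u := not_le.1 (Nat.find_min hlarge (Nat.sub_lt hpos one_pos))
      rw [← mul_pow_sub_one hpos.ne']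
      nlinarith [pow_pos (two_pos : (0 : ℝ) < 2) (k - 1)]
  have hmem : y ∈ Metric.closedBall x ((2 : ℝ) ^ (-(l - (k : ℤ)))) := by
    rw [Metric.mem_closedBall', Real.dist_eq, neg_sub, zpow_sub₀ two_ne_zero, zpow_natCast,
      le_div_iff₀' (by positivity)]
    exact hle
  refine le_trans ?_ (ENNReal.le_tsum k)
  rw [Set.indicator_of_mem hmem, Pi.one_apply, mul_one, Real.volume_closedBall,
    ← ENNReal.ofReal_inv_of_pos (by positivity), ← ENNReal.ofReal_mul (by positivity)]
  refine ENNReal.ofReal_le_ofReal ?_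
  have hu2 : ((2 : ℝ) ^ l * (x - y)) ^ 2 = u ^ 2 := by rw [hu, mul_pow, mul_pow, sq_abs]
  have hcoeff : 8 * (1 / 2 : ℝ) ^ k * (2 * 2 ^ (-(l - (k : ℤ))))⁻¹ =
      2 ^ l * (4 / (2 ^ k) ^ 2) := by
    rw [neg_sub, zpow_sub₀ two_ne_zero, zpow_natCast, one_div, inv_pow]
    field_simp
    norm_num
  rw [hu2, hcoeff, div_eq_mul_inv]
  gcongr
  rwa [inv_eq_one_div, div_le_div_iff₀ (by positivity) (by positivity), one_mul]

lemma measurable_dyadicPoissonKernel (l : ℤ) :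
    Measurable fun p : ℝ × ℝ => dyadicPoissonKernel l p.1 p.2 := by
  unfold dyadicPoissonKernel
  fun_prop

lemma measurable_dyadicPoissonKernel_right (l : ℤ) (x : ℝ) :
    Measurable (dyadicPoissonKernel l x) := by
  unfold dyadicPoissonKernel
  fun_prop

variable {h : ℝ → ℝ≥0∞}

lemma measurable_poissonAverage (l : ℤ) (hh : Measurable h) : Measurable (poissonAverage l h) :=
  ((measurable_dyadicPoissonKernel l).mul (hh.comp measurable_snd)).lintegral_prod_right'

lemma poissonAverage_le_mul_of_dist_le {l : ℤ} {x z : ℝ} (hdist : dist z x ≤ (2 : ℝ) ^ (-l))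
    (h : ℝ → ℝ≥0∞) : poissonAverage l h z ≤ 3 * poissonAverage l h x := by
  unfold poissonAverage
  rw [← lintegral_const_mul' _ _ ENNReal.ofNat_ne_top]
  refine lintegral_mono fun y => ?_
  rw [← mul_assoc]
  exact mul_le_mul_left (dyadicPoissonKernel_le_mul_dyadicPoissonKernel_of_dist_le hdist y) _

lemma poissonAverage_le_mul_of_le {n j : ℤ} (hnj : n ≤ j) (h : ℝ → ℝ≥0∞) (x : ℝ) :
    poissonAverage j h x ≤ ENNReal.ofReal ((2 : ℝ) ^ (j - n)) * poissonAverage n h x := by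
  unfold poissonAverage
  rw [← lintegral_const_mul' _ _ ENNReal.ofReal_ne_top]
  refine lintegral_mono fun y => ?_
  rw [← mul_assoc]
  exact mul_le_mul_left (dyadicPoissonKernel_le_mul_dyadicPoissonKernel_of_le hnj x y) _

lemma poissonAverage_le_maximalFunction (l : ℤ) (hh : Measurable h) (x : ℝ) :
    poissonAverage l h x ≤ 16 * maximalFunction h x := by
  let B : ℕ → Set ℝ := fun k => Metric.closedBall x ((2 : ℝ) ^ (-(l - (k : ℤ))))
  have hB : ∀ k, MeasurableSet (B k) := fun k => Metric.isClosed_closedBall.measurableSet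
  calc poissonAverage l h x
      ≤ ∫⁻ y, ∑' k : ℕ, ENNReal.ofReal (8 * (1 / 2) ^ k) *
          ((volume (B k))⁻¹ * (B k).indicator h y) := by
        refine lintegral_mono fun y =>
          (mul_le_mul_left (dyadicPoissonKernel_le_tsum l x y) (h y)).trans ?_
        rw [← ENNReal.tsum_mul_right]
        refine ENNReal.tsum_le_tsum fun k => ?_
        rw [mul_assoc, mul_assoc, ← Set.indicator_mul_left]
        simp only [Pi.one_apply, one_mul]
        rfl
    _ = ∑' k : ℕ, ENNReal.ofReal (8 * (1 / 2) ^ k) * ⨍⁻ y in B k, h y ∂volume := by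
        rw [lintegral_tsum fun k =>
          (((hh.indicator (hB k)).const_mul _).const_mul _).aemeasurable]
        refine tsum_congr fun k => ?_
        rw [lintegral_const_mul _ ((hh.indicator (hB k)).const_mul _),
          lintegral_const_mul _ (hh.indicator (hB k)), lintegral_indicator (hB k), setLAverage_eq,
          ENNReal.div_eq_inv_mul]
    _ ≤ ∑' k : ℕ, ENNReal.ofReal (8 * (1 / 2) ^ k) * maximalFunction h x :=
        ENNReal.tsum_le_tsum fun k =>
          mul_le_mul_right (setLAverage_le_maximalFunction h x (l - k)) _
    _ = 16 * maximalFunction h x := by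
        rw [ENNReal.tsum_mul_right, ← ENNReal.ofReal_tsum_of_nonneg (fun k => by positivity)
          (summable_geometric_two.mul_left _), tsum_mul_left, tsum_geometric_two]
        norm_num

lemma poissonAverage_one_le (l : ℤ) (x : ℝ) : poissonAverage l (fun _ => 1) x ≤ 16 := by
  refine (poissonAverage_le_maximalFunction l measurable_const x).trans
    (mul_le_of_le_one_right' (iSup_le fun m => ?_))
  rw [setLAverage_eq, setLIntegral_one]
  exact ENNReal.div_self_le_one

lemma lintegral_rpow_le_measure_univ_rpow_mul {α : Type*} [MeasurableSpace α] (μ : Measure α)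
    {s : ℝ} (hs : 1 ≤ s) {h : α → ℝ≥0∞} (hh : AEMeasurable h μ) :
    (∫⁻ x, h x ∂μ) ^ s ≤ μ Set.univ ^ (s - 1) * ∫⁻ x, h x ^ s ∂μ := by
  have hs0 : 0 < s := one_pos.trans_le hs
  have hnorm := eLpNorm'_le_eLpNorm'_mul_rpow_measure_univ one_pos hs hh.aestronglyMeasurable
  simp only [eLpNorm', enorm_eq_self, ENNReal.rpow_one, div_one] at hnorm
  refine (ENNReal.rpow_le_rpow hnorm hs0.le).trans_eq ?_
  rw [ENNReal.mul_rpow_of_nonneg _ _ hs0.le, ← ENNReal.rpow_mul, ← ENNReal.rpow_mul,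
    one_div_mul_cancel hs0.ne', ENNReal.rpow_one, sub_mul, one_div_mul_cancel hs0.ne', one_mul,
    mul_comm]

lemma poissonAverage_rpow_le (l : ℤ) {s : ℝ} (hs : 1 ≤ s) (hh : Measurable h) (x : ℝ) :
    poissonAverage l h x ^ s ≤ 16 ^ (s - 1) * poissonAverage l (fun y => h y ^ s) x := by
  have hdensity : ∀ {w : ℝ → ℝ≥0∞}, Measurable w →
      poissonAverage l w x = ∫⁻ y, w y ∂volume.withDensity (dyadicPoissonKernel l x) :=
    fun hw => (lintegral_withDensity_eq_lintegral_mul _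
      (measurable_dyadicPoissonKernel_right l x) hw).symm
  have hmass : volume.withDensity (dyadicPoissonKernel l x) Set.univ ≤ 16 := by
    rw [← lintegral_one, ← hdensity measurable_const]
    exact poissonAverage_one_le l x
  rw [hdensity hh, hdensity (hh.pow_const s)]
  exact (lintegral_rpow_le_measure_univ_rpow_mul _ hs hh.aemeasurable).trans
    (mul_le_mul_left (ENNReal.rpow_le_rpow hmass (sub_nonneg.2 hs)) _)

lemma lintegral_poissonAverage_mul (l : ℤ) {w : ℝ → ℝ≥0∞} (hh : Measurable h)
    (hw : Measurable w) :
    ∫⁻ x, poissonAverage l h x * w x = ∫⁻ y, h y * poissonAverage l w y := by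
  have hleft : ∀ x, poissonAverage l h x * w x = ∫⁻ y, dyadicPoissonKernel l x y * h y * w x :=
    fun x => (lintegral_mul_const _ ((measurable_dyadicPoissonKernel_right l x).mul hh)).symm
  have hright : ∀ y, h y * poissonAverage l w y = ∫⁻ x, h y * (dyadicPoissonKernel l y x * w x) :=
    fun y => (lintegral_const_mul _ ((measurable_dyadicPoissonKernel_right l y).mul hw)).symm
  simp only [hleft, hright]
  rw [lintegral_lintegral_swap (((measurable_dyadicPoissonKernel l).mul
    (hh.comp measurable_snd)).mul (hw.comp measurable_fst)).aemeasurable]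
  refine lintegral_congr fun y => lintegral_congr fun x => ?_
  rw [dyadicPoissonKernel_comm]
  ring

lemma lintegral_poissonAverage_rpow_le (l : ℤ) {s : ℝ} (hs : 1 ≤ s) (hh : Measurable h) :
    ∫⁻ x, poissonAverage l h x ^ s ≤ 16 ^ s * ∫⁻ x, h x ^ s := by
  have hpow := lintegral_poissonAverage_mul l (hh.pow_const s) (measurable_const (a := (1 : ℝ≥0∞)))
  simp only [mul_one] at hpow
  calc ∫⁻ x, poissonAverage l h x ^ s
      ≤ ∫⁻ x, 16 ^ (s - 1) * poissonAverage l (fun y => h y ^ s) x :=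
        lintegral_mono fun x => poissonAverage_rpow_le l hs hh x
    _ = 16 ^ (s - 1) * ∫⁻ x, h x ^ s * poissonAverage l (fun _ => 1) x := by
        rw [lintegral_const_mul _ (measurable_poissonAverage l (hh.pow_const s)), hpow]
    _ ≤ 16 ^ (s - 1) * ∫⁻ x, h x ^ s * 16 := by
        gcongr
        exact poissonAverage_one_le l _
    _ = 16 ^ s * ∫⁻ x, h x ^ s := by
        rw [lintegral_mul_const _ (hh.pow_const s), mul_comm (∫⁻ x, h x ^ s), ← mul_assoc]
        congr 1
        rw [← sub_add_cancel s 1, ENNReal.rpow_add _ _ (by simp) (by simp), ENNReal.rpow_one,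
          add_sub_cancel_right]

end PoissonAverage

section SteinInequality

lemma le_rpow_mul_of_le_mul_rpow_mul_rpow {x y K : ℝ≥0∞} {s s' : ℝ} (hs : s.HolderConjugate s')
    (hx : x ≠ ⊤) (h : x ≤ K * (y ^ (1 / s) * x ^ (1 / s'))) : x ≤ K ^ s * y := by
  rcases eq_or_ne x 0 with rfl | hx0
  · exact zero_le
  have hsplit : x = x ^ (1 / s) * x ^ (1 / s') := by
    rw [← ENNReal.rpow_add _ _ hx0 hx, one_div, one_div, hs.inv_add_inv_eq_one, ENNReal.rpow_one]
  have hroot : x ^ (1 / s) ≤ K * y ^ (1 / s) := by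
    rw [← mul_assoc] at h
    conv_lhs at h => rw [hsplit]
    exact (ENNReal.mul_le_mul_iff_left (ENNReal.rpow_pos (pos_iff_ne_zero.2 hx0) hx).ne'
      (ENNReal.rpow_ne_top_of_nonneg hs.symm.one_div_nonneg hx)).1 h
  have hpow := ENNReal.rpow_le_rpow hroot hs.nonneg
  rwa [ENNReal.mul_rpow_of_nonneg _ _ hs.nonneg, ← ENNReal.rpow_mul, ← ENNReal.rpow_mul,
    one_div_mul_cancel hs.ne_zero, ENNReal.rpow_one, ENNReal.rpow_one] at hpow

lemma one_lt_div_of_holderConjugate {b b' s a' : ℝ} (hb : b.HolderConjugate b')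
    (ha : (b * s).HolderConjugate a') (hs : s < 1) : 1 < a' / b' := by
  rw [one_lt_div hb.symm.pos, hb.conjugate_eq, ha.conjugate_eq,
    div_lt_div_iff₀ hb.sub_one_pos ha.sub_one_pos]
  nlinarith [hb.pos]

lemma dual_weight_exponent {b b' s a' : ℝ} (hb : b.HolderConjugate b')
    (ha : (b * s).HolderConjugate a') : (1 + (s - 1) * b') * (a' / b') = s := by
  have hb0 := hb.pos
  have hb1 : b - 1 ≠ 0 := hb.sub_one_pos.ne'
  have ha1 : b * s - 1 ≠ 0 := ha.sub_one_pos.ne'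
  rw [hb.conjugate_eq, ha.conjugate_eq, div_div_div_eq, mul_div_assoc', div_eq_iff (by positivity)]
  field_simp
  ring

variable {ι : Type*} (t : Finset ι)

lemma sum_rpow_le_card_rpow_mul_sum_rpow (x : ι → ℝ≥0∞) {s : ℝ} (hs : 0 < s) :
    (∑ i ∈ t, x i) ^ s ≤ (t.card : ℝ≥0∞) ^ s * ∑ i ∈ t, x i ^ s := by
  rcases t.eq_empty_or_nonempty with rfl | hne
  · simp [hs]
  obtain ⟨m, hm, hmax⟩ := t.exists_max_image x hne
  calc (∑ i ∈ t, x i) ^ s ≤ (t.card * x m) ^ s := by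
        rw [← nsmul_eq_mul]
        exact ENNReal.rpow_le_rpow (t.sum_le_card_nsmul x (x m) hmax) hs.le
    _ = (t.card : ℝ≥0∞) ^ s * x m ^ s := ENNReal.mul_rpow_of_nonneg _ _ hs.le
    _ ≤ _ := mul_le_mul_right
        (Finset.single_le_sum (f := fun i => x i ^ s) (fun _ _ => zero_le) hm) _

lemma lintegral_sum_mul_le_Lp_mul_Lq {α : Type*} [MeasurableSpace α] {μ : Measure α}
    {f g : ι → α → ℝ≥0∞} (hf : ∀ i, Measurable (f i)) (hg : ∀ i, Measurable (g i))
    {a a' b b' : ℝ} (ha : a.HolderConjugate a') (hb : b.HolderConjugate b') :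
    ∫⁻ x, ∑ i ∈ t, f i x * g i x ∂μ ≤
      (∫⁻ x, (∑ i ∈ t, f i x ^ b) ^ (a / b) ∂μ) ^ (1 / a) *
        (∫⁻ x, (∑ i ∈ t, g i x ^ b') ^ (a' / b') ∂μ) ^ (1 / a') := by
  have hpow : ∀ (X : α → ℝ≥0∞) (c d : ℝ), (fun x => (X x ^ (1 / c)) ^ d) = fun x => X x ^ (d / c) :=
    fun X c d => funext fun x => by rw [← ENNReal.rpow_mul, one_div_mul_eq_div]
  refine (lintegral_mono fun x => ENNReal.inner_le_Lp_mul_Lq t _ _ hb).trans ?_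
  have hfsum := (Finset.measurable_fun_sum t fun i _ => (hf i).pow_const b).pow_const (1 / b)
  have hgsum := (Finset.measurable_fun_sum t fun i _ => (hg i).pow_const b').pow_const (1 / b')
  refine (ENNReal.lintegral_mul_le_Lp_mul_Lq μ ha hfsum.aemeasurable hgsum.aemeasurable).trans ?_
  rw [hpow, hpow]

/-- The weights `xᵢ^{b-1} X^{s-1}`, `X = ∑ xᵢ^b`, norm the family `x` by duality. -/
lemma sum_rpow_rpow_le_sum_mul (x : ι → ℝ≥0∞) {b s : ℝ} (hb : 1 ≤ b) (hs : 0 < s)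
    (hX : ∑ i ∈ t, x i ^ b ≠ ⊤) :
    (∑ i ∈ t, x i ^ b) ^ s ≤
      ∑ i ∈ t, x i * (x i ^ (b - 1) * (∑ k ∈ t, x k ^ b) ^ (s - 1)) := by
  have hmul : ∀ i, x i * x i ^ (b - 1) = x i ^ b := fun i => by
    conv_rhs => rw [← add_sub_cancel 1 b,
      ENNReal.rpow_add_of_nonneg _ _ zero_le_one (sub_nonneg.2 hb), ENNReal.rpow_one]
  simp only [← mul_assoc, hmul, ← Finset.sum_mul]
  rcases eq_or_ne (∑ i ∈ t, x i ^ b) 0 with hzero | hzero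
  · rw [hzero, ENNReal.zero_rpow_of_pos hs, zero_mul]
  · conv_lhs => rw [← add_sub_cancel 1 s, ENNReal.rpow_add _ _ hzero hX, ENNReal.rpow_one]

lemma sum_dual_weight_rpow_le (x : ι → ℝ≥0∞) {b b' : ℝ} (hb : b.HolderConjugate b')
    {s s' : ℝ} (hs : s < 1) (hs' : 0 ≤ s') (hss : (1 + (s - 1) * b') * s' = s) :
    (∑ i ∈ t, (x i ^ (b - 1) * (∑ k ∈ t, x k ^ b) ^ (s - 1)) ^ b') ^ s' ≤
      (∑ i ∈ t, x i ^ b) ^ s := by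
  have hterm : ∀ i, (x i ^ (b - 1) * (∑ k ∈ t, x k ^ b) ^ (s - 1)) ^ b' =
      x i ^ b * (∑ k ∈ t, x k ^ b) ^ ((s - 1) * b') := fun i => by
    rw [ENNReal.mul_rpow_of_nonneg _ _ hb.symm.nonneg, ← ENNReal.rpow_mul, ← ENNReal.rpow_mul,
      hb.sub_one_mul_conj]
  simp only [hterm, ← Finset.sum_mul]
  generalize ∑ i ∈ t, x i ^ b = X
  have hneg : (s - 1) * b' < 0 := mul_neg_of_neg_of_pos (sub_neg.2 hs) hb.symm.pos
  conv_rhs => rw [← hss, ENNReal.rpow_mul]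
  refine ENNReal.rpow_le_rpow ?_ hs'
  rcases eq_or_ne X 0 with rfl | hzero
  · rw [zero_mul]
    exact zero_le
  rcases eq_or_ne X ⊤ with rfl | htop
  · rw [ENNReal.top_rpow_of_neg hneg, mul_zero]
    exact zero_le
  rw [ENNReal.rpow_add _ _ hzero htop, ENNReal.rpow_one]

variable (l : ι → ℤ) {h : ι → ℝ → ℝ≥0∞} (hh : ∀ i, Measurable (h i)) {b s : ℝ}

include hh

lemma measurable_sum_poissonAverage_rpow (b : ℝ) :
    Measurable fun x => ∑ i ∈ t, poissonAverage (l i) (h i) x ^ b :=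
  Finset.measurable_fun_sum t fun i _ => (measurable_poissonAverage (l i) (hh i)).pow_const b

lemma lintegral_sum_poissonAverage_rpow_ne_top (hs : 0 < s) (hbs : 1 ≤ b * s)
    (hfin : ∫⁻ x, (∑ i ∈ t, h i x ^ b) ^ s ≠ ⊤) :
    ∫⁻ x, (∑ i ∈ t, poissonAverage (l i) (h i) x ^ b) ^ s ≠ ⊤ := by
  refine ne_top_of_le_ne_top ?_
    (lintegral_mono fun x => sum_rpow_le_card_rpow_mul_sum_rpow t _ hs)
  simp only [← ENNReal.rpow_mul]
  have hmeas : ∀ i, Measurable fun x => poissonAverage (l i) (h i) x ^ (b * s) :=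
    fun i => (measurable_poissonAverage (l i) (hh i)).pow_const _
  rw [lintegral_const_mul _ (Finset.measurable_fun_sum t fun i _ => hmeas i),
    lintegral_finsetSum t fun i _ => hmeas i]
  refine ENNReal.mul_ne_top (ENNReal.rpow_ne_top_of_nonneg hs.le (ENNReal.natCast_ne_top _))
    (ENNReal.sum_ne_top.2 fun i hi => ?_)
  refine ne_top_of_le_ne_top (ENNReal.mul_ne_top (ENNReal.rpow_ne_top_of_nonneg
    (zero_le_one.trans hbs) ENNReal.ofNat_ne_top) (ne_top_of_le_ne_top hfin ?_))
    (lintegral_poissonAverage_rpow_le (l i) hbs (hh i))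
  refine lintegral_mono fun x => ?_
  rw [ENNReal.rpow_mul]
  exact ENNReal.rpow_le_rpow
    (Finset.single_le_sum (f := fun i => h i x ^ b) (fun _ _ => zero_le) hi) hs.le

lemma lintegral_sum_poissonAverage_rpow_mul_le (hb : 1 ≤ b) {w : ℝ → ℝ≥0∞} (hw : Measurable w) :
    ∫⁻ x, (∑ i ∈ t, poissonAverage (l i) (h i) x ^ b) * w x ≤
      16 ^ b * ∫⁻ x, (∑ i ∈ t, h i x ^ b) * maximalFunction w x := by
  have hterm : ∀ i, ∫⁻ x, poissonAverage (l i) (h i) x ^ b * w x ≤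
      16 ^ b * ∫⁻ x, h i x ^ b * maximalFunction w x := fun i => calc
    ∫⁻ x, poissonAverage (l i) (h i) x ^ b * w x
      ≤ ∫⁻ x, 16 ^ (b - 1) * (poissonAverage (l i) (fun y => h i y ^ b) x * w x) := by
        refine lintegral_mono fun x => ?_
        rw [← mul_assoc]
        exact mul_le_mul_left (poissonAverage_rpow_le (l i) hb (hh i) x) _
    _ = 16 ^ (b - 1) * ∫⁻ x, h i x ^ b * poissonAverage (l i) w x := by
        rw [lintegral_const_mul' _ _ (by simp),
          lintegral_poissonAverage_mul (l i) ((hh i).pow_const b) hw]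
    _ ≤ 16 ^ (b - 1) * ∫⁻ x, 16 * (h i x ^ b * maximalFunction w x) := by
        gcongr 16 ^ (b - 1) * ∫⁻ x, ?_ with x
        rw [mul_left_comm]
        exact mul_le_mul_right (poissonAverage_le_maximalFunction (l i) hw x) _
    _ = 16 ^ b * ∫⁻ x, h i x ^ b * maximalFunction w x := by
        rw [lintegral_const_mul' _ _ ENNReal.ofNat_ne_top, ← mul_assoc]
        congr 1
        rw [← sub_add_cancel b 1, ENNReal.rpow_add _ _ (by simp) (by simp), ENNReal.rpow_one,
          add_sub_cancel_right]
  simp only [Finset.sum_mul]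
  rw [lintegral_finsetSum t fun i _ =>
      ((measurable_poissonAverage (l i) (hh i)).pow_const b).fun_mul hw,
    lintegral_finsetSum t fun i _ => ((hh i).pow_const b).fun_mul (measurable_maximalFunction hw),
    Finset.mul_sum]
  exact Finset.sum_le_sum fun i _ => hterm i

omit hh

/-- Stein's inequality in `L^{bs}(ℓ^b)`, with constant `C`, for finite families of Poisson averages
indexed by `ι`. -/
def SteinBound (ι : Type*) (b s : ℝ) (C : ℝ≥0∞) : Prop :=
  ∀ (t : Finset ι) (l : ι → ℤ) (h : ι → ℝ → ℝ≥0∞), (∀ i, Measurable (h i)) →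
    ∫⁻ x, (∑ i ∈ t, poissonAverage (l i) (h i) x ^ b) ^ s ≤ C * ∫⁻ x, (∑ i ∈ t, h i x ^ b) ^ s

lemma exists_steinBound_of_le_mul_rpow_mul_rpow {a a' : ℝ} (ha : a.HolderConjugate a')
    (hs : 0 < s) (hbs : 1 ≤ b * s) {K : ℝ≥0∞} (hK : K ≠ ⊤)
    (hself : ∀ (t : Finset ι) (l : ι → ℤ) (h : ι → ℝ → ℝ≥0∞), (∀ i, Measurable (h i)) →
      ∫⁻ x, (∑ i ∈ t, poissonAverage (l i) (h i) x ^ b) ^ s ≠ ⊤ →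
      ∫⁻ x, (∑ i ∈ t, poissonAverage (l i) (h i) x ^ b) ^ s ≤
        K * ((∫⁻ x, (∑ i ∈ t, h i x ^ b) ^ s) ^ (1 / a) *
          (∫⁻ x, (∑ i ∈ t, poissonAverage (l i) (h i) x ^ b) ^ s) ^ (1 / a'))) :
    ∃ C : ℝ≥0∞, C ≠ ⊤ ∧ SteinBound ι b s C := by
  refine ⟨max (K ^ a) 1, by simp [ENNReal.rpow_ne_top_of_nonneg ha.nonneg hK],
    fun t l h hh => ?_⟩
  by_cases hfin : ∫⁻ x, (∑ i ∈ t, h i x ^ b) ^ s = ⊤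
  · rw [hfin, ENNReal.mul_top (by simp)]
    exact le_top
  have hXfin := lintegral_sum_poissonAverage_rpow_ne_top t l hh hs hbs hfin
  exact (le_rpow_mul_of_le_mul_rpow_mul_rpow ha hXfin (hself t l h hh hXfin)).trans
    (mul_le_mul_left (le_max_left _ _) _)

/-- Test `∑ (Pᵢhᵢ)^b` against its own power and use the `L^{s'}` bound for the maximal function. -/
lemma exists_steinBound_of_one_lt (hb : 1 ≤ b) (hs : 1 < s) :
    ∃ C : ℝ≥0∞, C ≠ ⊤ ∧ SteinBound ι b s C := by
  set s' := s.conjExponent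
  have hss : s.HolderConjugate s' := .conjExponent hs
  set M : ℝ≥0∞ := 2 ^ s' * 5 * ENNReal.ofReal (s' / (s' - 1))
  have hM : M ≠ ⊤ := by simp [M, ENNReal.mul_eq_top]
  set K : ℝ≥0∞ := 16 ^ b * M ^ (1 / s')
  have hK : K ≠ ⊤ := ENNReal.mul_ne_top
    (ENNReal.rpow_ne_top_of_nonneg (zero_le_one.trans hb) ENNReal.ofNat_ne_top)
    (ENNReal.rpow_ne_top_of_nonneg hss.symm.one_div_nonneg hM)
  refine exists_steinBound_of_le_mul_rpow_mul_rpow hss hss.pos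
    (one_le_mul_of_one_le_of_one_le hb hs.le) hK fun t l h hh _ => ?_
  set X : ℝ → ℝ≥0∞ := fun x => ∑ i ∈ t, poissonAverage (l i) (h i) x ^ b
  have hX : Measurable X := measurable_sum_poissonAverage_rpow t l hh b
  calc ∫⁻ x, X x ^ s = ∫⁻ x, X x * X x ^ (s - 1) := by
        refine lintegral_congr fun x => ?_
        conv_lhs => rw [← add_sub_cancel 1 s,
          ENNReal.rpow_add_of_nonneg _ _ zero_le_one (sub_nonneg.2 hs.le), ENNReal.rpow_one]
    _ ≤ 16 ^ b * ∫⁻ x, (∑ i ∈ t, h i x ^ b) * maximalFunction (fun x => X x ^ (s - 1)) x :=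
        lintegral_sum_poissonAverage_rpow_mul_le t l hh hb (hX.pow_const _)
    _ ≤ 16 ^ b * ((∫⁻ x, (∑ i ∈ t, h i x ^ b) ^ s) ^ (1 / s) *
          (∫⁻ x, maximalFunction (fun x => X x ^ (s - 1)) x ^ s') ^ (1 / s')) :=
        mul_le_mul_right (ENNReal.lintegral_mul_le_Lp_mul_Lq _ hss
          (Finset.measurable_fun_sum t fun i _ => (hh i).pow_const b).aemeasurable
          (measurable_maximalFunction (hX.pow_const _)).aemeasurable) _
    _ ≤ 16 ^ b * ((∫⁻ x, (∑ i ∈ t, h i x ^ b) ^ s) ^ (1 / s) *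
          (M * ∫⁻ x, (X x ^ (s - 1)) ^ s') ^ (1 / s')) := by
        gcongr
        exacts [hss.symm.one_div_nonneg,
          lintegral_maximalFunction_rpow_le hss.symm.lt (hX.pow_const _)]
    _ = K * ((∫⁻ x, (∑ i ∈ t, h i x ^ b) ^ s) ^ (1 / s) * (∫⁻ x, X x ^ s) ^ (1 / s')) := by
        simp only [← ENNReal.rpow_mul, hss.sub_one_mul_conj]
        rw [ENNReal.mul_rpow_of_nonneg _ _ hss.symm.one_div_nonneg]
        ring

lemma lintegral_sum_poissonAverage_mul_le_Lp_mul_Lq (t : Finset ι) (l : ι → ℤ)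
    {h : ι → ℝ → ℝ≥0∞} (hh : ∀ i, Measurable (h i)) {w : ι → ℝ → ℝ≥0∞}
    (hw : ∀ i, Measurable (w i)) {a a' b' : ℝ} (ha : a.HolderConjugate a')
    (hb : b.HolderConjugate b') :
    ∫⁻ x, ∑ i ∈ t, poissonAverage (l i) (h i) x * w i x ≤
      (∫⁻ x, (∑ i ∈ t, h i x ^ b) ^ (a / b)) ^ (1 / a) *
        (∫⁻ x, (∑ i ∈ t, poissonAverage (l i) (w i) x ^ b') ^ (a' / b')) ^ (1 / a') := by
  refine le_trans (le_of_eq ?_) (lintegral_sum_mul_le_Lp_mul_Lq t hh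
    (fun i => measurable_poissonAverage (l i) (hw i)) ha hb)
  rw [lintegral_finsetSum t fun i _ => (measurable_poissonAverage (l i) (hh i)).fun_mul (hw i),
    lintegral_finsetSum t fun i _ => (hh i).fun_mul (measurable_poissonAverage (l i) (hw i))]
  exact Finset.sum_congr rfl fun i _ => lintegral_poissonAverage_mul (l i) (hh i) (hw i)

/-- The averages are self-adjoint, so exponents `s < 1` follow by duality from exponents `> 1`. -/
lemma exists_steinBound_of_lt_one (hb : 1 < b) (hbs : 1 < b * s) (hs : s < 1) :
    ∃ C : ℝ≥0∞, C ≠ ⊤ ∧ SteinBound ι b s C := by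
  set a := b * s
  set a' := a.conjExponent
  set b' := b.conjExponent
  have ha : a.HolderConjugate a' := .conjExponent hbs
  have hbb : b.HolderConjugate b' := .conjExponent hb
  have hs0 : 0 < s := pos_of_mul_pos_right ha.pos hbb.nonneg
  have hab : a / b = s := mul_div_cancel_left₀ s hbb.ne_zero
  have hs' : 1 < a' / b' := one_lt_div_of_holderConjugate hbb ha hs
  have hss : (1 + (s - 1) * b') * (a' / b') = s := dual_weight_exponent hbb ha
  obtain ⟨D, hD, hdual⟩ := exists_steinBound_of_one_lt (ι := ι) hbb.symm.lt.le hs'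
  set K : ℝ≥0∞ := D ^ (1 / a')
  have hK : K ≠ ⊤ := ENNReal.rpow_ne_top_of_nonneg ha.symm.one_div_nonneg hD
  refine exists_steinBound_of_le_mul_rpow_mul_rpow ha hs0 hbs.le hK fun t l h hh hXfin => ?_
  set X : ℝ → ℝ≥0∞ := fun x => ∑ i ∈ t, poissonAverage (l i) (h i) x ^ b
  have hX : Measurable X := measurable_sum_poissonAverage_rpow t l hh b
  set w : ι → ℝ → ℝ≥0∞ := fun i x => poissonAverage (l i) (h i) x ^ (b - 1) * X x ^ (s - 1)
  have hw : ∀ i, Measurable (w i) := fun i =>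
    ((measurable_poissonAverage (l i) (hh i)).pow_const _).mul (hX.pow_const _)
  calc ∫⁻ x, X x ^ s ≤ ∫⁻ x, ∑ i ∈ t, poissonAverage (l i) (h i) x * w i x := by
        refine lintegral_mono_ae ?_
        filter_upwards [ae_lt_top (hX.pow_const s) hXfin] with x hx
        exact sum_rpow_rpow_le_sum_mul t _ hb.le hs0
          fun htop => hx.ne (by simp only [X, htop, ENNReal.top_rpow_of_pos hs0])
    _ ≤ (∫⁻ x, (∑ i ∈ t, h i x ^ b) ^ s) ^ (1 / a) *
          (∫⁻ x, (∑ i ∈ t, poissonAverage (l i) (w i) x ^ b') ^ (a' / b')) ^ (1 / a') := by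
        rw [← hab]
        exact lintegral_sum_poissonAverage_mul_le_Lp_mul_Lq t l hh hw ha hbb
    _ ≤ (∫⁻ x, (∑ i ∈ t, h i x ^ b) ^ s) ^ (1 / a) * (D * ∫⁻ x, X x ^ s) ^ (1 / a') := by
        refine mul_le_mul_right (ENNReal.rpow_le_rpow ((hdual t l w hw).trans
          (mul_le_mul_right (lintegral_mono fun x => ?_) D)) ha.symm.one_div_nonneg) _
        exact sum_dual_weight_rpow_le t _ hbb hs (zero_le_one.trans hs'.le) hss
    _ = K * ((∫⁻ x, (∑ i ∈ t, h i x ^ b) ^ s) ^ (1 / a) * (∫⁻ x, X x ^ s) ^ (1 / a')) := by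
        rw [ENNReal.mul_rpow_of_nonneg _ _ ha.symm.one_div_nonneg]
        ring

/-- **Stein's inequality** for Poisson averages. -/
lemma exists_steinBound (hb : 1 < b) (hbs : 1 < b * s) :
    ∃ C : ℝ≥0∞, C ≠ ⊤ ∧ SteinBound ι b s C := by
  rcases lt_trichotomy s 1 with hs | rfl | hs
  · exact exists_steinBound_of_lt_one hb hbs hs
  · refine ⟨16 ^ b, by simp, fun t l h hh => ?_⟩
    simp only [ENNReal.rpow_one]
    rw [lintegral_finsetSum t fun i _ =>
        (measurable_poissonAverage (l i) (hh i)).pow_const b,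
      lintegral_finsetSum t fun i _ => (hh i).pow_const b, Finset.mul_sum]
    exact Finset.sum_le_sum fun i _ => lintegral_poissonAverage_rpow_le (l i) hb.le (hh i)
  · exact exists_steinBound_of_one_lt hb.le hs

end SteinInequality

section BandLimited

open scoped SchwartzMap ContDiff

lemma exists_norm_le_div_one_add_sq (κ : 𝓢(ℝ, ℂ)) : ∃ C : ℝ≥0, ∀ u, ‖κ u‖ ≤ C / (1 + u ^ 2) := by
  obtain ⟨C₀, hC₀pos, hC₀⟩ := κ.decay 0 0
  obtain ⟨C₂, hC₂pos, hC₂⟩ := κ.decay 2 0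
  refine ⟨(C₀ + C₂).toNNReal, fun u => ?_⟩
  have h₀ := hC₀ u
  have h₂ := hC₂ u
  simp only [norm_iteratedFDeriv_zero, pow_zero, one_mul, Real.norm_eq_abs, sq_abs] at h₀ h₂
  rw [le_div_iff₀ (by positivity), Real.coe_toNNReal _ (by positivity)]
  linarith

lemma fourierInv_comp_mul_left {E : Type*} [NormedAddCommGroup E] [NormedSpace ℂ E]
    (m : ℝ → E) {a : ℝ} (ha : 0 < a) (x : ℝ) :
    𝓕⁻ (fun ξ => m (a * ξ)) x = a⁻¹ • 𝓕⁻ m (a⁻¹ * x) := by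
  rw [Real.fourierInv_eq', Real.fourierInv_eq']
  have hsub := Measure.integral_comp_mul_left
    (fun v => Complex.exp ((2 * Real.pi * inner ℝ v (a⁻¹ * x) : ℝ) * Complex.I) • m v) a
  rw [abs_of_pos (inv_pos.2 ha)] at hsub
  rw [← hsub]
  refine integral_congr_ae (.of_forall fun ξ => ?_)
  have : inner ℝ (a * ξ) (a⁻¹ * x) = inner ℝ ξ x := by
    simp only [inner, star_trivial, RCLike.re_to_real]
    field_simp
  simp only [this]

lemma hasTemperateGrowth_comp_mul_left (m : 𝓢(ℝ, ℂ)) (a : ℝ) :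
    Function.HasTemperateGrowth fun ξ : ℝ => m (a * ξ) :=
  m.hasTemperateGrowth.comp (by fun_prop)

lemma fourier_fourierMultiplierCLM_apply {M : ℝ → ℂ} (hM : M.HasTemperateGrowth) (g : 𝓢(ℝ, ℂ))
    (ξ : ℝ) : 𝓕 (SchwartzMap.fourierMultiplierCLM ℂ M g) ξ = M ξ * 𝓕 g ξ := by
  rw [SchwartzMap.fourierMultiplierCLM_apply, FourierInvPair.fourier_fourierInv_eq,
    SchwartzMap.smulLeftCLM_apply_apply hM, smul_eq_mul]

lemma fourier_derivCLM_apply (g : 𝓢(ℝ, ℂ)) (ξ : ℝ) :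
    𝓕 (SchwartzMap.derivCLM ℂ ℂ g) ξ = 2 * Real.pi * Complex.I * ξ * 𝓕 g ξ := by
  have hderiv : ⇑(SchwartzMap.derivCLM ℂ ℂ g) = deriv g :=
    funext fun x => SchwartzMap.derivCLM_apply ℂ g x
  rw [SchwartzMap.fourier_coe, hderiv, Real.fourier_deriv g.integrable g.differentiable
    (hderiv ▸ SchwartzMap.integrable _), SchwartzMap.fourier_coe]
  rfl

lemma fourierMultiplierCLM_comp_mul_left_apply (m g : 𝓢(ℝ, ℂ)) {a : ℝ} (ha : 0 < a) (x : ℝ) :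
    SchwartzMap.fourierMultiplierCLM ℂ (fun ξ => m (a * ξ)) g x =
      ∫ y, g y * (a⁻¹ • 𝓕⁻ m (a⁻¹ * (x - y))) := by
  set M : 𝓢(ℝ, ℂ) := SchwartzMap.compCLMOfContinuousLinearEquiv ℂ
    (ContinuousLinearEquiv.unitsEquivAut ℝ (Units.mk0 a ha.ne')) m
  have hM : ∀ ξ, M ξ = m (a * ξ) := fun ξ => by
    simp [M, mul_comm]
  have hconv : SchwartzMap.fourierMultiplierCLM ℂ (fun ξ => m (a * ξ)) g =
      SchwartzMap.convolution (ContinuousLinearMap.mul ℂ ℂ) g (𝓕⁻ M) := by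
    apply (FourierTransform.fourierEquiv ℂ 𝓢(ℝ, ℂ)).injective
    ext ξ
    simp only [FourierTransform.fourierEquiv_apply]
    rw [fourier_fourierMultiplierCLM_apply (hasTemperateGrowth_comp_mul_left m a),
      SchwartzMap.fourier_convolution, SchwartzMap.pairing_apply_apply,
      FourierInvPair.fourier_fourierInv_eq,
      ContinuousLinearMap.mul_apply', hM, mul_comm]
  have hMcoe : ⇑M = fun ξ => m (a * ξ) := funext hM
  rw [hconv, SchwartzMap.convolution_apply]
  simp only [MeasureTheory.convolution, ContinuousLinearMap.mul_apply', SchwartzMap.fourierInv_coe,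
    hMcoe, fourierInv_comp_mul_left _ ha]

lemma exists_enorm_fourierMultiplierCLM_le (m : 𝓢(ℝ, ℂ)) : ∃ C : ℝ≥0, ∀ (g : 𝓢(ℝ, ℂ)) (j : ℤ) x,
    ‖SchwartzMap.fourierMultiplierCLM ℂ (fun ξ => m ((2 : ℝ) ^ (-j) * ξ)) g x‖ₑ ≤
      C * poissonAverage j (fun y => ‖g y‖ₑ) x := by
  obtain ⟨C, hC⟩ := exists_norm_le_div_one_add_sq (𝓕⁻ m)
  refine ⟨C, fun g j x => ?_⟩
  rw [fourierMultiplierCLM_comp_mul_left_apply m g (by positivity), poissonAverage,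
    ← lintegral_const_mul' _ _ coe_ne_top]
  refine (enorm_integral_le_lintegral_enorm _).trans (lintegral_mono fun y => ?_)
  have hkernel : ‖((2 : ℝ) ^ (-j))⁻¹ • (𝓕⁻ m : 𝓢(ℝ, ℂ)) (((2 : ℝ) ^ (-j))⁻¹ * (x - y))‖ₑ ≤
      C * dyadicPoissonKernel j x y := by
    rw [← ofReal_norm, norm_smul, Real.norm_of_nonneg (by positivity), zpow_neg, inv_inv,
      dyadicPoissonKernel, ← ENNReal.ofReal_coe_nnreal,
      ← ENNReal.ofReal_mul (by positivity)]
    refine ENNReal.ofReal_le_ofReal ?_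
    calc (2 : ℝ) ^ j * ‖(𝓕⁻ m) ((2 : ℝ) ^ j * (x - y))‖
        ≤ (2 : ℝ) ^ j * (C / (1 + ((2 : ℝ) ^ j * (x - y)) ^ 2)) := by gcongr; exact hC _
      _ = C * ((2 : ℝ) ^ j / (1 + ((2 : ℝ) ^ j * (x - y)) ^ 2)) := by ring
  calc ‖g y * _‖ₑ = ‖g y‖ₑ * _ := enorm_mul _ _
    _ ≤ ‖g y‖ₑ * (C * dyadicPoissonKernel j x y) := by gcongr
    _ = C * (dyadicPoissonKernel j x y * ‖g y‖ₑ) := by ring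

lemma exists_contDiff_annulus_cutoff {a : ℝ} (ha : 0 < a) (b : ℝ) :
    ∃ χ : ℝ → ℂ, ContDiff ℝ ∞ χ ∧ HasCompactSupport χ ∧ χ =ᶠ[nhds 0] 0 ∧
      ∀ u, a < |u| → |u| < b → χ u = 1 := by
  let outer : ContDiffBump (0 : ℝ) := ⟨|b| + 1, |b| + 2, by positivity, by linarith⟩
  let inner : ContDiffBump (0 : ℝ) := ⟨a / 2, a, by positivity, by linarith⟩
  refine ⟨fun u => ((outer u * (1 - inner u) : ℝ) : ℂ),
    Complex.ofRealCLM.contDiff.comp (outer.contDiff.mul (contDiff_const.sub inner.contDiff)),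
    outer.hasCompactSupport.mul_right.comp_left Complex.ofReal_zero, ?_, fun u hau hub => ?_⟩
  · filter_upwards [inner.eventuallyEq_one] with v hv
    simp [hv]
  · have houter : outer u = 1 := outer.one_of_mem_closedBall <| by
      simp only [outer, Metric.mem_closedBall, Real.dist_eq, sub_zero]
      linarith [le_abs_self b]
    have hinner : inner u = 0 := inner.zero_of_le_dist <| by
      simpa [inner, Real.dist_eq] using hau.le
    simp [houter, hinner]

lemma exists_schwartzMap_eq_on_annulus {M : ℝ → ℂ} (hM : ∀ u ≠ 0, ContDiffAt ℝ ∞ M u) {a : ℝ}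
    (ha : 0 < a) (b : ℝ) : ∃ m : 𝓢(ℝ, ℂ), ∀ u, a < |u| → |u| < b → m u = M u := by
  obtain ⟨χ, hχ, hχsupp, hχzero, hχone⟩ := exists_contDiff_annulus_cutoff ha b
  have hsmooth : ContDiff ℝ ∞ fun u => χ u * M u := contDiff_iff_contDiffAt.2 fun u => by
    rcases eq_or_ne u 0 with rfl | hu
    · refine (contDiffAt_const (c := 0)).congr_of_eventuallyEq ?_
      filter_upwards [hχzero] with v hv
      simp [hv]
    · exact hχ.contDiffAt.mul (hM u hu)
  refine ⟨hχsupp.mul_right.toSchwartzMap hsmooth, fun u hau hub => ?_⟩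
  change χ u * M u = M u
  rw [hχone u hau hub, one_mul]

lemma contDiffAt_two_pi_I_mul (u : ℝ) :
    ContDiffAt ℝ ∞ (fun u : ℝ => 2 * Real.pi * Complex.I * u) u :=
  (contDiff_const.mul Complex.ofRealCLM.contDiff).contDiffAt

variable {b : ℝ} {g : ℤ → 𝓢(ℝ, ℂ)}

lemma IsContLPFamily.rescaled_frequency_mem (hg : IsContLPFamily b g) {j : ℤ} {ξ : ℝ}
    (hξ : 𝓕 (g j) ξ ≠ 0) :
    (2 : ℝ) ^ (-b) < |(2 : ℝ) ^ (-j) * ξ| ∧ |(2 : ℝ) ^ (-j) * ξ| < (2 : ℝ) ^ b := by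
  obtain ⟨hlower, hupper⟩ := hg j ξ (by rwa [← SchwartzMap.fourier_coe])
  rw [sub_eq_add_neg, Real.rpow_add two_pos, Real.rpow_intCast] at hlower
  rw [Real.rpow_add two_pos, Real.rpow_intCast] at hupper
  have h2j : (0 : ℝ) < 2 ^ j := by positivity
  rw [abs_mul, abs_of_pos (by positivity), zpow_neg, inv_mul_eq_div, lt_div_iff₀' h2j,
    div_lt_iff₀' h2j]
  exact ⟨hlower, hupper⟩

/- Both `ξ` and `1 / ξ` agree with Schwartz functions on an annulus, so differentiating and
integrating a band-limited function amount to convolving it with rapidly decreasing kernels. -/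
lemma exists_enorm_deriv_le (b : ℝ) : ∃ C : ℝ≥0, ∀ g : ℤ → 𝓢(ℝ, ℂ), IsContLPFamily b g → ∀ j x,
    ‖deriv (g j) x‖ₑ ≤ C * ENNReal.ofReal (2 ^ j) * poissonAverage j (fun y => ‖g j y‖ₑ) x := by
  obtain ⟨m, hm⟩ := exists_schwartzMap_eq_on_annulus (fun u _ => contDiffAt_two_pi_I_mul u)
    (show (0 : ℝ) < 2 ^ (-b) by positivity) (2 ^ b)
  obtain ⟨C, hC⟩ := exists_enorm_fourierMultiplierCLM_le m
  refine ⟨C, fun g hg j x => ?_⟩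
  have hderiv : SchwartzMap.derivCLM ℂ ℂ (g j) = ((2 : ℝ) ^ j) •
      SchwartzMap.fourierMultiplierCLM ℂ (fun ξ => m ((2 : ℝ) ^ (-j) * ξ)) (g j) := by
    apply (FourierTransform.fourierEquiv ℂ 𝓢(ℝ, ℂ)).injective
    ext ξ
    rw [FourierTransform.fourierEquiv_apply, FourierTransform.fourierEquiv_apply,
      FourierTransform.fourier_smul, smul_apply, fourier_derivCLM_apply,
      fourier_fourierMultiplierCLM_apply (hasTemperateGrowth_comp_mul_left m _)]
    by_cases hξ : 𝓕 (g j) ξ = 0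
    · simp [hξ]
    · obtain ⟨hlower, hupper⟩ := hg.rescaled_frequency_mem hξ
      rw [hm _ hlower hupper, Complex.real_smul, zpow_neg]
      push_cast
      field_simp
  rw [← SchwartzMap.derivCLM_apply ℂ, hderiv, smul_apply, enorm_smul,
    Real.enorm_of_nonneg (by positivity)]
  calc _ ≤ ENNReal.ofReal (2 ^ j) * (C * poissonAverage j (fun y => ‖g j y‖ₑ) x) := by
        gcongr; exact hC _ _ _
    _ = _ := by ring

lemma intervalIntegral_eq_smul_sub_of_eq_smul_derivCLM {f φ : 𝓢(ℝ, ℂ)} {c : ℝ}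
    (h : f = c • SchwartzMap.derivCLM ℂ ℂ φ) (x y : ℝ) :
    ∫ z in x..y, f z = c • (φ y - φ x) := by
  have hderiv : deriv φ = SchwartzMap.derivCLM ℂ ℂ φ :=
    funext fun z => (SchwartzMap.derivCLM_apply ℂ φ z).symm
  rw [← intervalIntegral.integral_deriv_eq_sub' φ hderiv (fun z _ => φ.differentiableAt)
    (SchwartzMap.continuous _).continuousOn, ← intervalIntegral.integral_smul]
  simp only [h, smul_apply]

lemma exists_enorm_intervalIntegral_le (b : ℝ) : ∃ C : ℝ≥0, ∀ g : ℤ → 𝓢(ℝ, ℂ),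
    IsContLPFamily b g → ∀ j x y, ‖∫ z in x..y, g j z‖ₑ ≤ C * ENNReal.ofReal (2 ^ (-j)) *
      (poissonAverage j (fun z => ‖g j z‖ₑ) x + poissonAverage j (fun z => ‖g j z‖ₑ) y) := by
  obtain ⟨m, hm⟩ := exists_schwartzMap_eq_on_annulus
    (M := fun u => (2 * Real.pi * Complex.I * u)⁻¹)
    (fun u hu => (contDiffAt_two_pi_I_mul u).inv
      (mul_ne_zero Complex.two_pi_I_ne_zero (Complex.ofReal_ne_zero.2 hu)))
    (show (0 : ℝ) < 2 ^ (-b) by positivity) (2 ^ b)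
  obtain ⟨C, hC⟩ := exists_enorm_fourierMultiplierCLM_le m
  refine ⟨C, fun g hg j x y => ?_⟩
  set φ := SchwartzMap.fourierMultiplierCLM ℂ (fun ξ => m ((2 : ℝ) ^ (-j) * ξ)) (g j)
  have hderiv : g j = ((2 : ℝ) ^ (-j)) • SchwartzMap.derivCLM ℂ ℂ φ := by
    apply (FourierTransform.fourierEquiv ℂ 𝓢(ℝ, ℂ)).injective
    ext ξ
    rw [FourierTransform.fourierEquiv_apply, FourierTransform.fourierEquiv_apply,
      FourierTransform.fourier_smul, smul_apply, fourier_derivCLM_apply,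
      fourier_fourierMultiplierCLM_apply (hasTemperateGrowth_comp_mul_left m _)]
    by_cases hξ : 𝓕 (g j) ξ = 0
    · simp [hξ]
    · obtain ⟨hlower, hupper⟩ := hg.rescaled_frequency_mem hξ
      have hξ0 : (ξ : ℂ) ≠ 0 := by
        rintro h
        rw [Complex.ofReal_eq_zero.1 h, mul_zero, abs_zero] at hlower
        exact absurd hlower (not_lt.2 (by positivity))
      rw [hm _ hlower hupper, Complex.real_smul]
      push_cast
      field_simp
  rw [intervalIntegral_eq_smul_sub_of_eq_smul_derivCLM hderiv, enorm_smul,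
    Real.enorm_of_nonneg (by positivity)]
  calc _ ≤ ENNReal.ofReal (2 ^ (-j)) * (‖φ y‖ₑ + ‖φ x‖ₑ) := by gcongr; exact enorm_sub_le
    _ ≤ ENNReal.ofReal (2 ^ (-j)) * (C * poissonAverage j (fun z => ‖g j z‖ₑ) y +
          C * poissonAverage j (fun z => ‖g j z‖ₑ) x) := by gcongr <;> exact hC _ _ _
    _ = _ := by ring

end BandLimited

section DyadicAveragesOfBandLimited

open scoped SchwartzMap

variable {E : Type*} [NormedAddCommGroup E] [NormedSpace ℝ E]

lemma dyadicIndex_add_one_div_sub (n : ℤ) (x : ℝ) :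
    ((dyadicIndex n x : ℝ) + 1) / 2 ^ n - (dyadicIndex n x : ℝ) / 2 ^ n = 2 ^ (-n) := by
  rw [zpow_neg]
  ring

lemma dist_le_of_mem_dyadicInterval {n : ℤ} {x y : ℝ}
    (hy : y ∈ Set.Icc ((dyadicIndex n x : ℝ) / 2 ^ n) (((dyadicIndex n x : ℝ) + 1) / 2 ^ n)) :
    dist y x ≤ 2 ^ (-n) := by
  have hlength := dyadicIndex_add_one_div_sub n x
  have hleft := dyadicIndex_div_le n x
  have hright := lt_dyadicIndex_add_one_div n x
  rw [Real.dist_eq, abs_le]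
  constructor <;> linarith [hy.1, hy.2]

lemma norm_dyadicAverage_sub_le [CompleteSpace E] {G : ℝ → E} (hG : Differentiable ℝ G) {n : ℤ}
    {x D : ℝ} (hD : ∀ z, dist z x ≤ 2 ^ (-n) → ‖deriv G z‖ ≤ D) :
    ‖dyadicAverage G n x - G x‖ ≤ 2 ^ (-n) * D := by
  have hlength := dyadicIndex_add_one_div_sub n x
  have hx := (⟨dyadicIndex_div_le n x, (lt_dyadicIndex_add_one_div n x).le⟩ :
    x ∈ Set.Icc ((dyadicIndex n x : ℝ) / 2 ^ n) (((dyadicIndex n x : ℝ) + 1) / 2 ^ n))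
  have hD0 : 0 ≤ D := (norm_nonneg _).trans (hD x (by rw [dist_self]; positivity))
  unfold dyadicAverage
  set a := (dyadicIndex n x : ℝ) / 2 ^ n
  set b := ((dyadicIndex n x : ℝ) + 1) / 2 ^ n
  have hLipschitz : ∀ y ∈ Set.uIoc a b, ‖G y - G x‖ ≤ D * 2 ^ (-n) := fun y hy => by
    rw [Set.uIoc_of_le (hx.1.trans hx.2)] at hy
    have hy' := Set.Ioc_subset_Icc_self hy
    refine ((convex_Icc a b).norm_image_sub_le_of_norm_deriv_le (fun z _ => hG z)
      (fun z hz => hD z (dist_le_of_mem_dyadicInterval hz)) hx hy').trans ?_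
    rw [← dist_eq_norm]
    gcongr
    exact dist_le_of_mem_dyadicInterval hy'
  have haverage : (2 : ℝ) ^ n • (∫ y in a..b, G y) - G x =
      (2 : ℝ) ^ n • ∫ y in a..b, G y - G x := by
    rw [intervalIntegral.integral_sub (hG.continuous.intervalIntegrable _ _)
      intervalIntegrable_const, intervalIntegral.integral_const, hlength, smul_sub, smul_smul,
      ← zpow_add₀ two_ne_zero, add_neg_cancel, zpow_zero, one_smul]
  rw [haverage, norm_smul, norm_zpow, Real.norm_ofNat]
  calc (2 : ℝ) ^ n * ‖∫ y in a..b, G y - G x‖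
      ≤ 2 ^ n * (D * 2 ^ (-n) * |b - a|) := by
        gcongr
        exact intervalIntegral.norm_integral_le_of_norm_le_const hLipschitz
    _ = 2 ^ (-n) * D := by
        rw [hlength, abs_of_pos (by positivity), zpow_neg]
        field_simp

lemma enorm_dyadicAverage_sub_le [CompleteSpace E] {G : ℝ → E} (hG : Differentiable ℝ G) {n : ℤ}
    {x : ℝ} {D : ℝ≥0∞} (hD : ∀ z, dist z x ≤ 2 ^ (-n) → ‖deriv G z‖ₑ ≤ D) :
    ‖dyadicAverage G n x - G x‖ₑ ≤ ENNReal.ofReal (2 ^ (-n)) * D := by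
  rcases eq_or_ne D ⊤ with rfl | hDtop
  · rw [mul_top (ENNReal.ofReal_pos.2 (by positivity)).ne']
    exact le_top
  · lift D to ℝ≥0 using hDtop
    rw [← ofReal_norm, ← ofReal_coe_nnreal, ← ofReal_mul (by positivity)]
    exact ofReal_le_ofReal (norm_dyadicAverage_sub_le hG fun z hz =>
      enorm_le_coe.1 (hD z hz))

lemma enorm_dyadicAverage_le {G : ℝ → E} {n : ℤ} {x : ℝ} {D : ℝ≥0∞}
    (hD : ∀ a b, dist a x ≤ 2 ^ (-n) → dist b x ≤ 2 ^ (-n) → ‖∫ y in a..b, G y‖ₑ ≤ D) :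
    ‖dyadicAverage G n x‖ₑ ≤ ENNReal.ofReal (2 ^ n) * D := by
  have hle := (dyadicIndex_div_le n x).trans (lt_dyadicIndex_add_one_div n x).le
  rw [dyadicAverage, enorm_smul, Real.enorm_of_nonneg (by positivity)]
  gcongr
  exact hD _ _ (dist_le_of_mem_dyadicInterval (Set.left_mem_Icc.2 hle))
    (dist_le_of_mem_dyadicInterval (Set.right_mem_Icc.2 hle))

/-- The `L^r` average of `h` around `x` at scale `2^{-l}`, weighted by the Poisson kernel. -/
def poissonLpAverage (r : ℝ) (l : ℤ) (h : ℝ → ℝ≥0∞) (x : ℝ) : ℝ≥0∞ :=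
  poissonAverage l (fun y => h y ^ r) x ^ r⁻¹

lemma poissonAverage_le_mul_poissonLpAverage {r : ℝ} (hr : 1 ≤ r) (l : ℤ) {h : ℝ → ℝ≥0∞}
    (hh : Measurable h) (x : ℝ) : poissonAverage l h x ≤ 16 * poissonLpAverage r l h x := by
  have hr0 : 0 < r := one_pos.trans_le hr
  rw [← ENNReal.rpow_le_rpow_iff hr0, ENNReal.mul_rpow_of_nonneg _ _ hr0.le, poissonLpAverage,
    ENNReal.rpow_inv_rpow hr0.ne']
  exact (poissonAverage_rpow_le l hr hh x).trans (mul_le_mul_left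
    (ENNReal.rpow_le_rpow_of_exponent_le (by norm_num) (by linarith)) _)

lemma poissonAverage_le_mul_poissonLpAverage_of_le {r : ℝ} (hr : 1 ≤ r) {n j : ℤ} (hnj : n ≤ j)
    {x z : ℝ} (hz : dist z x ≤ 2 ^ (-n)) {h : ℝ → ℝ≥0∞} (hh : Measurable h) :
    poissonAverage j h z ≤
      48 * (ENNReal.ofReal (2 ^ (j - n)) ^ r⁻¹ * poissonLpAverage r n h x) := by
  have hr0 : 0 ≤ r⁻¹ := by positivity
  have hcoarsen : poissonAverage j (fun y => h y ^ r) z ≤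
      3 * (ENNReal.ofReal (2 ^ (j - n)) * poissonAverage n (fun y => h y ^ r) x) :=
    calc poissonAverage j (fun y => h y ^ r) z
        ≤ ENNReal.ofReal (2 ^ (j - n)) * poissonAverage n (fun y => h y ^ r) z :=
          poissonAverage_le_mul_of_le hnj _ z
      _ ≤ ENNReal.ofReal (2 ^ (j - n)) * (3 * poissonAverage n (fun y => h y ^ r) x) := by
          gcongr; exact poissonAverage_le_mul_of_dist_le hz _
      _ = _ := by ring
  have hthree : (3 : ℝ≥0∞) ^ r⁻¹ ≤ 3 :=
    (ENNReal.rpow_le_rpow_of_exponent_le (by norm_num) (inv_le_one_of_one_le₀ hr)).trans_eq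
      (ENNReal.rpow_one 3)
  calc poissonAverage j h z ≤ 16 * poissonLpAverage r j h z :=
        poissonAverage_le_mul_poissonLpAverage hr j hh z
    _ ≤ 16 * (3 * (ENNReal.ofReal (2 ^ (j - n)) *
          poissonAverage n (fun y => h y ^ r) x)) ^ r⁻¹ := by
        unfold poissonLpAverage; gcongr
    _ ≤ 16 * (3 * (ENNReal.ofReal (2 ^ (j - n)) ^ r⁻¹ * poissonLpAverage r n h x)) := by
        rw [ENNReal.mul_rpow_of_nonneg _ _ hr0, ENNReal.mul_rpow_of_nonneg _ _ hr0,
          ← poissonLpAverage]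
        gcongr
    _ = _ := by rw [← mul_assoc]; norm_num

/-- The two-sided geometric weight `2^{-θ|k|}` on the integers. -/
def geometricWeight (θ : ℝ) (k : ℤ) : ℝ≥0∞ := ENNReal.ofReal ((2 : ℝ) ^ (-(θ * |(k : ℝ)|)))

lemma tsum_geometricWeight_ne_top {θ : ℝ} (hθ : 0 < θ) : ∑' k, geometricWeight θ k ≠ ⊤ := by
  have hgeom : Summable fun n : ℕ => ((2 : ℝ) ^ (-θ)) ^ n :=
    summable_geometric_of_lt_one (by positivity)
      (Real.rpow_lt_one_of_one_lt_of_neg one_lt_two (neg_neg_of_pos hθ))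
  have hpow : ∀ n : ℕ, ((2 : ℝ) ^ (-θ)) ^ n = 2 ^ (-(θ * n)) := fun n => by
    rw [← Real.rpow_natCast, ← Real.rpow_mul two_pos.le, neg_mul]
  have hsum : Summable fun k : ℤ => (2 : ℝ) ^ (-(θ * |(k : ℝ)|)) :=
    .of_nat_of_neg (hgeom.congr fun n => by simp [hpow]) (hgeom.congr fun n => by simp [hpow])
  unfold geometricWeight
  rw [← ENNReal.ofReal_tsum_of_nonneg (fun k => by positivity) hsum]
  exact ofReal_ne_top

/-- The error made when the dyadic average at scale `2^{-n}` of the `j`-th frequency component is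
replaced by that component itself if `j ≤ n`, and by zero if `n < j`. -/
def averagingError (g : ℤ → 𝓢(ℝ, ℂ)) (j n : ℤ) (x : ℝ) : ℝ≥0∞ :=
  ‖dyadicAverage (g j) n x - if j ≤ n then g j x else 0‖ₑ

lemma measurable_schwartz_enorm (φ : 𝓢(ℝ, ℂ)) : Measurable fun x => ‖φ x‖ₑ :=
  φ.continuous.measurable.enorm

lemma averagingError_le_of_le {g : ℤ → 𝓢(ℝ, ℂ)} {j n : ℤ} (hjn : j ≤ n) {C : ℝ≥0}
    (hderiv : ∀ x, ‖deriv (g j) x‖ₑ ≤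
      C * ENNReal.ofReal (2 ^ j) * poissonAverage j (fun y => ‖g j y‖ₑ) x)
    {r : ℝ} (hr : 1 ≤ r) (x : ℝ) :
    averagingError g j n x ≤
      48 * C * (geometricWeight (1 - r⁻¹) (j - n) *
        poissonLpAverage r j (fun y => ‖g j y‖ₑ) x) := by
  have hscale : ENNReal.ofReal (2 ^ (-n)) * ENNReal.ofReal (2 ^ j) ≤
      geometricWeight (1 - r⁻¹) (j - n) := by
    rw [← ofReal_mul (by positivity), ← zpow_add₀ two_ne_zero, ← Real.rpow_intCast]
    refine ofReal_le_ofReal (Real.rpow_le_rpow_of_exponent_le one_le_two ?_)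
    have : (j : ℝ) ≤ n := by exact_mod_cast hjn
    have : 0 ≤ r⁻¹ := by positivity
    push_cast
    rw [abs_of_nonpos (by linarith)]
    nlinarith
  have hlocal : ∀ z, dist z x ≤ 2 ^ (-n) → ‖deriv (g j) z‖ₑ ≤
      C * ENNReal.ofReal (2 ^ j) * (3 * poissonAverage j (fun y => ‖g j y‖ₑ) x) := fun z hz => by
    refine (hderiv z).trans ?_
    gcongr
    exact poissonAverage_le_mul_of_dist_le
      (hz.trans (zpow_le_zpow_right₀ one_le_two (neg_le_neg hjn))) _
  rw [averagingError, if_pos hjn]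
  calc ‖dyadicAverage (g j) n x - g j x‖ₑ
      ≤ ENNReal.ofReal (2 ^ (-n)) *
          (C * ENNReal.ofReal (2 ^ j) * (3 * poissonAverage j (fun y => ‖g j y‖ₑ) x)) :=
        enorm_dyadicAverage_sub_le (g j).differentiable hlocal
    _ = 3 * C * (ENNReal.ofReal (2 ^ (-n)) * ENNReal.ofReal (2 ^ j)) *
          poissonAverage j (fun y => ‖g j y‖ₑ) x := by ring
    _ ≤ 3 * C * geometricWeight (1 - r⁻¹) (j - n) *
          (16 * poissonLpAverage r j (fun y => ‖g j y‖ₑ) x) := by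
        gcongr
        exact poissonAverage_le_mul_poissonLpAverage hr j (measurable_schwartz_enorm _) x
    _ = 3 * 16 * C * (geometricWeight (1 - r⁻¹) (j - n) *
          poissonLpAverage r j (fun y => ‖g j y‖ₑ) x) := by ring
    _ = _ := by norm_num

lemma averagingError_le_of_lt {g : ℤ → 𝓢(ℝ, ℂ)} {j n : ℤ} (hnj : n < j) {C : ℝ≥0}
    (hintegral : ∀ x y, ‖∫ z in x..y, g j z‖ₑ ≤ C * ENNReal.ofReal (2 ^ (-j)) *
      (poissonAverage j (fun z => ‖g j z‖ₑ) x + poissonAverage j (fun z => ‖g j z‖ₑ) y))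
    {r : ℝ} (hr : 1 ≤ r) (x : ℝ) :
    averagingError g j n x ≤
      96 * C * (geometricWeight (1 - r⁻¹) (j - n) *
        poissonLpAverage r n (fun y => ‖g j y‖ₑ) x) := by
  have hscale : ENNReal.ofReal (2 ^ n) * ENNReal.ofReal (2 ^ (-j)) *
      ENNReal.ofReal (2 ^ (j - n)) ^ r⁻¹ = geometricWeight (1 - r⁻¹) (j - n) := by
    rw [← ofReal_mul (by positivity), ofReal_rpow_of_pos (by positivity),
      ← ofReal_mul (by positivity), ← zpow_add₀ two_ne_zero, ← Real.rpow_intCast,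
      ← Real.rpow_intCast, ← Real.rpow_mul two_pos.le, ← Real.rpow_add two_pos, geometricWeight]
    have : (n : ℝ) < j := by exact_mod_cast hnj
    push_cast
    rw [abs_of_pos (by linarith)]
    congr 2
    ring
  set A := ENNReal.ofReal (2 ^ (j - n)) ^ r⁻¹ * poissonLpAverage r n (fun y => ‖g j y‖ₑ) x with hA
  have hlocal : ∀ a b, dist a x ≤ 2 ^ (-n) → dist b x ≤ 2 ^ (-n) →
      ‖∫ z in a..b, g j z‖ₑ ≤ C * ENNReal.ofReal (2 ^ (-j)) * (48 * A + 48 * A) :=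
    fun a b ha hb => by
    refine (hintegral a b).trans ?_
    gcongr <;> exact poissonAverage_le_mul_poissonLpAverage_of_le hr hnj.le ‹_›
      (measurable_schwartz_enorm _)
  rw [averagingError, if_neg hnj.not_ge, sub_zero]
  calc ‖dyadicAverage (g j) n x‖ₑ
      ≤ ENNReal.ofReal (2 ^ n) * (C * ENNReal.ofReal (2 ^ (-j)) * (48 * A + 48 * A)) :=
        enorm_dyadicAverage_le hlocal
    _ = (48 + 48) * C * (ENNReal.ofReal (2 ^ n) * ENNReal.ofReal (2 ^ (-j)) *
          ENNReal.ofReal (2 ^ (j - n)) ^ r⁻¹ *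
          poissonLpAverage r n (fun y => ‖g j y‖ₑ) x) := by rw [hA]; ring
    _ = _ := by rw [hscale]; norm_num

lemma exists_averagingError_le (b : ℝ) {r : ℝ} (hr : 1 ≤ r) : ∃ C : ℝ≥0, ∀ g : ℤ → 𝓢(ℝ, ℂ),
    IsContLPFamily b g → ∀ j n x, averagingError g j n x ≤
      C * (geometricWeight (1 - r⁻¹) (j - n) *
        poissonLpAverage r (min j n) (fun y => ‖g j y‖ₑ) x) := by
  obtain ⟨C₁, hC₁⟩ := exists_enorm_deriv_le b
  obtain ⟨C₂, hC₂⟩ := exists_enorm_intervalIntegral_le b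
  refine ⟨48 * C₁ + 96 * C₂, fun g hg j n x => ?_⟩
  push_cast
  rcases le_or_gt j n with hjn | hnj
  · rw [min_eq_left hjn]
    refine (averagingError_le_of_le hjn (hC₁ g hg j) hr x).trans ?_
    gcongr
    exact le_self_add
  · rw [min_eq_right hnj.le]
    refine (averagingError_le_of_lt hnj (hC₂ g hg j) hr x).trans ?_
    gcongr
    exact le_add_self

end DyadicAveragesOfBandLimited

section Comparison

open scoped SchwartzMap

lemma sum_mul_sq_le_sum_mul_sum_mul_sq {ι : Type*} (t : Finset ι) (w a : ι → ℝ≥0∞) :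
    (∑ i ∈ t, w i * a i) ^ 2 ≤ (∑ i ∈ t, w i) * ∑ i ∈ t, w i * a i ^ 2 := by
  have hroot := ENNReal.inner_le_weight_mul_Lp_of_nonneg t one_le_two w a
  rw [show (1 : ℝ) - 2⁻¹ = 2⁻¹ by norm_num, ← ENNReal.mul_rpow_of_nonneg _ _ (by norm_num),
    ENNReal.le_rpow_inv_iff two_pos] at hroot
  simpa only [ENNReal.rpow_two] using hroot

lemma sum_geometricWeight_sub_le (θ : ℝ) (t : Finset ℤ) (n : ℤ) :
    ∑ j ∈ t, geometricWeight θ (j - n) ≤ ∑' k, geometricWeight θ k :=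
  (ENNReal.sum_le_tsum t).trans_eq ((Equiv.subRight n).tsum_eq _)

lemma sum_geometricWeight_sub_le' (θ : ℝ) (t : Finset ℤ) (j : ℤ) :
    ∑ n ∈ t, geometricWeight θ (j - n) ≤ ∑' k, geometricWeight θ k :=
  (ENNReal.sum_le_tsum t).trans_eq ((Equiv.subLeft j).tsum_eq _)

lemma poissonAverage_const_mul (l : ℤ) {c : ℝ≥0∞} (hc : c ≠ ⊤) (h : ℝ → ℝ≥0∞) (x : ℝ) :
    poissonAverage l (fun y => c * h y) x = c * poissonAverage l h x := by
  unfold poissonAverage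
  rw [← lintegral_const_mul' _ _ hc]
  simp only [mul_left_comm]

lemma weight_mul_poissonLpAverage_sq {r : ℝ} (hr : 0 < r) {c : ℝ≥0∞} (hc : c ≠ ⊤) (l : ℤ)
    (h : ℝ → ℝ≥0∞) (x : ℝ) : c * poissonLpAverage r l h x ^ 2 =
      poissonAverage l (fun y => c ^ (r / 2) * h y ^ r) x ^ (2 / r) := by
  have hr2 : 0 ≤ 2 / r := by positivity
  rw [poissonAverage_const_mul l (ENNReal.rpow_ne_top_of_nonneg (by positivity) hc),
    ENNReal.mul_rpow_of_nonneg _ _ hr2, ← ENNReal.rpow_mul, div_mul_div_cancel₀ two_ne_zero,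
    div_self hr.ne', ENNReal.rpow_one, poissonLpAverage, ← ENNReal.rpow_natCast,
    ← ENNReal.rpow_mul, Nat.cast_ofNat, inv_mul_eq_div]

lemma sum_sum_averagingError_sq_le {g : ℤ → 𝓢(ℝ, ℂ)} {r θ : ℝ} (hr : 0 < r) {C : ℝ≥0} {x : ℝ}
    (hC : ∀ j n, averagingError g j n x ≤ C * (geometricWeight θ (j - n) *
      poissonLpAverage r (min j n) (fun y => ‖g j y‖ₑ) x)) (S J : Finset ℤ) :
    ∑ n ∈ S, (∑ j ∈ J, averagingError g j n x) ^ 2 ≤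
      C ^ 2 * (∑' k, geometricWeight θ k) * ∑ i ∈ J ×ˢ S, poissonAverage (min i.1 i.2)
        (fun y => geometricWeight θ (i.1 - i.2) ^ (r / 2) * ‖g i.1 y‖ₑ ^ r) x ^ (2 / r) := by
  have hterm : ∀ i : ℤ × ℤ, poissonAverage (min i.1 i.2)
      (fun y => geometricWeight θ (i.1 - i.2) ^ (r / 2) * ‖g i.1 y‖ₑ ^ r) x ^ (2 / r) =
        geometricWeight θ (i.1 - i.2) *
          poissonLpAverage r (min i.1 i.2) (fun y => ‖g i.1 y‖ₑ) x ^ 2 :=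
    fun i => (weight_mul_poissonLpAverage_sq hr ofReal_ne_top _ _ _).symm
  simp only [hterm]
  rw [Finset.sum_product_right, Finset.mul_sum]
  refine Finset.sum_le_sum fun n _ => ?_
  calc (∑ j ∈ J, averagingError g j n x) ^ 2
      ≤ (C * ∑ j ∈ J, geometricWeight θ (j - n) *
          poissonLpAverage r (min j n) (fun y => ‖g j y‖ₑ) x) ^ 2 := by
        rw [Finset.mul_sum]; gcongr; exact hC _ _
    _ ≤ C ^ 2 * ((∑' k, geometricWeight θ k) * ∑ j ∈ J, geometricWeight θ (j - n) *
          poissonLpAverage r (min j n) (fun y => ‖g j y‖ₑ) x ^ 2) := by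
        rw [mul_pow]
        gcongr
        refine (sum_mul_sq_le_sum_mul_sum_mul_sq _ _ _).trans ?_
        gcongr
        exact sum_geometricWeight_sub_le θ J n
    _ = _ := by ring

lemma sum_product_weight_mul_sq_le {g : ℤ → 𝓢(ℝ, ℂ)} {r : ℝ} (hr : 0 < r) (θ : ℝ)
    (S J : Finset ℤ) (x : ℝ) :
    ∑ i ∈ J ×ˢ S, (geometricWeight θ (i.1 - i.2) ^ (r / 2) * ‖g i.1 x‖ₑ ^ r) ^ (2 / r) ≤
      (∑' k, geometricWeight θ k) * ∑ j ∈ J, ‖g j x‖ₑ ^ 2 := by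
  rw [Finset.sum_product, Finset.mul_sum]
  refine Finset.sum_le_sum fun j _ => ?_
  calc ∑ n ∈ S, (geometricWeight θ (j - n) ^ (r / 2) * ‖g j x‖ₑ ^ r) ^ (2 / r)
      = (∑ n ∈ S, geometricWeight θ (j - n)) * ‖g j x‖ₑ ^ 2 := by
        rw [Finset.sum_mul]
        refine Finset.sum_congr rfl fun n _ => ?_
        rw [ENNReal.mul_rpow_of_nonneg _ _ (by positivity), ← ENNReal.rpow_mul,
          ← ENNReal.rpow_mul, div_mul_div_cancel₀ two_ne_zero, div_self hr.ne', ENNReal.rpow_one,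
          mul_div_cancel₀ _ hr.ne', ENNReal.rpow_two]
    _ ≤ _ := by gcongr; exact sum_geometricWeight_sub_le' θ S j

lemma exists_lintegral_sum_sum_averagingError_sq_rpow_le (b : ℝ) {q : ℝ} (hq : 1 < q) :
    ∃ C : ℝ≥0, ∀ g : ℤ → 𝓢(ℝ, ℂ), IsContLPFamily b g → ∀ S J : Finset ℤ,
      ∫⁻ x, (∑ n ∈ S, (∑ j ∈ J, averagingError g j n x) ^ 2) ^ (q / 2) ≤
        C * ∫⁻ x, (∑ j ∈ J, ‖g j x‖ₑ ^ 2) ^ (q / 2) := by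
  obtain ⟨r, hr, hr2q⟩ := exists_between (lt_min _root_.one_lt_two hq)
  obtain ⟨hr2, hrq⟩ := lt_min_iff.1 hr2q
  have hr0 : 0 < r := one_pos.trans hr
  have hq2 : 0 ≤ q / 2 := by positivity
  obtain ⟨B, hB⟩ := exists_averagingError_le b hr.le
  have hbs : 2 / r * (q / 2) = q / r := by field_simp
  obtain ⟨A, hA, hStein⟩ := exists_steinBound (ι := ℤ × ℤ) (b := 2 / r) (s := q / 2)
    ((one_lt_div hr0).2 hr2) (hbs ▸ (one_lt_div hr0).2 hrq)
  set W := ∑' k, geometricWeight (1 - r⁻¹) k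
  have hW : W ≠ ⊤ := tsum_geometricWeight_ne_top (sub_pos.2 (inv_lt_one_of_one_lt₀ hr))
  have hfinite : (B ^ 2 * W) ^ (q / 2) * A * W ^ (q / 2) ≠ ⊤ := by finiteness
  refine ⟨((B ^ 2 * W) ^ (q / 2) * A * W ^ (q / 2)).toNNReal, fun g hg S J => ?_⟩
  rw [coe_toNNReal hfinite]
  set h : ℤ × ℤ → ℝ → ℝ≥0∞ := fun i y =>
    geometricWeight (1 - r⁻¹) (i.1 - i.2) ^ (r / 2) * ‖g i.1 y‖ₑ ^ r
  have hh : ∀ i, Measurable (h i) := fun i =>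
    ((measurable_schwartz_enorm _).pow_const r).const_mul _
  calc ∫⁻ x, (∑ n ∈ S, (∑ j ∈ J, averagingError g j n x) ^ 2) ^ (q / 2)
      ≤ ∫⁻ x, (B ^ 2 * W) ^ (q / 2) *
          (∑ i ∈ J ×ˢ S, poissonAverage (min i.1 i.2) (h i) x ^ (2 / r)) ^ (q / 2) := by
        gcongr with x
        rw [← ENNReal.mul_rpow_of_nonneg _ _ hq2]
        gcongr
        exact sum_sum_averagingError_sq_le hr0 (fun j n => hB g hg j n x) S J
    _ ≤ (B ^ 2 * W) ^ (q / 2) * (A * ∫⁻ x, (∑ i ∈ J ×ˢ S, h i x ^ (2 / r)) ^ (q / 2)) := by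
        rw [lintegral_const_mul' _ _ (by finiteness)]
        gcongr
        exact hStein _ _ _ hh
    _ ≤ (B ^ 2 * W) ^ (q / 2) * (A * ∫⁻ x, W ^ (q / 2) * (∑ j ∈ J, ‖g j x‖ₑ ^ 2) ^ (q / 2)) := by
        gcongr with x
        rw [← ENNReal.mul_rpow_of_nonneg _ _ hq2]
        gcongr
        exact sum_product_weight_mul_sq_le hr0 _ S J x
    _ = _ := by
        rw [lintegral_const_mul' _ _ (by finiteness)]
        ring

end Comparison

section JumpsOverBlocks

variable {E : Type*} [NormedAddCommGroup E] {ι : Type*} [LinearOrder ι] {K K' : Finset ι}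
  {a b : ι → ℕ} {T : ℕ}

/-- The intervals `[a k, b k]`, `k ∈ K`, are disjoint, lie in `[0, T]` and succeed one another in
the order of their labels. -/
structure IsBlockFamily (K : Finset ι) (a b : ι → ℕ) (T : ℕ) : Prop where
  left_le_right : ∀ k ∈ K, a k ≤ b k
  right_le : ∀ k ∈ K, b k ≤ T
  right_lt_left : ∀ k ∈ K, ∀ l ∈ K, k < l → b k < a l

namespace IsBlockFamily

lemma mono (h : IsBlockFamily K a b T) (hK : K' ⊆ K) : IsBlockFamily K' a b T where
  left_le_right k hk := h.left_le_right k (hK hk)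
  right_le k hk := h.right_le k (hK hk)
  right_lt_left k hk l hl := h.right_lt_left k (hK hk) l (hK hl)

lemma strictMonoOn_of_mem_Icc (h : IsBlockFamily K a b T) {c : ι → ℕ}
    (hc : ∀ k ∈ K, c k ∈ Set.Icc (a k) (b k)) : StrictMonoOn c K := fun k hk l hl hkl =>
  (hc k hk).2.trans_lt ((h.right_lt_left k hk l hl hkl).trans_le (hc l hl).1)

lemma card_le_greedyCount (h : IsBlockFamily K a b T) {ν : ℝ} (hν : 0 < ν) {d : ℕ → E}
    (hjump : ∀ k ∈ K, 2 * ν ≤ ‖∑ i ∈ Finset.Ico (a k) (b k), d i‖) :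
    K.card ≤ greedyCount ν d T := by
  induction K using Finset.induction_on_max generalizing T with
  | empty => simp only [Finset.card_empty, zero_le]
  | insert m s hm ih =>
    have hmem := Finset.mem_insert_self m s
    have hsub := Finset.subset_insert m s
    have hbefore : IsBlockFamily s a b (a m) :=
      { h.mono hsub with right_le := fun k hk => (h.right_lt_left k (hsub hk) m hmem (hm k hk)).le }
    rw [Finset.card_insert_of_notMem fun hms => (hm m hms).false]
    calc s.card + 1
        ≤ greedyCount ν d (a m) + 1 := by
          gcongr
          exact ih hbefore fun k hk => hjump k (hsub hk)
      _ ≤ greedyCount ν d (b m) :=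
          greedyCount_lt_of_jump hν (h.left_le_right m hmem) (hjump m hmem)
      _ ≤ greedyCount ν d T := greedyCount_mono ν d (h.right_le m hmem)

lemma sq_mul_card_le_jumpFunctionalSq (h : IsBlockFamily K a b T) {μ : ℝ} (hμ : 0 < μ)
    {d : ℕ → E} (hjump : ∀ k ∈ K, μ ≤ ‖∑ i ∈ Finset.Ico (a k) (b k), d i‖) :
    ENNReal.ofReal (μ ^ 2) * K.card ≤ 16 * jumpFunctionalSq d T := by
  obtain ⟨m, hlt, hle⟩ := exists_two_zpow_sq_mem_Ioc (t := μ ^ 2 / 16) (by positivity)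
  have hthreshold : 2 * (2 : ℝ) ^ m ≤ μ := (sq_le_sq₀ (by positivity) hμ.le).1 (by linarith)
  have hcard := h.card_le_greedyCount (by positivity) fun k hk => hthreshold.trans (hjump k hk)
  calc ENNReal.ofReal (μ ^ 2) * K.card
      ≤ ENNReal.ofReal (16 * (2 ^ m) ^ 2) * greedyCount (2 ^ m) d T := by gcongr; linarith
    _ = 16 * ENNReal.ofReal ((2 ^ m) ^ 2 * greedyCount (2 ^ m) d T) := by
        rw [ofReal_mul (by norm_num), ofReal_mul (by positivity), ofReal_natCast, ofReal_ofNat,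
          mul_assoc]
    _ ≤ 16 * jumpFunctionalSq d T := by
        gcongr
        exact le_iSup (fun m : ℤ => ENNReal.ofReal ((2 ^ m) ^ 2 * greedyCount (2 ^ m) d T)) m

lemma sq_mul_card_le_sum_enorm_sq (h : IsBlockFamily K a b T) {μ : ℝ} (hμ : 0 ≤ μ) {A : ℕ → E}
    (hA : ∀ k ∈ K, μ ≤ ‖A (a k)‖ ∨ μ ≤ ‖A (b k)‖) :
    ENNReal.ofReal (μ ^ 2) * K.card ≤ ∑ n ∈ Finset.range (T + 1), ‖A n‖ₑ ^ 2 := by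
  classical
  set c : ι → ℕ := fun k => if μ ≤ ‖A (a k)‖ then a k else b k
  have hlarge : ∀ k ∈ K, μ ≤ ‖A (c k)‖ := fun k hk => by
    rcases em (μ ≤ ‖A (a k)‖) with hleft | hleft
    · simpa only [c, if_pos hleft] using hleft
    · simpa only [c, if_neg hleft] using (hA k hk).resolve_left hleft
  have hc : ∀ k ∈ K, c k ∈ Set.Icc (a k) (b k) := fun k hk => by
    have hle := h.left_le_right k hk
    simp only [c]
    split_ifs
    exacts [Set.left_mem_Icc.2 hle, Set.right_mem_Icc.2 hle]
  have himage : K.image c ⊆ Finset.range (T + 1) := Finset.image_subset_iff.2 fun k hk =>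
    Finset.mem_range_succ_iff.2 ((hc k hk).2.trans (h.right_le k hk))
  calc ENNReal.ofReal (μ ^ 2) * K.card
      = ∑ k ∈ K, ENNReal.ofReal μ ^ 2 := by
        rw [Finset.sum_const, nsmul_eq_mul, mul_comm, ofReal_pow hμ]
    _ ≤ ∑ k ∈ K, ‖A (c k)‖ₑ ^ 2 := by
        gcongr with k hk
        rw [← ofReal_norm]
        exact ofReal_le_ofReal (hlarge k hk)
    _ = ∑ n ∈ K.image c, ‖A n‖ₑ ^ 2 :=
        (Finset.sum_image (f := fun n => ‖A n‖ₑ ^ 2) (h.strictMonoOn_of_mem_Icc hc).injOn).symm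
    _ ≤ ∑ n ∈ Finset.range (T + 1), ‖A n‖ₑ ^ 2 := Finset.sum_le_sum_of_subset himage

-- A `μ`-jump of `S` is a `μ/2`-jump of `M` unless `M - S` exceeds `μ/4` at one of its ends.
lemma sq_mul_card_le_jumpFunctionalSq_add (h : IsBlockFamily K a b T) {μ : ℝ}
    (hμ : 0 < μ) (M : ℕ → E) {S : ℕ → E} (hjump : ∀ k ∈ K, μ < ‖S (b k) - S (a k)‖) :
    ENNReal.ofReal (μ ^ 2) * K.card ≤ 64 * jumpFunctionalSq (fun n => M (n + 1) - M n) T +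
      16 * ∑ n ∈ Finset.range (T + 1), ‖M n - S n‖ₑ ^ 2 := by
  classical
  set P : ι → Prop := fun k => μ / 2 ≤ ‖M (b k) - M (a k)‖
  have hsplit := Finset.card_filter_add_card_filter_not (s := K) P
  have hmartingale := (h.mono (Finset.filter_subset P K)).sq_mul_card_le_jumpFunctionalSq
    (half_pos hμ) (d := fun n => M (n + 1) - M n) fun k hk => by
      obtain ⟨hkK, hk⟩ := Finset.mem_filter.1 hk
      rwa [Finset.sum_Ico_sub M (h.left_le_right k hkK)]
  have herror := (h.mono (Finset.filter_subset (¬ P ·) K)).sq_mul_card_le_sum_enorm_sq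
    (A := fun n => M n - S n) (μ := μ / 4) (by positivity) fun k hk => by
      obtain ⟨hkK, hk⟩ := Finset.mem_filter.1 hk
      by_contra! hsmall
      have hdecomp : S (b k) - S (a k) =
          (M (b k) - M (a k)) - (M (b k) - S (b k)) + (M (a k) - S (a k)) := by abel
      have htriangle := (hdecomp ▸ hjump k hkK).trans_le
        ((norm_add_le _ _).trans (add_le_add_left (norm_sub_le _ _) _))
      linarith [not_le.1 hk, hsmall.1, hsmall.2]
  calc ENNReal.ofReal (μ ^ 2) * K.card
      = 4 * (ENNReal.ofReal ((μ / 2) ^ 2) * (K.filter P).card) +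
          16 * (ENNReal.ofReal ((μ / 4) ^ 2) * (K.filter (¬ P ·)).card) := by
        rw [← hsplit, Nat.cast_add, mul_add, ← mul_assoc, ← mul_assoc, ← ofReal_ofNat 4,
          ← ofReal_ofNat 16, ← ofReal_mul (by norm_num), ← ofReal_mul (by norm_num)]
        ring_nf
    _ ≤ 4 * (16 * jumpFunctionalSq (fun n => M (n + 1) - M n) T) +
          16 * ∑ n ∈ Finset.range (T + 1), ‖M n - S n‖ₑ ^ 2 := by gcongr
    _ = _ := by ring

end IsBlockFamily

end JumpsOverBlocks

section TruncatedParaproduct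

variable {ι R : Type*} [LinearOrder ι] [LocallyFiniteOrder ι]

/-- The paraproduct `∑_{a < i < j ≤ b} f_i g_j` whose frequencies are restricted to one block of
a jump collection. -/
def truncatedParaproduct [NonUnitalNonAssocSemiring R] (f g : ι → R) (a b : ι) : R :=
  ∑ j ∈ Finset.Ioc a b, ∑ i ∈ Finset.Ioo a j, f i * g j

lemma truncatedParaproduct_eq_sum_mul_sum [NonUnitalNonAssocSemiring R] (f g : ι → R) (a b : ι) :
    truncatedParaproduct f g a b = ∑ i ∈ Finset.Ioo a b, f i * ∑ j ∈ Finset.Ioc i b, g j := by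
  simp only [truncatedParaproduct, Finset.mul_sum]
  refine Finset.sum_comm' fun j i => ?_
  simp only [Finset.mem_Ioc, Finset.mem_Ioo]
  exact ⟨fun h => ⟨⟨h.2.2, h.1.2⟩, h.2.1, h.2.2.trans_le h.1.2⟩,
    fun h => ⟨⟨h.2.1.trans h.1.1, h.1.2⟩, h.2.1, h.1.1⟩⟩

lemma exists_lt_sum_norm_mul_norm_sum [NonUnitalSeminormedRing R] {f g : ι → R} {a b : ι} {lam : ℝ}
    (hlam : 0 ≤ lam) (hlarge : lam < ‖truncatedParaproduct f g a b‖) :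
    ∃ i ∈ Finset.Ioo a b,
      lam < (∑ l ∈ Finset.Ioo a b, ‖f l‖) * ‖∑ j ∈ Finset.Ioc i b, g j‖ := by
  rw [truncatedParaproduct_eq_sum_mul_sum] at hlarge
  have hne : (Finset.Ioo a b).Nonempty := by
    by_contra! hempty
    rw [hempty, Finset.sum_empty, norm_zero] at hlarge
    exact hlarge.not_ge hlam
  obtain ⟨i, hi, hmax⟩ := Finset.exists_max_image _ (fun i => ‖∑ j ∈ Finset.Ioc i b, g j‖) hne
  refine ⟨i, hi, hlarge.trans_le ?_⟩
  rw [Finset.sum_mul]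
  exact norm_sum_le_of_le _ fun l hl => (norm_mul_le _ _).trans (by gcongr; exact hmax l hl)

lemma card_le_two_mul_card_filter {κ : Type*} {K : Finset κ} {A : κ → ℝ} (hA : ∀ k ∈ K, 0 ≤ A k) :
    K.card ≤ 2 * (K.filter fun k => K.card * A k ≤ 2 * ∑ l ∈ K, A l).card := by
  set P : κ → Prop := fun k => K.card * A k ≤ 2 * ∑ l ∈ K, A l
  change K.card ≤ 2 * (K.filter P).card
  have hsplit := Finset.card_filter_add_card_filter_not (s := K) P
  rcases (K.filter (¬ P ·)).eq_empty_or_nonempty with hempty | hne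
  · rw [hempty, Finset.card_empty] at hsplit
    omega
  · have hsum : (K.filter (¬ P ·)).card * (2 * ∑ l ∈ K, A l) < K.card * ∑ l ∈ K, A l := by
      calc (K.filter (¬ P ·)).card * (2 * ∑ l ∈ K, A l)
          = ∑ k ∈ K.filter (¬ P ·), 2 * ∑ l ∈ K, A l := by rw [Finset.sum_const, nsmul_eq_mul]
        _ < ∑ k ∈ K.filter (¬ P ·), K.card * A k :=
            Finset.sum_lt_sum_of_nonempty hne fun k hk => not_le.1 (Finset.mem_filter.1 hk).2
        _ ≤ K.card * ∑ l ∈ K, A l := by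
            rw [← Finset.mul_sum]
            gcongr
            exacts [fun k hk _ => hA k hk, Finset.filter_subset _ _]
    have hfew : ((2 * (K.filter (¬ P ·)).card : ℕ) : ℝ) < K.card := by
      refine lt_of_mul_lt_mul_right ?_ (Finset.sum_nonneg hA)
      rw [Nat.cast_mul, Nat.cast_ofNat]
      linarith
    have := Nat.cast_lt.1 hfew
    omega

-- By Chebyshev's inequality the mass of `f` on at least half of the blocks is at most twice its
-- average over the blocks.
lemma exists_subset_forall_exists_lt_norm_sum [NonUnitalSeminormedRing R] {κ : Type*}
    {f g : ι → R} {K : Finset κ} {a b : κ → ι} {lam : ℝ} (hlam : 0 ≤ lam)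
    (hlarge : ∀ k ∈ K, lam < ‖truncatedParaproduct f g (a k) (b k)‖) :
    ∃ K' ⊆ K, K.card ≤ 2 * K'.card ∧ ∀ k ∈ K', ∃ i ∈ Finset.Ioo (a k) (b k),
      lam * K.card < 2 * (∑ k ∈ K, ∑ l ∈ Finset.Ioo (a k) (b k), ‖f l‖) *
        ‖∑ j ∈ Finset.Ioc i (b k), g j‖ := by
  set A : κ → ℝ := fun k => ∑ l ∈ Finset.Ioo (a k) (b k), ‖f l‖
  refine ⟨K.filter fun k => K.card * A k ≤ 2 * ∑ l ∈ K, A l, Finset.filter_subset _ _,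
    card_le_two_mul_card_filter fun k _ => Finset.sum_nonneg fun _ _ => norm_nonneg _,
    fun k hk => ?_⟩
  obtain ⟨hkK, hmass⟩ := Finset.mem_filter.1 hk
  obtain ⟨i, hi, hjump⟩ := exists_lt_sum_norm_mul_norm_sum hlam (hlarge k hkK)
  have hcard : (0 : ℝ) < K.card := Nat.cast_pos.2 (Finset.card_pos.2 ⟨k, hkK⟩)
  refine ⟨i, hi, ?_⟩
  calc lam * K.card < A k * ‖∑ j ∈ Finset.Ioc i (b k), g j‖ * K.card := by gcongr
    _ = K.card * A k * ‖∑ j ∈ Finset.Ioc i (b k), g j‖ := by ring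
    _ ≤ 2 * (∑ l ∈ K, A l) * ‖∑ j ∈ Finset.Ioc i (b k), g j‖ := by gcongr

lemma sum_sum_Ioo_le_tsum {N : ℕ → ι} (hN : Monotone N) (K : Finset ℕ) (φ : ι → ℝ≥0∞) :
    ∑ k ∈ K, ∑ i ∈ Finset.Ioo (N k) (N (k + 1)), φ i ≤ ∑' i, φ i := by
  rw [← Finset.sum_biUnion fun k _ l _ hkl => ?_]
  · exact ENNReal.sum_le_tsum _
  · rw [Function.onFun, ← Finset.disjoint_coe, Finset.coe_Ioo, Finset.coe_Ioo]
    exact hN.pairwise_disjoint_on_Ioo_succ hkl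

end TruncatedParaproduct

section JumpMajorant

open scoped SchwartzMap

lemma enorm_sub_add_sq_le {E : Type*} [NormedAddCommGroup E] (u v w : E) :
    ‖u - v + w‖ₑ ^ 2 ≤ 4 * ‖u‖ₑ ^ 2 + 4 * ‖v‖ₑ ^ 2 + 2 * ‖w‖ₑ ^ 2 := by
  have hsq : ∀ s t : ℝ≥0∞, (s + t) ^ 2 ≤ 2 * (s ^ 2 + t ^ 2) := fun s t => by
    have h := ENNReal.rpow_add_le_mul_rpow_add_rpow s t one_le_two
    norm_num at h
    exact h
  calc ‖u - v + w‖ₑ ^ 2 ≤ ((‖u‖ₑ + ‖v‖ₑ) + ‖w‖ₑ) ^ 2 := by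
        gcongr
        exact (enorm_add_le _ _).trans (add_le_add_left enorm_sub_le _)
    _ ≤ 2 * (2 * (‖u‖ₑ ^ 2 + ‖v‖ₑ ^ 2) + ‖w‖ₑ ^ 2) := (hsq _ _).trans (by gcongr; exact hsq _ _)
    _ = _ := by ring

lemma sum_enorm_increment_sq_le {E : Type*} [NormedAddCommGroup E] (M S : ℕ → E) (T : ℕ) :
    ∑ n ∈ Finset.range T, ‖M (n + 1) - M n‖ₑ ^ 2 ≤
      8 * ∑ n ∈ Finset.range (T + 1), ‖M n - S n‖ₑ ^ 2 +
        2 * ∑ n ∈ Finset.range T, ‖S (n + 1) - S n‖ₑ ^ 2 := by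
  set A : ℕ → ℝ≥0∞ := fun n => ‖M n - S n‖ₑ ^ 2
  calc ∑ n ∈ Finset.range T, ‖M (n + 1) - M n‖ₑ ^ 2
      ≤ ∑ n ∈ Finset.range T, (4 * A (n + 1) + 4 * A n + 2 * ‖S (n + 1) - S n‖ₑ ^ 2) := by
        gcongr with n
        rw [show M (n + 1) - M n =
          (M (n + 1) - S (n + 1)) - (M n - S n) + (S (n + 1) - S n) by abel]
        exact enorm_sub_add_sq_le _ _ _
    _ = 4 * ∑ n ∈ Finset.range T, A (n + 1) + 4 * ∑ n ∈ Finset.range T, A n +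
          2 * ∑ n ∈ Finset.range T, ‖S (n + 1) - S n‖ₑ ^ 2 := by
        simp only [Finset.sum_add_distrib, Finset.mul_sum]
    _ ≤ 4 * ∑ n ∈ Finset.range (T + 1), A n + 4 * ∑ n ∈ Finset.range (T + 1), A n +
          2 * ∑ n ∈ Finset.range T, ‖S (n + 1) - S n‖ₑ ^ 2 := by
        gcongr
        · exact (Finset.sum_range_succ' A T).symm ▸ le_self_add
        · exact T.le_succ
    _ = _ := by ring

/-- The partial sum `∑_{-L ≤ j < n - L} g_j`. For `n = 2 L + 1` all frequencies of the window
`[-L, L]` are present. -/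
def windowSum (g : ℤ → 𝓢(ℝ, ℂ)) (L n : ℕ) (x : ℝ) : ℂ :=
  ∑ i ∈ Finset.range n, g ((i : ℤ) - L) x

/-- The dyadic average of the full window sum at the scale that resolves the frequencies
`j < n - L`. -/
def windowAverage (g : ℤ → 𝓢(ℝ, ℂ)) (L n : ℕ) (x : ℝ) : ℂ :=
  dyadicAverage (windowSum g L (2 * L + 1)) ((n : ℤ) - L - 1) x

/-- The square function of the errors made by replacing the partial sums of the window by
dyadic averages. -/
def windowErrorSq (g : ℤ → 𝓢(ℝ, ℂ)) (L : ℕ) (x : ℝ) : ℝ≥0∞ :=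
  ∑ n ∈ Finset.range (2 * L + 1 + 1),
    (∑ i ∈ Finset.range (2 * L + 1), averagingError g ((i : ℤ) - L) ((n : ℤ) - L - 1) x) ^ 2

lemma windowSum_succ_sub (g : ℤ → 𝓢(ℝ, ℂ)) (L n : ℕ) (x : ℝ) :
    windowSum g L (n + 1) x - windowSum g L n x = g ((n : ℤ) - L) x := by
  rw [windowSum, Finset.sum_range_succ, windowSum, add_sub_cancel_left]

lemma windowSum_sub_windowSum (g : ℤ → 𝓢(ℝ, ℂ)) (x : ℝ) {L : ℕ} {a b : ℤ} (ha : -(L : ℤ) ≤ a + 1)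
    (hab : a ≤ b) : windowSum g L (b + L + 1).toNat x - windowSum g L (a + L + 1).toNat x =
      ∑ j ∈ Finset.Ioc a b, g j x := by
  unfold windowSum
  rw [← Finset.sum_Ico_eq_sub _ (Int.toNat_le_toNat (by omega))]
  refine Finset.sum_nbij (fun i : ℕ => (i : ℤ) - L) (fun i hi => ?_)
    (fun i _ l _ h => Nat.cast_injective (sub_left_injective h)) (fun j hj => ?_) fun _ _ => rfl
  · simp only [Finset.mem_Ico, Finset.mem_Ioc] at hi ⊢
    omega
  · simp only [Finset.coe_Ico, Finset.coe_Ioc, Set.mem_image, Set.mem_Ico, Set.mem_Ioc] at hj ⊢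
    exact ⟨(j + L).toNat, by omega, by omega⟩

lemma continuous_windowSum (g : ℤ → 𝓢(ℝ, ℂ)) (L n : ℕ) : Continuous (windowSum g L n) :=
  continuous_finsetSum _ fun _ _ => (g _).continuous

lemma windowAverage_succ_sub (g : ℤ → 𝓢(ℝ, ℂ)) (L n : ℕ) (x : ℝ) :
    windowAverage g L (n + 1) x - windowAverage g L n x =
      dyadicDiff (windowSum g L (2 * L + 1)) L n x := by
  rw [windowAverage, windowAverage, dyadicDiff,
    show ((n + 1 : ℕ) : ℤ) - L - 1 = (n : ℤ) - L by push_cast; ring]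

lemma signSymmetricSystem_windowAverage (g : ℤ → 𝓢(ℝ, ℂ)) (L : ℕ) :
    SignSymmetricSystem volume
      (fun n x => windowAverage g L (n + 1) x - windowAverage g L n x)
      fun n => dyadicSwap ((n : ℤ) - L) := by
  simp only [windowAverage_succ_sub]
  exact signSymmetricSystem_dyadicDiff (continuous_windowSum g L _).locallyIntegrable L

lemma enorm_windowAverage_sub_windowSum_le (g : ℤ → 𝓢(ℝ, ℂ)) (L : ℕ) (x : ℝ) {n : ℕ}
    (hn : n ≤ 2 * L + 1) : ‖windowAverage g L n x - windowSum g L n x‖ₑ ≤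
      ∑ i ∈ Finset.range (2 * L + 1), averagingError g ((i : ℤ) - L) ((n : ℤ) - L - 1) x := by
  have haverage : windowAverage g L n x =
      ∑ i ∈ Finset.range (2 * L + 1), dyadicAverage (g ((i : ℤ) - L)) ((n : ℤ) - L - 1) x := by
    simp only [windowAverage, dyadicAverage, windowSum]
    rw [intervalIntegral.integral_finsetSum fun _ _ => (g _).continuous.intervalIntegrable _ _,
      Finset.smul_sum]
  have hsum : windowSum g L n x = ∑ i ∈ Finset.range (2 * L + 1),
      if (i : ℤ) - L ≤ n - L - 1 then g ((i : ℤ) - L) x else 0 := by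
    rw [← Finset.sum_filter]
    refine Finset.sum_congr (Finset.ext fun i => ?_) fun _ _ => rfl
    simp only [Finset.mem_filter, Finset.mem_range]
    omega
  rw [haverage, hsum, ← Finset.sum_sub_distrib]
  exact enorm_sum_le _ _

lemma sum_enorm_windowAverage_sub_sq_le (g : ℤ → 𝓢(ℝ, ℂ)) (L : ℕ) (x : ℝ) :
    ∑ n ∈ Finset.range (2 * L + 1 + 1), ‖windowAverage g L n x - windowSum g L n x‖ₑ ^ 2 ≤
      windowErrorSq g L x :=
  Finset.sum_le_sum fun _ hn => pow_le_pow_left' (enorm_windowAverage_sub_windowSum_le g L x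
    (Finset.mem_range_succ_iff.1 hn)) 2

/-- A bound for the jump counts of the paraproduct over blocks within the window `[-L, L]`. -/
def jumpMajorant (g : ℤ → 𝓢(ℝ, ℂ)) (L : ℕ) (x : ℝ) : ℝ≥0∞ :=
  512 * jumpFunctionalSq (fun n => windowAverage g L (n + 1) x - windowAverage g L n x)
    (2 * L + 1) + 128 * windowErrorSq g L x

lemma sq_mul_card_le_jumpMajorant (g : ℤ → 𝓢(ℝ, ℂ)) (L : ℕ) (x : ℝ) {ι : Type*} [LinearOrder ι]
    {K : Finset ι} {a b : ι → ℕ} (h : IsBlockFamily K a b (2 * L + 1)) {μ : ℝ} (hμ : 0 < μ)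
    (hjump : ∀ k ∈ K, μ < ‖windowSum g L (b k) x - windowSum g L (a k) x‖) :
    8 * (ENNReal.ofReal (μ ^ 2) * K.card) ≤ jumpMajorant g L x := by
  calc 8 * (ENNReal.ofReal (μ ^ 2) * K.card)
      ≤ 8 * (64 * jumpFunctionalSq (fun n => windowAverage g L (n + 1) x - windowAverage g L n x)
          (2 * L + 1) + 16 * windowErrorSq g L x) := by
        gcongr
        refine (h.sq_mul_card_le_jumpFunctionalSq_add hμ (fun n => windowAverage g L n x)
          (S := fun n => windowSum g L n x) hjump).trans ?_
        gcongr
        exact sum_enorm_windowAverage_sub_sq_le g L x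
    _ = jumpMajorant g L x := by
        rw [jumpMajorant]
        ring

lemma isBlockFamily_of_mem_Ioo {N : ℕ → ℤ} (hN : Monotone N) {K : Finset ℕ} {i : ℕ → ℤ}
    (hi : ∀ k ∈ K, i k ∈ Finset.Ioo (N k) (N (k + 1))) {L : ℕ}
    (hL : ∀ k ∈ K, -(L : ℤ) ≤ N k ∧ N (k + 1) ≤ L) :
    IsBlockFamily K (fun k => (i k + L + 1).toNat) (fun k => (N (k + 1) + L + 1).toNat)
      (2 * L + 1) where
  left_le_right k hk := by
    have := Finset.mem_Ioo.1 (hi k hk)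
    omega
  right_le k hk := by
    have := hL k hk
    omega
  right_lt_left k _ l hl hkl := by
    have := hN (show k + 1 ≤ l from hkl)
    have := hL l hl
    have := Finset.mem_Ioo.1 (hi l hl)
    omega

lemma sum_sum_enorm_eq_ofReal {ι κ E : Type*} [NormedAddCommGroup E] (K : Finset κ)
    (I : κ → Finset ι) (f : ι → E) :
    ∑ k ∈ K, ∑ i ∈ I k, ‖f i‖ₑ = ENNReal.ofReal (∑ k ∈ K, ∑ i ∈ I k, ‖f i‖) := by
  simp only [Finset.sum_sigma', ← ofReal_norm]
  exact (ofReal_sum_of_nonneg fun _ _ => norm_nonneg _).symm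

lemma ofReal_sq_mul_pow_three_le {lam F : ℝ} (hlam : 0 ≤ lam) (hF : 0 < F) {m n : ℕ}
    (h : n ≤ 2 * m) : ENNReal.ofReal lam ^ 2 * n ^ 3 ≤
      ENNReal.ofReal F ^ 2 * (8 * (ENNReal.ofReal ((lam * n / (2 * F)) ^ 2) * m)) := by
  calc ENNReal.ofReal lam ^ 2 * n ^ 3 = ENNReal.ofReal (lam ^ 2 * n ^ 2) * n := by
        rw [ofReal_mul (by positivity), ofReal_pow hlam, ofReal_pow n.cast_nonneg, ofReal_natCast]
        ring
    _ ≤ ENNReal.ofReal (lam ^ 2 * n ^ 2) * (2 * m) := by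
        gcongr
        exact_mod_cast h
    _ = _ := by
        rw [show lam ^ 2 * (n : ℝ) ^ 2 = F ^ 2 * 4 * (lam * n / (2 * F)) ^ 2 by field_simp; ring,
          ofReal_mul (by positivity), ofReal_mul (by positivity), ofReal_pow hF.le, ofReal_ofNat]
        ring

lemma sq_mul_card_pow_three_le {f : ℤ → ℂ} {g : ℤ → 𝓢(ℝ, ℂ)} {N : ℕ → ℤ} (hN : Monotone N)
    {x lam : ℝ} (hlam : 0 < lam) {K : Finset ℕ}
    (hlarge : ∀ k ∈ K, lam < ‖truncatedParaproduct f (g · x) (N k) (N (k + 1))‖) {L : ℕ}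
    (hL : ∀ k ∈ K, -(L : ℤ) ≤ N k ∧ N (k + 1) ≤ L) :
    ENNReal.ofReal lam ^ 2 * K.card ^ 3 ≤
      (∑ k ∈ K, ∑ i ∈ Finset.Ioo (N k) (N (k + 1)), ‖f i‖ₑ) ^ 2 * jumpMajorant g L x := by
  rcases K.eq_empty_or_nonempty with rfl | hne
  · simp only [Finset.card_empty, Nat.cast_zero, ne_eq, OfNat.ofNat_ne_zero, not_false_eq_true,
      zero_pow, mul_zero, zero_le]
  obtain ⟨K', hK', hhalf, hexists⟩ := exists_subset_forall_exists_lt_norm_sum hlam.le hlarge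
  choose! i hi hjump using hexists
  set F := ∑ k ∈ K, ∑ i ∈ Finset.Ioo (N k) (N (k + 1)), ‖f i‖
  have hcard : (0 : ℝ) < K.card := Nat.cast_pos.2 hne.card_pos
  have hF : 0 < F := by
    have hne' : K'.Nonempty := Finset.card_pos.1 (by have := hne.card_pos; omega)
    obtain ⟨k, hk⟩ := hne'
    have hpos := (mul_pos hlam hcard).trans (hjump k hk)
    linarith [pos_of_mul_pos_left hpos (norm_nonneg _)]
  have hblocks := isBlockFamily_of_mem_Ioo hN hi fun k hk => hL k (hK' hk)
  have hcount := sq_mul_card_le_jumpMajorant g L x hblocks (μ := lam * K.card / (2 * F))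
    (by positivity) fun k hk => by
      have hik := Finset.mem_Ioo.1 (hi k hk)
      rw [windowSum_sub_windowSum g x (by have := hL k (hK' hk); omega) hik.2.le,
        div_lt_iff₀' (by positivity)]
      exact hjump k hk
  rw [show ∑ k ∈ K, ∑ i ∈ Finset.Ioo (N k) (N (k + 1)), ‖f i‖ₑ = ENNReal.ofReal F from
    sum_sum_enorm_eq_ofReal K _ f]
  exact (ofReal_sq_mul_pow_three_le hlam.le hF hhalf).trans (by gcongr)

end JumpMajorant

section IntegralOfMajorant

open scoped SchwartzMap

lemma ennreal_add_rpow_le (a b : ℝ≥0∞) {s : ℝ} (hs : 0 ≤ s) :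
    (a + b) ^ s ≤ 2 ^ s * (a ^ s + b ^ s) := by
  wlog h : a ≤ b generalizing a b
  · rw [add_comm a, add_comm (a ^ s)]
    exact this b a (le_of_not_ge h)
  calc (a + b) ^ s ≤ (2 * b) ^ s := by
        rw [two_mul]
        gcongr
    _ = 2 ^ s * b ^ s := ENNReal.mul_rpow_of_nonneg _ _ hs
    _ ≤ 2 ^ s * (a ^ s + b ^ s) := by
        gcongr
        exact le_add_self

lemma lintegral_const_mul_add_rpow_le {α : Type*} [MeasurableSpace α] {μ : Measure α}
    {u : α → ℝ≥0∞} (hu : Measurable u) (v : α → ℝ≥0∞) {c c' : ℝ≥0∞} (hc : c ≠ ⊤) (hc' : c' ≠ ⊤)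
    {s : ℝ} (hs : 0 ≤ s) : ∫⁻ x, (c * u x + c' * v x) ^ s ∂μ ≤
      2 ^ s * (c ^ s * ∫⁻ x, u x ^ s ∂μ + c' ^ s * ∫⁻ x, v x ^ s ∂μ) := by
  calc ∫⁻ x, (c * u x + c' * v x) ^ s ∂μ
      ≤ ∫⁻ x, 2 ^ s * (c ^ s * u x ^ s + c' ^ s * v x ^ s) ∂μ := by
        gcongr with x
        simp only [← ENNReal.mul_rpow_of_nonneg _ _ hs]
        exact ennreal_add_rpow_le _ _ hs
    _ = _ := by
        rw [lintegral_const_mul' _ _ (by finiteness),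
          lintegral_add_left ((hu.pow_const s).const_mul _),
          lintegral_const_mul' _ _ (by finiteness), lintegral_const_mul' _ _ (by finiteness)]

lemma ofReal_sum_norm_sq {ι E : Type*} [SeminormedAddCommGroup E] (t : Finset ι) (d : ι → E) :
    ENNReal.ofReal (∑ i ∈ t, ‖d i‖ ^ 2) = ∑ i ∈ t, ‖d i‖ₑ ^ 2 := by
  rw [ofReal_sum_of_nonneg fun _ _ => sq_nonneg _]
  simp only [ofReal_pow (norm_nonneg _), ofReal_norm]

lemma measurable_averagingError (g : ℤ → 𝓢(ℝ, ℂ)) (j n : ℤ) :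
    Measurable (averagingError g j n) := by
  refine ((measurable_dyadicAverage _ n).sub ?_).enorm
  split_ifs
  · exact (g j).continuous.measurable
  · exact measurable_const

lemma measurable_windowErrorSq (g : ℤ → 𝓢(ℝ, ℂ)) (L : ℕ) : Measurable (windowErrorSq g L) :=
  Finset.measurable_sum _ fun _ _ =>
    (Finset.measurable_sum _ fun _ _ => measurable_averagingError g _ _).pow_const 2

lemma measurable_jumpMajorant (g : ℤ → 𝓢(ℝ, ℂ)) (L : ℕ) : Measurable (jumpMajorant g L) :=
  ((measurable_jumpFunctionalSq (signSymmetricSystem_windowAverage g L).measurable _).const_mul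
    _).add ((measurable_windowErrorSq g L).const_mul _)

lemma exists_finset_sum_range_sub_eq (M : Type*) [AddCommMonoid M] (m : ℕ) (c : ℤ) :
    ∃ t : Finset ℤ, ∀ φ : ℤ → M, ∑ i ∈ Finset.range m, φ (i - c) = ∑ j ∈ t, φ j :=
  ⟨(Finset.range m).map (Nat.castEmbedding.trans (Equiv.subRight c).toEmbedding),
    fun φ => by simp only [Finset.sum_map, Function.Embedding.trans_apply, Nat.castEmbedding_apply,
      Equiv.coe_toEmbedding, Equiv.subRight_apply]⟩

lemma sum_range_sub_le_tsum (φ : ℤ → ℝ≥0∞) (m : ℕ) (c : ℤ) :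
    ∑ i ∈ Finset.range m, φ (i - c) ≤ ∑' j, φ j := by
  obtain ⟨t, ht⟩ := exists_finset_sum_range_sub_eq ℝ≥0∞ m c
  exact (ht φ).trans_le (ENNReal.sum_le_tsum t)

lemma exists_lintegral_windowErrorSq_rpow_le (b : ℝ) {q : ℝ} (hq : 1 < q) :
    ∃ C : ℝ≥0, ∀ g : ℤ → 𝓢(ℝ, ℂ), IsContLPFamily b g → ∀ L,
      ∫⁻ x, windowErrorSq g L x ^ (q / 2) ≤ C * ∫⁻ x, (∑' j, ‖g j x‖ₑ ^ 2) ^ (q / 2) := by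
  obtain ⟨C, hC⟩ := exists_lintegral_sum_sum_averagingError_sq_rpow_le b hq
  refine ⟨C, fun g hg L => ?_⟩
  obtain ⟨J, hJ⟩ := exists_finset_sum_range_sub_eq ℝ≥0∞ (2 * L + 1) L
  obtain ⟨S, hS⟩ := exists_finset_sum_range_sub_eq ℝ≥0∞ (2 * L + 1 + 1) (L + 1)
  have herror : ∀ x, windowErrorSq g L x = ∑ n ∈ S, (∑ j ∈ J, averagingError g j n x) ^ 2 :=
    fun x => (Finset.sum_congr rfl fun n _ => by
      rw [sub_sub, hJ fun j => averagingError g j ((n : ℤ) - (L + 1)) x]).trans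
      (hS fun n => (∑ j ∈ J, averagingError g j n x) ^ 2)
  simp only [herror]
  refine (hC g hg S J).trans ?_
  gcongr
  exact ENNReal.sum_le_tsum _

lemma sum_enorm_windowAverage_succ_sub_sq_le (g : ℤ → 𝓢(ℝ, ℂ)) (L : ℕ) (x : ℝ) :
    ∑ n ∈ Finset.range (2 * L + 1), ‖windowAverage g L (n + 1) x - windowAverage g L n x‖ₑ ^ 2 ≤
      8 * windowErrorSq g L x + 2 * ∑' j, ‖g j x‖ₑ ^ 2 := by
  refine (sum_enorm_increment_sq_le (windowAverage g L · x) (windowSum g L · x) _).trans ?_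
  simp only [windowSum_succ_sub]
  gcongr
  · exact sum_enorm_windowAverage_sub_sq_le g L x
  · exact sum_range_sub_le_tsum (fun j => ‖g j x‖ₑ ^ 2) _ _

lemma exists_lintegral_jumpFunctionalSq_windowAverage_rpow_le (b : ℝ) {q : ℝ} (hq : 1 < q) :
    ∃ C : ℝ≥0, ∀ g : ℤ → 𝓢(ℝ, ℂ), IsContLPFamily b g → ∀ L : ℕ,
      ∫⁻ x, jumpFunctionalSq (fun n => windowAverage g L (n + 1) x - windowAverage g L n x)
        (2 * L + 1) ^ (q / 2) ≤ C * ∫⁻ x, (∑' j, ‖g j x‖ₑ ^ 2) ^ (q / 2) := by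
  have hs : 0 < q / 2 := by linarith
  obtain ⟨C, hC⟩ := exists_lintegral_windowErrorSq_rpow_le b hq
  set A := ENNReal.ofReal (2 * (480000 * 600 ^ (q / 2)) ^ (q / 2))
  have hfinite : A * (2 ^ (q / 2) * (8 ^ (q / 2) * C + 2 ^ (q / 2))) ≠ ⊤ := by finiteness
  refine ⟨(A * (2 ^ (q / 2) * (8 ^ (q / 2) * C + 2 ^ (q / 2)))).toNNReal, fun g hg L => ?_⟩
  rw [coe_toNNReal hfinite]
  refine ((signSymmetricSystem_windowAverage g L).lintegral_jumpFunctionalSq_rpow_le hs _).trans ?_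
  rw [mul_assoc]
  gcongr
  calc ∫⁻ x, ENNReal.ofReal (∑ n ∈ Finset.range (2 * L + 1),
          ‖windowAverage g L (n + 1) x - windowAverage g L n x‖ ^ 2) ^ (q / 2)
      ≤ ∫⁻ x, (8 * windowErrorSq g L x + 2 * ∑' j, ‖g j x‖ₑ ^ 2) ^ (q / 2) := by
        gcongr with x
        rw [ofReal_sum_norm_sq]
        exact sum_enorm_windowAverage_succ_sub_sq_le g L x
    _ ≤ 2 ^ (q / 2) * (8 ^ (q / 2) * (C * ∫⁻ x, (∑' j, ‖g j x‖ₑ ^ 2) ^ (q / 2)) +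
          2 ^ (q / 2) * ∫⁻ x, (∑' j, ‖g j x‖ₑ ^ 2) ^ (q / 2)) := by
        refine (lintegral_const_mul_add_rpow_le (measurable_windowErrorSq g L) _ (by finiteness)
          (by finiteness) hs.le).trans ?_
        gcongr
        exact hC g hg L
    _ = _ := by ring

lemma exists_lintegral_jumpMajorant_rpow_le (b : ℝ) {q : ℝ} (hq : 1 < q) :
    ∃ C : ℝ≥0, ∀ g : ℤ → 𝓢(ℝ, ℂ), IsContLPFamily b g → ∀ L,
      ∫⁻ x, jumpMajorant g L x ^ (q / 2) ≤ C * ∫⁻ x, (∑' j, ‖g j x‖ₑ ^ 2) ^ (q / 2) := by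
  have hs : 0 ≤ q / 2 := by linarith
  obtain ⟨C, hC⟩ := exists_lintegral_jumpFunctionalSq_windowAverage_rpow_le b hq
  obtain ⟨C', hC'⟩ := exists_lintegral_windowErrorSq_rpow_le b hq
  have hfinite : (2 : ℝ≥0∞) ^ (q / 2) * (512 ^ (q / 2) * C + 128 ^ (q / 2) * C') ≠ ⊤ := by
    finiteness
  refine ⟨(2 ^ (q / 2) * (512 ^ (q / 2) * C + 128 ^ (q / 2) * C') : ℝ≥0∞).toNNReal,
    fun g hg L => ?_⟩
  rw [coe_toNNReal hfinite]
  calc ∫⁻ x, jumpMajorant g L x ^ (q / 2)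
      ≤ 2 ^ (q / 2) * (512 ^ (q / 2) * (C * ∫⁻ x, (∑' j, ‖g j x‖ₑ ^ 2) ^ (q / 2)) +
          128 ^ (q / 2) * (C' * ∫⁻ x, (∑' j, ‖g j x‖ₑ ^ 2) ^ (q / 2))) := by
        refine (lintegral_const_mul_add_rpow_le
          (measurable_jumpFunctionalSq (signSymmetricSystem_windowAverage g L).measurable _)
          _ (by finiteness) (by finiteness) hs).trans ?_
        gcongr
        · exact hC g hg L
        · exact hC' g hg L
    _ = _ := by ring

/-- The limit of the majorants as the window exhausts all frequencies. -/
def limitJumpMajorant (g : ℤ → 𝓢(ℝ, ℂ)) (x : ℝ) : ℝ≥0∞ :=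
  Filter.liminf (fun L => jumpMajorant g L x) Filter.atTop

lemma measurable_limitJumpMajorant (g : ℤ → 𝓢(ℝ, ℂ)) : Measurable (limitJumpMajorant g) :=
  Measurable.liminf (measurable_jumpMajorant g)

lemma exists_lintegral_limitJumpMajorant_rpow_le (b : ℝ) {q : ℝ} (hq : 1 < q) :
    ∃ C : ℝ≥0, ∀ g : ℤ → 𝓢(ℝ, ℂ), IsContLPFamily b g →
      ∫⁻ x, limitJumpMajorant g x ^ (q / 2) ≤ C * ∫⁻ x, (∑' j, ‖g j x‖ₑ ^ 2) ^ (q / 2) := by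
  obtain ⟨C, hC⟩ := exists_lintegral_jumpMajorant_rpow_le b hq
  refine ⟨C, fun g hg => ?_⟩
  calc ∫⁻ x, limitJumpMajorant g x ^ (q / 2)
      = ∫⁻ x, Filter.liminf (fun L => jumpMajorant g L x ^ (q / 2)) Filter.atTop :=
        lintegral_congr fun x =>
          (ENNReal.orderIsoRpow (q / 2) (by linarith)).liminf_apply
    _ ≤ Filter.liminf (fun L => ∫⁻ x, jumpMajorant g L x ^ (q / 2)) Filter.atTop :=
        lintegral_liminf_le fun L => (measurable_jumpMajorant g L).pow_const _
    _ ≤ Filter.liminf (fun _ : ℕ => C * ∫⁻ x, (∑' j, ‖g j x‖ₑ ^ 2) ^ (q / 2)) Filter.atTop :=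
        Filter.liminf_le_liminf (Filter.Eventually.of_forall (hC g hg))
    _ = _ := Filter.liminf_const _

end IntegralOfMajorant

section PointwiseBound

open scoped SchwartzMap

lemma encard_le_of_forall_finset_card_le {ι : Type*} {s : Set ι} {ρ : ℝ≥0∞}
    (h : ∀ K : Finset ι, ↑K ⊆ s → (K.card : ℝ≥0∞) ≤ ρ) : (s.encard : ℝ≥0∞) ≤ ρ := by
  rcases s.finite_or_infinite with hfin | hinf
  · rw [hfin.encard_eq_coe_toFinset_card]
    exact_mod_cast h hfin.toFinset hfin.coe_toFinset.subset
  · have htop : ρ = ⊤ := ENNReal.eq_top_of_forall_nnreal_le fun r => by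
      obtain ⟨n, hn⟩ := exists_nat_ge r
      obtain ⟨K, hK, hcard⟩ := hinf.exists_subset_card_eq n
      calc (r : ℝ≥0∞) ≤ n := mod_cast hn
        _ = K.card := by rw [hcard]
        _ ≤ ρ := h K hK
    exact htop ▸ le_top

lemma sq_mul_card_pow_three_le_limitJumpMajorant {f : ℤ → ℂ} {g : ℤ → 𝓢(ℝ, ℂ)} {N : ℕ → ℤ}
    (hN : Monotone N) {x lam : ℝ} (hlam : 0 < lam) {K : Finset ℕ}
    (hlarge : ∀ k ∈ K, lam < ‖truncatedParaproduct f (g · x) (N k) (N (k + 1))‖) :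
    ENNReal.ofReal lam ^ 2 * K.card ^ 3 ≤ (∑' i, ‖f i‖ₑ) ^ 2 * limitJumpMajorant g x := by
  set F := ∑ k ∈ K, ∑ i ∈ Finset.Ioo (N k) (N (k + 1)), ‖f i‖ₑ
  have hF : F ≠ ⊤ :=
    ENNReal.sum_ne_top.2 fun _ _ => ENNReal.sum_ne_top.2 fun _ _ => enorm_ne_top
  have hwindow : ∀ᶠ L : ℕ in Filter.atTop, ∀ k ∈ K, -(L : ℤ) ≤ N k ∧ N (k + 1) ≤ L :=
    (Finset.eventually_all K).2 fun k _ => by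
      filter_upwards [Filter.eventually_ge_atTop ((N k).natAbs + (N (k + 1)).natAbs)] with L hL
      omega
  calc ENNReal.ofReal lam ^ 2 * K.card ^ 3
      ≤ Filter.liminf (fun L => F ^ 2 * jumpMajorant g L x) Filter.atTop :=
        Filter.le_liminf_of_le (by isBoundedDefault) <|
          hwindow.mono fun L hL => sq_mul_card_pow_three_le hN hlam hlarge hL
    _ = F ^ 2 * limitJumpMajorant g x :=
        ENNReal.liminf_const_mul_of_ne_top (ENNReal.pow_ne_top hF)
    _ ≤ (∑' i, ‖f i‖ₑ) ^ 2 * limitJumpMajorant g x := by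
        gcongr
        exact sum_sum_Ioo_le_tsum hN K _

lemma mul_encard_rpow_le {f : ℤ → ℂ} {g : ℤ → 𝓢(ℝ, ℂ)} {N : ℕ → ℤ} (hN : Monotone N) (x : ℝ)
    {lam : ℝ} (hlam : 0 < lam) :
    ENNReal.ofReal lam * ({k | lam < ‖truncatedParaproduct f (g · x) (N k) (N (k + 1))‖}.encard :
      ℝ≥0∞) ^ (3 / 2 : ℝ) ≤ (∑' i, ‖f i‖ₑ) * limitJumpMajorant g x ^ (1 / 2 : ℝ) := by
  set R := (∑' i, ‖f i‖ₑ) * limitJumpMajorant g x ^ (1 / 2 : ℝ)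
  have hlam' : ENNReal.ofReal lam ≠ 0 := (ENNReal.ofReal_pos.2 hlam).ne'
  have hiff : ∀ c : ℝ≥0∞, ENNReal.ofReal lam * c ^ (3 / 2 : ℝ) ≤ R ↔
      c ≤ (R / ENNReal.ofReal lam) ^ (3 / 2 : ℝ)⁻¹ := fun c => by
    rw [ENNReal.le_rpow_inv_iff (by norm_num), mul_comm,
      ENNReal.le_div_iff_mul_le (.inl hlam') (.inl ofReal_ne_top)]
  refine (hiff _).2 (encard_le_of_forall_finset_card_le fun K hK => (hiff _).1 ?_)
  have hsq := sq_mul_card_pow_three_le_limitJumpMajorant hN hlam fun k hk => hK hk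
  have hroot := ENNReal.rpow_le_rpow hsq (z := 1 / 2) (by norm_num)
  simpa only [ENNReal.mul_rpow_of_nonneg _ _ (show (0 : ℝ) ≤ 1 / 2 by norm_num),
    ← ENNReal.rpow_natCast, ← ENNReal.rpow_mul, Nat.cast_ofNat, mul_one_div, ne_eq,
    OfNat.ofNat_ne_zero, not_false_eq_true, div_self, ENNReal.rpow_one] using hroot

end PointwiseBound

section QuasiNorm

lemma eNorm_top (h : ℝ → ℝ≥0∞) : eNorm ⊤ h = essSup h volume :=
  if_pos rfl

lemma eNorm_ofReal {q : ℝ} (hq : 0 < q) (h : ℝ → ℝ≥0∞) :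
    eNorm (ENNReal.ofReal q) h = (∫⁻ x, h x ^ q) ^ (1 / q) := by
  rw [eNorm, if_neg ofReal_ne_top, ENNReal.toReal_ofReal hq.le]

lemma eNorm_mono (u : ℝ≥0∞) {h k : ℝ → ℝ≥0∞} (hhk : ∀ x, h x ≤ k x) : eNorm u h ≤ eNorm u k := by
  unfold eNorm
  split_ifs
  · exact essSup_mono_ae (.of_forall hhk)
  · gcongr
    exact hhk _

lemma eNorm_mul_le_essSup_mul {q : ℝ} (hq : 0 < q) (F : ℝ → ℝ≥0∞) {U : ℝ → ℝ≥0∞}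
    (hU : Measurable U) :
    eNorm (ENNReal.ofReal q) (fun x => F x * U x) ≤
      essSup F volume * eNorm (ENNReal.ofReal q) U := by
  rw [eNorm_ofReal hq, eNorm_ofReal hq]
  calc (∫⁻ x, (F x * U x) ^ q) ^ (1 / q) ≤ (∫⁻ x, essSup F volume ^ q * U x ^ q) ^ (1 / q) := by
        refine ENNReal.rpow_le_rpow (lintegral_mono_ae ?_) (by positivity)
        filter_upwards [ENNReal.ae_le_essSup F] with x hx
        rw [← ENNReal.mul_rpow_of_nonneg _ _ hq.le]
        gcongr
    _ = essSup F volume * (∫⁻ x, U x ^ q) ^ (1 / q) := by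
        rw [lintegral_const_mul _ (hU.pow_const q), ENNReal.mul_rpow_of_nonneg _ _ (by positivity),
          ← ENNReal.rpow_mul, mul_one_div_cancel hq.ne', ENNReal.rpow_one]

-- Hölder's inequality; for `p < 1` the functional on the left is only a quasi-norm.
lemma eNorm_mul_le {p : ℝ≥0∞} (hp : 0 < p) {q : ℝ} (hq : 0 < q) {F U : ℝ → ℝ≥0∞}
    (hF : Measurable F) (hU : Measurable U) :
    eNorm ((1 / p + 1 / ENNReal.ofReal q)⁻¹) (fun x => F x * U x) ≤
      eNorm p F * eNorm (ENNReal.ofReal q) U := by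
  rcases eq_or_ne p ⊤ with rfl | hp_top
  · rw [one_div, ENNReal.inv_top, zero_add, one_div, inv_inv, eNorm_top]
    exact eNorm_mul_le_essSup_mul hq F hU
  lift p to ℝ≥0 using hp_top
  have hp0 : (0 : ℝ) < p := mod_cast hp
  have hsum : (0 : ℝ) < 1 / p + 1 / q := by positivity
  have hu : (1 / p + 1 / ENNReal.ofReal q)⁻¹ = ENNReal.ofReal (1 / p + 1 / q)⁻¹ := by
    rw [ENNReal.ofReal_inv_of_pos hsum, ofReal_add (by positivity) (by positivity), one_div,
      one_div, one_div, one_div, ENNReal.ofReal_inv_of_pos hp0, ENNReal.ofReal_inv_of_pos hq,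
      ofReal_coe_nnreal]
  rw [hu, ← ofReal_coe_nnreal, eNorm_ofReal hp0, eNorm_ofReal hq, eNorm_ofReal (inv_pos.2 hsum)]
  refine ENNReal.lintegral_Lp_mul_le_Lq_mul_Lr (inv_pos.2 hsum) ?_ (by rw [one_div, inv_inv])
    volume hF.aemeasurable hU.aemeasurable
  rw [inv_lt_comm₀ hsum hp0, ← one_div]
  exact lt_add_of_pos_right _ (by positivity)

open scoped SchwartzMap in
lemma exists_eNorm_limitJumpMajorant_le (b : ℝ) {q : ℝ} (hq : 1 < q) :
    ∃ C : ℝ≥0, ∀ g : ℤ → 𝓢(ℝ, ℂ), IsContLPFamily b g →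
      eNorm (ENNReal.ofReal q) (fun x => limitJumpMajorant g x ^ (1 / 2 : ℝ)) ≤
        C * eNorm (ENNReal.ofReal q) fun x => (∑' j, ‖g j x‖ₑ ^ 2) ^ (1 / 2 : ℝ) := by
  have hq0 : 0 < q := one_pos.trans hq
  obtain ⟨C, hC⟩ := exists_lintegral_limitJumpMajorant_rpow_le b hq
  refine ⟨C ^ (1 / q), fun g hg => ?_⟩
  simp only [eNorm_ofReal hq0, ← ENNReal.rpow_mul, one_div_mul_eq_div]
  rw [ENNReal.coe_rpow_of_nonneg _ (by positivity),
    ← ENNReal.mul_rpow_of_nonneg _ _ (by positivity)]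
  gcongr
  exact hC g hg

end QuasiNorm

/-- The weak-type endpoint `r = 1`, `s = 2`, `t = 2/3` of the bilinear variational
paraproduct estimate: the first family is arbitrary. -/
theorem bilinear_weak_endpoint_r_one_s_two
    (p : ℝ≥0∞) (q Nb : ℝ) (hp : 0 < p) (hq1 : 1 < q) (hNb : 0 < Nb) :
    ∃ C : ℝ≥0, 0 < C ∧
      ∀ (Nk : ℕ → ℝ → ℤ), IsJumpCollection Nk →
      ∀ (f : ℤ → ℝ → ℂ), (∀ i, Measurable (f i)) →
      ∀ (g : ℤ → SchwartzMap ℝ ℂ), IsContLPFamily Nb g →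
      ∀ lam : ℝ, 0 < lam →
      eNorm ((1 / p + 1 / ENNReal.ofReal q)⁻¹)
          (fun x => ENNReal.ofReal lam *
            (({k : ℕ | lam < norm
                (∑ j ∈ Finset.Ioc (Nk k x) (Nk (k + 1) x),
                  ∑ i ∈ Finset.Ioo (Nk k x) j, f i x * g j x)}.encard : ℝ≥0∞))
              ^ ((3 : ℝ) / 2))
        ≤ (C : ℝ≥0∞) *
          eNorm p (fun x => ∑' i : ℤ, ENNReal.ofReal (norm (f i x))) *
          eNorm (ENNReal.ofReal q)
            (fun x => (∑' j : ℤ, (ENNReal.ofReal (norm (g j x))) ^ (2 : ℝ))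
              ^ ((1 : ℝ) / 2)) := by
  obtain ⟨C, hC⟩ := exists_eNorm_limitJumpMajorant_le Nb hq1
  refine ⟨C + 1, by positivity, fun Nk hN f hf g hg lam hlam => ?_⟩
  have hpointwise := fun x =>
    mul_encard_rpow_le (f := (f · x)) (g := g) (monotone_nat_of_le_succ (hN.2 · x)) x hlam
  simp only [ofReal_norm, ENNReal.rpow_two]
  calc _ ≤ eNorm (1 / p + 1 / ENNReal.ofReal q)⁻¹
          (fun x => (∑' i, ‖f i x‖ₑ) * limitJumpMajorant g x ^ ((1 : ℝ) / 2)) :=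
        eNorm_mono _ hpointwise
    _ ≤ eNorm p (fun x => ∑' i, ‖f i x‖ₑ) *
          eNorm (ENNReal.ofReal q) (fun x => limitJumpMajorant g x ^ ((1 : ℝ) / 2)) :=
        eNorm_mul_le hp (one_pos.trans hq1) (Measurable.tsum fun i => (hf i).enorm)
          ((measurable_limitJumpMajorant g).pow_const _)
    _ ≤ eNorm p (fun x => ∑' i, ‖f i x‖ₑ) * ((C + 1 : ℝ≥0) *
          eNorm (ENNReal.ofReal q) fun x => (∑' j, ‖g j x‖ₑ ^ 2) ^ ((1 : ℝ) / 2)) := by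
        gcongr
        refine (hC g hg).trans ?_
        gcongr
        exact le_self_add
    _ = _ := by ring
end
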